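/- arXiv:1402.0272 — 4 statements merged into one kernel-verified Lean document; each statement's English description precedes it below -/
import Mathlib

section
/- There is an absolute constant d₀ such that the following holds: for every simple graph H with t vertices and average degree d ≥ d₀, every simple graph G with average degree at least 3.895·√(ln d)·t contains H as a minor. -/
/-!
Write `t` and `d` for the order and the average degree of `H`, and put `L = √(ln d)` and
`D = 3.895 L t`, so that `G` has average degree at least `D`.

*A dense minor.* A minor of `G` that is minimal subject to having at least `α n - β` edges (where
`n` is its order) has all its edges in more than `α - 1` triangles, so the neighbourhood of a vertex
of minimum degree induces a dense graph (`exists_dense_minor`). Two rounds of this, the first with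
`(α, β) = (D / 2, 0)` and the second with `(0.28 D, 0.031 D²)`, yield a minor of `G` with at most
`D / 2` vertices and minimum degree at least `0.279 D` (`exists_very_dense_minor`). Since `0.279`
exceeds half of `1 / 2`, any two of its vertices have `0.058 D` common neighbours.

*The blocks.* A random set `X` containing nine tenths of the vertices (`exists_split`) still gives
each vertex at least `0.24831 D` neighbours in `X`, and leaves `0.00522 D` common neighbours outside
`X` to any two vertices. Inside `X`, slightly more than `t` disjoint blocks of equal size `s` are
placed at random (`exists_blocks`). Let `p ≥ 0.49` be the density `0.24831 D / |X|`. As `s` is about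
`|X| / t`, the number `s p` is about `0.24831 * 3.895 * L`, up to a factor of `1.03`; so it is at
least `0.93 L`. A vertex sends no edge to a block with probability about
`(1 - p) ^ s ≤ exp (- s (p + p² / 2))`. For most blocks the set of vertices that see nothing of the
block has at most about that density, and then a second block falls entirely into this set with
probability about `exp (- s² (p + p² / 2))`. Here
`s² (p + p² / 2) ≥ (3 / 2) (s p)² ≥ 1.3 L²`, so that two blocks miss each other with probability at
most `d ^ (-1.2)` (`estimates`).

*The branch sets.* Assigning the vertices of `H` randomly to good blocks
(`exists_embedding_few`), one expects fewer than `t` adjacent pairs of `H`, out of `d t` ordered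
ones, to be assigned to blocks that miss each other. These pairs are joined by private connectors
outside `X`. The blocks are made connected in the same way: the first twenty vertices of each block
are connected to its root by connectors, most other vertices of the block have a neighbour among
these twenty, and the remaining ones get a connector as well. Altogether this takes at most
`0.01 L t` connectors, whereas any two vertices have `0.00522 D > 0.02 L t` common neighbours
outside `X`, so that distinct connectors can be chosen (`minor_of_blocks`).
-/

open SimpleGraph

/-- `H` is a minor of `G`: there is a minor model of `H` in `G`, i.e. pairwise disjoint
connected (nonempty) branch sets in `G`, one for each vertex of `H`, with an edge of `G`
between the branch sets of any two adjacent vertices of `H`.  Equivalently, a graph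
isomorphic to `H` can be obtained from a subgraph of `G` by contracting edges. -/
def SimpleGraph.IsMinorOf {W V : Type*} (H : SimpleGraph W) (G : SimpleGraph V) : Prop :=
  ∃ B : W → Set V,
    (∀ w, (G.induce (B w)).Connected) ∧
    (Pairwise fun w₁ w₂ => Disjoint (B w₁) (B w₂)) ∧
    ∀ ⦃w₁ w₂⦄, H.Adj w₁ w₂ → ∃ v₁ ∈ B w₁, ∃ v₂ ∈ B w₂, G.Adj v₁ v₂

/-- The average degree `2m/n` of a graph with `n` vertices and `m` edges. -/
noncomputable def SimpleGraph.averageDegree {V : Type*} (G : SimpleGraph V) : ℝ :=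
  2 * G.edgeSet.ncard / Nat.card V

namespace SparseMinor

/-! ### Minors -/

theorem minor_trans {W U V : Type*} {H : SimpleGraph W} {K : SimpleGraph U} {G : SimpleGraph V}
    (h₁ : H.IsMinorOf K) (h₂ : K.IsMinorOf G) : H.IsMinorOf G := by
  obtain ⟨B, hB, hBd, hBa⟩ := h₁
  obtain ⟨C, hC, hCd, hCa⟩ := h₂
  refine ⟨fun w => ⋃ x ∈ B w, C x, fun w => ?_, fun w₁ w₂ hw => ?_, fun w₁ w₂ hw => ?_⟩
  · -- lift walks between branch sets of `K` inside `B w`, one edge at a time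
    obtain ⟨x₀, hx₀⟩ := (hB w).nonempty
    have hsub : ∀ x ∈ B w, C x ⊆ ⋃ x ∈ B w, C x := fun x hx => Set.subset_biUnion_of_mem hx
    have key : ∀ x y : B w, (K.induce (B w)).Reachable x y →
        (G.induce (C x)).Connected ∧ ∀ (a : V) (ha : a ∈ C x) (b : V) (hb : b ∈ C y),
          (G.induce (⋃ x ∈ B w, C x)).Reachable
            ⟨a, hsub x x.2 ha⟩ ⟨b, hsub y y.2 hb⟩ := by
      intro x y h
      refine ⟨hC x, ?_⟩
      have inner : ∀ (x : B w) (a : V) (ha : a ∈ C x) (b : V) (hb : b ∈ C x),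
          (G.induce (⋃ x ∈ B w, C x)).Reachable
            ⟨a, hsub x x.2 ha⟩ ⟨b, hsub x x.2 hb⟩ := fun x a ha b hb =>
        ((hC x).preconnected ⟨a, ha⟩ ⟨b, hb⟩).map (induceHomOfLE G (hsub x x.2)).toHom
      obtain ⟨p⟩ := h
      induction p with
      | nil => exact fun a ha b hb => inner _ a ha b hb
      | @cons u v z huv p ih =>
        intro a ha b hb
        obtain ⟨a', ha', b', hb', hab⟩ := hCa huv
        refine (inner u a ha a' ha').trans (Reachable.trans (Adj.reachable ?_) (ih b' hb' b hb))
        exact hab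
    obtain ⟨a₀, ha₀⟩ := (hC x₀).nonempty
    rw [connected_iff_exists_forall_reachable]
    refine ⟨⟨a₀, hsub x₀ hx₀ ha₀⟩, ?_⟩
    rintro ⟨b, hb⟩
    obtain ⟨y, hy, hby⟩ := Set.mem_iUnion₂.1 hb
    exact (key ⟨x₀, hx₀⟩ ⟨y, hy⟩ ((hB w).preconnected _ _)).2 a₀ ha₀ b hby
  · simp only [Set.disjoint_iUnion_left, Set.disjoint_iUnion_right]
    intro x hx y hy
    refine hCd ?_
    rintro rfl
    exact (Set.disjoint_left.1 (hBd hw)) hy hx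
  · obtain ⟨x, hx, y, hy, hxy⟩ := hBa hw
    obtain ⟨a, ha, b, hb, hab⟩ := hCa hxy
    exact ⟨a, Set.mem_biUnion hx ha, b, Set.mem_biUnion hy hb, hab⟩

theorem minor_of_hom {U V : Type*} {K : SimpleGraph U} {G : SimpleGraph V} (f : U → V)
    (hf : Function.Injective f) (h : ∀ x y, K.Adj x y → G.Adj (f x) (f y)) : K.IsMinorOf G := by
  refine ⟨fun x => {f x}, fun x => ?_, fun x y hxy => ?_, fun x y hxy => ?_⟩
  · rw [show G.induce {f x} = ⊤ from induce_singleton_eq_top _ _]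
    exact connected_top
  · simpa using fun h => hxy (hf h)
  · exact ⟨_, rfl, _, rfl, h x y hxy⟩

/-- The graph obtained from `G` by contracting the edge `uv` onto `u`, with vertex set `V ∖ {v}`. -/
def contract {V : Type*} (G : SimpleGraph V) (u v : V) : SimpleGraph ({v}ᶜ : Set V) :=
  (G ⊔ fromRel fun x y => x = u ∧ G.Adj v y).induce {v}ᶜ

theorem contract_minor {V : Type*} {G : SimpleGraph V} {u v : V} (h : G.Adj u v) :
    (contract G u v).IsMinorOf G := by
  classical
  refine ⟨fun x => if x.1 = u then {u, v} else {x.1}, fun x => ?_, fun x y hxy => ?_,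
    fun x y hxy => ?_⟩
  · have key : ∀ S : Set V, (S = {u, v} ∨ ∃ z, S = {z}) → (G.induce S).Connected := by
      rintro S (rfl | ⟨z, rfl⟩)
      · exact induce_pair_connected_of_adj h
      · rw [induce_singleton_eq_top]; exact connected_top
    refine key _ ?_
    dsimp only
    split_ifs
    · exact Or.inl rfl
    · exact Or.inr ⟨_, rfl⟩
  · have h1 : x.1 ≠ y.1 := fun h => hxy (Subtype.ext h)
    have h2 : x.1 ≠ v := x.2
    have h3 : y.1 ≠ v := y.2
    refine Set.disjoint_left.2 fun z hz hz' => ?_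
    dsimp only at hz hz'
    grind
  · have hmem : ∀ z : ({v}ᶜ : Set V), z.1 ∈ (if z.1 = u then ({u, v} : Set V) else {z.1}) := by
      intro z; split_ifs with hz <;> simp [hz]
    simp only [contract, comap_adj, sup_adj, fromRel_adj, Function.Embedding.subtype_apply] at hxy
    rcases hxy with hxy | ⟨-, ⟨h1, h2⟩ | ⟨h1, h2⟩⟩
    · exact ⟨_, hmem x, _, hmem y, hxy⟩
    · exact ⟨v, by simp [h1], _, hmem y, h2⟩
    · exact ⟨_, hmem x, v, by simp [h1], h2.symm⟩

/-! ### Edge counts -/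

theorem ncard_neighborSet {V : Type*} (G : SimpleGraph V) (v : V) [Fintype (G.neighborSet v)] :
    (G.neighborSet v).ncard = G.degree v := by
  rw [Set.ncard_eq_toFinset_card', ← card_neighborFinset_eq_degree]
  rfl

theorem two_mul_ncard_edgeSet {V : Type*} [Fintype V] (G : SimpleGraph V) :
    2 * G.edgeSet.ncard = ∑ v, (G.neighborSet v).ncard := by
  classical
  have := G.sum_degrees_eq_twice_card_edges
  rw [← coe_edgeFinset, Set.ncard_coe_finset, ← this]
  refine Finset.sum_congr rfl fun v _ => ?_
  exact (ncard_neighborSet G v).symm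

theorem ncard_edgeSet_le {V : Type*} [Fintype V] (G : SimpleGraph V) :
    2 * G.edgeSet.ncard ≤ Fintype.card V * (Fintype.card V - 1) := by
  classical
  rw [← coe_edgeFinset, Set.ncard_coe_finset]
  have := G.card_edgeFinset_le_card_choose_two
  rw [Nat.choose_two_right] at this
  have h2 := Nat.div_mul_le_self (Fintype.card V * (Fintype.card V - 1)) 2
  omega

theorem ncard_edgeSet_delete {V : Type*} [Fintype V] (G : SimpleGraph V) (v : V) :
    G.edgeSet.ncard = (G.induce {v}ᶜ).edgeSet.ncard + (G.neighborSet v).ncard := by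
  classical
  have h1 := G.card_edgeFinset_induce_compl_singleton v
  have h2 := G.card_edgeFinset_deleteIncidenceSet v
  have h3 := G.degree_le_card_edgeFinset v
  rw [← coe_edgeFinset, Set.ncard_coe_finset, ← coe_edgeFinset, Set.ncard_coe_finset,
    ncard_neighborSet]
  omega

/-- Contracting `uv` loses the edge itself and one edge for each common neighbour of `u`, `v`. -/
theorem ncard_edgeSet_contract {V : Type*} [Fintype V] (G : SimpleGraph V) {u v : V}
    (h : G.Adj u v) : G.edgeSet.ncard ≤ (contract G u v).edgeSet.ncard + 1 +
      (G.neighborSet u ∩ G.neighborSet v).ncard := by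
  classical
  set G' : SimpleGraph V := G ⊔ fromRel fun x y => x = u ∧ G.Adj v y with hG'
  have h1 := ncard_edgeSet_delete G' v
  -- the new edges at `u`
  set S : Set V := G.neighborSet v \ insert u (G.neighborSet u) with hS
  have h2 : G.edgeSet.ncard + S.ncard ≤ G'.edgeSet.ncard := by
    have hinj : ((fun y => s(u, y)) '' S).ncard = S.ncard :=
      Set.ncard_image_of_injective _ (fun a b hab => by grind [Sym2.eq_iff])
    rw [← hinj, ← Set.ncard_union_eq]
    · refine Set.ncard_le_ncard ?_ (Set.toFinite _)
      rintro e (he | ⟨y, hy, rfl⟩)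
      · exact edgeSet_mono le_sup_left he
      · simp only [hS, Set.mem_sdiff, mem_neighborSet, Set.mem_insert_iff, not_or] at hy
        simp [hG', hy.1, Ne.symm hy.2.1]
    · rw [Set.disjoint_left]
      rintro e he ⟨y, hy, rfl⟩
      exact hy.2 (Or.inr he)
  have h3 : (G'.neighborSet v) = G.neighborSet v := by
    ext y
    have := h.ne
    simp only [hG', mem_neighborSet, sup_adj, fromRel_adj]
    constructor
    · rintro (h | ⟨_, ⟨h1, h2⟩ | ⟨h1, h2⟩⟩)
      · exact h
      · exact absurd h1.symm this
      · exact absurd h2 (by simp)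
    · exact Or.inl
  have h4 : (G.neighborSet v).ncard ≤
      S.ncard + 1 + (G.neighborSet u ∩ G.neighborSet v).ncard := by
    have : G.neighborSet v ⊆ (S ∪ {u}) ∪ (G.neighborSet u ∩ G.neighborSet v) := by
      intro y hy
      simp only [hS, Set.mem_union, Set.mem_sdiff, Set.mem_insert_iff, Set.mem_singleton_iff,
        Set.mem_inter_iff]
      tauto
    calc _ ≤ _ := Set.ncard_le_ncard this (Set.toFinite _)
      _ ≤ _ := Set.ncard_union_le _ _
      _ ≤ _ := by gcongr; exact (Set.ncard_union_le _ _).trans (by simp)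
  rw [h3] at h1
  change G'.edgeSet.ncard = (contract G u v).edgeSet.ncard + _ at h1
  omega

/-! ### Dense minors -/

/-- Consider a minor that is minimal subject to having at least `α n - β` edges, where `n` is its
order; minimality is first in the number of vertices and then in the number of edges. It has minimum
degree more than `α`, and every edge of it lies in more than `α - 1` triangles. The graph `K` is the
subgraph induced on the neighbourhood of a vertex of minimum degree. The hypothesis `hbar` says that
no graph on `N₀` vertices satisfies the bound, so that the minimal minor has more than `N₀`
vertices. -/
theorem exists_dense_minor {V : Type} [Fintype V] (G : SimpleGraph V) (α β : ℝ) (N₀ : ℕ)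
    (hα : 0 ≤ α) (hN₀ : 1 ≤ N₀) (hN : N₀ ≤ Fintype.card V)
    (hG : α * Fintype.card V - β ≤ G.edgeSet.ncard)
    (hbar : (N₀ : ℝ) * (N₀ - 1) / 2 < α * N₀ - β) :
    ∃ (U : Type) (_ : Fintype U) (K : SimpleGraph U) (n : ℕ), K.IsMinorOf G ∧ N₀ < n ∧
      n ≤ Fintype.card V ∧ α < Fintype.card U ∧
      (Fintype.card U : ℝ) * n ≤ 2 * (α * n - β) + 2 ∧
      ∀ x, α - 1 < (K.neighborSet x).ncard := by
  classical
  let P : ℕ → ℕ → Prop := fun n e => N₀ ≤ n ∧ α * n - β ≤ e ∧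
    ∃ (U : Type) (_ : Fintype U) (K : SimpleGraph U), K.IsMinorOf G ∧ Fintype.card U = n ∧
      K.edgeSet.ncard = e
  have hP : ∃ n, ∃ e, P n e := ⟨Fintype.card V, G.edgeSet.ncard, hN, hG, V, _, G,
    minor_of_hom id Function.injective_id (fun _ _ h => h), rfl, rfl⟩
  set n := Nat.find hP with hn
  have hP1 : ∃ e, P n e := Nat.find_spec hP
  set e := Nat.find hP1 with he
  obtain ⟨hNn, hαe, U, _, K, hK, hcard, hedge⟩ : P n e := Nat.find_spec hP1
  have hmin_n : ∀ m < n, ∀ e, ¬ P m e := fun m hm e' h => Nat.find_min hP hm ⟨e', h⟩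
  have hmin_e : ∀ e' < e, ¬ P n e' := fun e' h => Nat.find_min hP1 h
  have hnV : n ≤ Fintype.card V := Nat.find_min' hP ⟨G.edgeSet.ncard, hN, hG, V, _, G,
    minor_of_hom id Function.injective_id (fun _ _ h => h), rfl, rfl⟩
  have hn1 : 1 ≤ n := hN₀.trans hNn
  have hlt : N₀ < n := by
    refine lt_of_le_of_ne hNn fun h => ?_
    have h1 := ncard_edgeSet_le K
    rw [hcard, hedge] at h1
    have h2 : (2 : ℝ) * e ≤ n * (n - 1) := by
      have : ((2 * e : ℕ) : ℝ) ≤ ((n * (n - 1) : ℕ) : ℝ) := by exact_mod_cast h1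
      push_cast [Nat.cast_sub hn1] at this
      exact this
    rw [h] at hbar
    linarith
  have hsub : ((n - 1 : ℕ) : ℝ) = n - 1 := by push_cast [Nat.cast_sub hn1]; ring
  have hcardc : ∀ v : U, Fintype.card ({v}ᶜ : Set U) = n - 1 := by
    intro v; rw [Fintype.card_compl_set, hcard]; simp
  -- deleting a vertex must destroy the bound
  have hdeg : ∀ v, α < (K.neighborSet v).ncard := by
    intro v
    by_contra! hv
    refine hmin_n (n - 1) (by omega) (K.induce {v}ᶜ).edgeSet.ncard ⟨by omega, ?_, _, _, _,
      minor_trans (minor_of_hom Subtype.val Subtype.val_injective (fun _ _ h => h)) hK,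
      hcardc v, rfl⟩
    have h1 := ncard_edgeSet_delete K v
    have h2 : (e : ℝ) = (K.induce {v}ᶜ).edgeSet.ncard + (K.neighborSet v).ncard := by
      rw [← hedge]; exact_mod_cast h1
    rw [hsub]
    linarith
  -- contracting an edge must destroy the bound
  have hcom : ∀ u v, K.Adj u v → α - 1 < (K.neighborSet u ∩ K.neighborSet v).ncard := by
    intro u v huv
    by_contra! hv
    refine hmin_n (n - 1) (by omega) (contract K u v).edgeSet.ncard ⟨by omega, ?_, _, _, _,
      minor_trans (contract_minor huv) hK, hcardc v, rfl⟩
    have h1 := ncard_edgeSet_contract K huv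
    have h2 : (e : ℝ) ≤ (contract K u v).edgeSet.ncard + 1 +
        (K.neighborSet u ∩ K.neighborSet v).ncard := by
      rw [← hedge]; exact_mod_cast h1
    rw [hsub]
    linarith
  have : Nonempty U := Fintype.card_pos_iff.1 (by omega)
  -- deleting an edge must destroy the bound
  have heub : (e : ℝ) ≤ α * n - β + 1 := by
    by_contra! hc
    obtain ⟨v⟩ := (inferInstance : Nonempty U)
    have h1 : (0 : ℝ) < (K.neighborSet v).ncard := lt_of_le_of_lt hα (hdeg v)
    obtain ⟨w, hw⟩ := (Set.ncard_pos (Set.toFinite _)).1 (Nat.cast_pos.1 h1)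
    have hmem : s(v, w) ∈ K.edgeSet := hw
    have h2 : (K.deleteEdges {s(v, w)}).edgeSet.ncard + 1 = e := by
      rw [edgeSet_deleteEdges, ← hedge]
      exact Set.ncard_sdiff_singleton_add_one hmem (Set.toFinite _)
    refine hmin_e (K.deleteEdges {s(v, w)}).edgeSet.ncard (by omega) ⟨hNn, ?_, U, _, _,
      minor_trans (minor_of_hom id Function.injective_id
        (fun _ _ h => deleteEdges_le _ h)) hK, hcard, rfl⟩
    have : (e : ℝ) = (K.deleteEdges {s(v, w)}).edgeSet.ncard + 1 := by exact_mod_cast h2.symm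
    linarith
  obtain ⟨v, -, hv⟩ := Finset.exists_min_image (Finset.univ : Finset U)
    (fun v => (K.neighborSet v).ncard) Finset.univ_nonempty
  have hcardN : Fintype.card (K.neighborSet v) = (K.neighborSet v).ncard := by
    rw [← Nat.card_eq_fintype_card, Nat.card_coe_set_eq]
  refine ⟨K.neighborSet v, inferInstance, K.induce _, n,
    minor_trans (minor_of_hom Subtype.val Subtype.val_injective (fun _ _ h => h)) hK, hlt, hnV,
    ?_, ?_, ?_⟩
  · rw [hcardN]; exact hdeg v
  · rw [hcardN]
    have h1 := two_mul_ncard_edgeSet K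
    have h2 : n * (K.neighborSet v).ncard ≤ ∑ x, (K.neighborSet x).ncard := by
      have := Finset.card_nsmul_le_sum Finset.univ (fun v => (K.neighborSet v).ncard) _
        (fun x _ => hv x (Finset.mem_univ x))
      rw [Finset.card_univ, hcard] at this
      simpa using this
    have h3 : ((n * (K.neighborSet v).ncard : ℕ) : ℝ) ≤ ((2 * e : ℕ) : ℝ) := by
      rw [← hedge, h1]; exact_mod_cast h2
    push_cast at h3
    linarith
  · rintro ⟨x, hx⟩
    have h1 := hcom v x hx
    have h2 : (K.neighborSet v ∩ K.neighborSet x).ncard ≤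
        (((K.induce (K.neighborSet v)).neighborSet ⟨x, hx⟩)).ncard := by
      rw [← Set.ncard_image_of_injective _ (Subtype.val_injective (p := (· ∈ K.neighborSet v)))]
      refine Set.ncard_le_ncard ?_ (Set.toFinite _)
      rintro y ⟨hy1, hy2⟩
      exact ⟨⟨y, hy1⟩, hy2, rfl⟩
    exact lt_of_lt_of_le h1 (by exact_mod_cast h2)

/-- Two rounds of `exists_dense_minor` turn average degree `D` into a dense minor: its minimum
degree is well above half of its order, and still proportional to `D`. -/
theorem exists_very_dense_minor {V : Type} [Fintype V] [Nonempty V] (G : SimpleGraph V) (D : ℝ)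
    (hD : 1000 ≤ D) (hG : D * Fintype.card V ≤ 2 * G.edgeSet.ncard) :
    ∃ (U : Type) (_ : Fintype U) (K : SimpleGraph U), K.IsMinorOf G ∧
      0.28 * D ≤ Fintype.card U ∧ (Fintype.card U : ℝ) ≤ D / 2 ∧
      ∀ x, 0.279 * D ≤ (K.neighborSet x).ncard := by
  obtain ⟨U, _, K, n, hK, hn, -, hU, hUn, hdeg⟩ := exists_dense_minor G (D / 2) 0 1 (by linarith)
    le_rfl Fintype.card_pos (by linarith) (by norm_num; linarith)
  have hn' : (2 : ℝ) ≤ n := by exact_mod_cast hn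
  have hUD : (Fintype.card U : ℝ) ≤ D + 1 := by
    by_contra! h
    nlinarith
  have hKe : (Fintype.card U : ℝ) * (D / 2 - 1) ≤ 2 * K.edgeSet.ncard := by
    have h1 : ((2 * K.edgeSet.ncard : ℕ) : ℝ) = ∑ v, ((K.neighborSet v).ncard : ℝ) := by
      rw [two_mul_ncard_edgeSet]; push_cast; rfl
    push_cast at h1
    rw [h1]
    have := Finset.card_nsmul_le_sum Finset.univ (fun v => ((K.neighborSet v).ncard : ℝ))
        (D / 2 - 1) (fun x _ => (hdeg x).le)
    simpa using this
  -- The graph `K` has order `u * D`, `u` being at most about `1`, and about `u * D ^ 2 / 4` edges or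
  -- more. Thus
  -- `0.28 - 1 / 4 < 0.031` makes the second round applicable; `0.28 ^ 2 / 2 < 0.28 ^ 2 - 0.031` is
  -- the condition on `N₀`, and `2 * (0.28 - 0.031) < 1 / 2` bounds the order of the result.
  set N₀ := ⌈0.28 * D⌉₊ with hN₀
  have hN1 : 0.28 * D ≤ N₀ := Nat.le_ceil _
  have hN2 : (N₀ : ℝ) < 0.28 * D + 1 := Nat.ceil_lt_add_one (by linarith)
  obtain ⟨U', _, K', n', hK', hn', hn'U, hU', hUn', hdeg'⟩ := exists_dense_minor K (0.28 * D)
    (0.031 * D ^ 2) N₀ (by linarith)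
    (by have : (0 : ℝ) < N₀ := by linarith
        exact_mod_cast this)
    (by have : (N₀ : ℝ) ≤ Fintype.card U := by linarith
        exact_mod_cast this)
    (by nlinarith) (by nlinarith)
  refine ⟨U', _, K', minor_trans hK' hK, hU'.le, ?_, fun x => ?_⟩
  · have h1 : (n' : ℝ) ≤ D + 1 := le_trans (by exact_mod_cast hn'U) hUD
    have h2 : (N₀ : ℝ) < n' := by exact_mod_cast hn'
    have h3 : (0 : ℝ) < n' := by linarith
    by_contra! h
    nlinarith
  · linarith [hdeg' x]

/-! ### A random bipartition of the vertex set -/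

/-- The probability that a random subset, containing each element independently with probability
`q`, equals `X`. -/
noncomputable def bernoulliWeight {V : Type*} [Fintype V] (q : ℝ) (X : Finset V) : ℝ :=
  q ^ X.card * (1 - q) ^ (Fintype.card V - X.card)

theorem bernoulliWeight_nonneg {V : Type*} [Fintype V] {q : ℝ} (h0 : 0 ≤ q) (h1 : q ≤ 1)
    (X : Finset V) : 0 ≤ bernoulliWeight q X := by
  have := sub_nonneg.2 h1
  unfold bernoulliWeight
  positivity

theorem sum_bernoulliWeight_mul {V : Type*} [Fintype V] [DecidableEq V] (q z : ℝ) (C : Finset V) :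
    ∑ X : Finset V, bernoulliWeight q X * z ^ (C ∩ X).card = (q * z + (1 - q)) ^ C.card := by
  have h := Finset.prod_add (fun v => q * if v ∈ C then z else 1) (fun _ => 1 - q)
    (Finset.univ : Finset V)
  have h2 : ∏ v : V, ((q * if v ∈ C then z else 1) + (1 - q)) = (q * z + (1 - q)) ^ C.card := by
    rw [← Finset.prod_const, ← Finset.prod_subset (Finset.subset_univ C)]
    · refine Finset.prod_congr rfl fun v hv => by simp [hv]
    · intro v _ hv
      simp [hv]
  rw [← h2, h, Finset.powerset_univ]
  refine Finset.sum_congr rfl fun X _ => ?_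
  rw [Finset.prod_mul_distrib, Finset.prod_const, Finset.prod_const, Finset.prod_ite,
    Finset.prod_const, Finset.prod_const_one, mul_one, bernoulliWeight,
    Finset.filter_mem_eq_inter, Finset.inter_comm X C, ← Finset.compl_eq_univ_sdiff,
    Finset.card_compl]
  ring

theorem sum_bernoulliWeight {V : Type*} [Fintype V] [DecidableEq V] (q : ℝ) :
    ∑ X : Finset V, bernoulliWeight q X = 1 := by
  simpa using sum_bernoulliWeight_mul q 1 (∅ : Finset V)

/-- Chernoff's bound for the lower tail of a binomial random variable. -/
theorem chernoff {V : Type*} [Fintype V] [DecidableEq V] {q ε : ℝ} (h0 : 0 ≤ q) (h1 : q ≤ 1)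
    (hε : 0 ≤ ε) (C : Finset V) :
    ∑ X : Finset V with ((C ∩ X).card : ℝ) < (1 - ε) * q * C.card, bernoulliWeight q X ≤
      Real.exp (-(q * ε ^ 2 / 2) * C.card) := by
  have hz : Real.exp (-ε) ≤ 1 - ε + ε ^ 2 / 2 := by
    have h2 := Real.quadratic_le_exp_of_nonneg hε
    have h3 : (1 - ε + ε ^ 2 / 2) * (1 + ε + ε ^ 2 / 2) = 1 + ε ^ 4 / 4 := by ring
    have h4 : 0 < 1 - ε + ε ^ 2 / 2 := by nlinarith [sq_nonneg (ε - 1)]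
    rw [Real.exp_neg, inv_le_iff_one_le_mul₀ (Real.exp_pos _)]
    nlinarith [pow_nonneg hε 4]
  have hbase : q * Real.exp (-ε) + (1 - q) ≤ Real.exp (-(q * (ε - ε ^ 2 / 2))) := by
    have := Real.add_one_le_exp (-(q * (ε - ε ^ 2 / 2)))
    nlinarith
  have hbase0 : 0 ≤ q * Real.exp (-ε) + (1 - q) := by
    have := Real.exp_pos (-ε)
    have := sub_nonneg.2 h1
    positivity
  have hsum : ∑ X : Finset V with ((C ∩ X).card : ℝ) < (1 - ε) * q * C.card, bernoulliWeight q X *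
      Real.exp (-ε * ((1 - ε) * q * C.card)) ≤ (Real.exp (-(q * (ε - ε ^ 2 / 2)))) ^ C.card := by
    calc _ ≤ ∑ X : Finset V with ((C ∩ X).card : ℝ) < (1 - ε) * q * C.card,
          bernoulliWeight q X * Real.exp (-ε) ^ (C ∩ X).card := by
          refine Finset.sum_le_sum fun X hX => ?_
          refine mul_le_mul_of_nonneg_left ?_ (bernoulliWeight_nonneg h0 h1 X)
          rw [← Real.exp_nat_mul]
          refine Real.exp_le_exp.2 ?_
          have := (Finset.mem_filter.1 hX).2
          nlinarith
      _ ≤ ∑ X : Finset V, bernoulliWeight q X * Real.exp (-ε) ^ (C ∩ X).card :=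
          Finset.sum_le_sum_of_subset_of_nonneg (Finset.filter_subset _ _) fun X _ _ =>
            mul_nonneg (bernoulliWeight_nonneg h0 h1 X) (by positivity)
      _ = _ := sum_bernoulliWeight_mul _ _ _
      _ ≤ _ := pow_le_pow_left₀ hbase0 hbase _
  rw [← Finset.sum_mul, ← Real.exp_nat_mul, ← le_div_iff₀ (Real.exp_pos _), ← Real.exp_sub] at hsum
  refine hsum.trans (le_of_eq ?_)
  congr 1
  ring

theorem bernoulliWeight_compl {V : Type*} [Fintype V] [DecidableEq V] (q : ℝ) (X : Finset V) :
    bernoulliWeight q Xᶜ = bernoulliWeight (1 - q) X := by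
  have := Finset.card_le_univ X
  unfold bernoulliWeight
  rw [Finset.card_compl, Nat.sub_sub_self this]
  ring

/-- There is a set `X` containing about nine tenths of each `C i` and avoiding about one tenth of
each `C' j`, provided these sets are large compared to the logarithm of their number. -/
theorem exists_split {V I J : Type*} [Fintype V] [DecidableEq V] [Fintype I] [Fintype J]
    (C : I → Finset V) (C' : J → Finset V) (m : ℝ) (hC : ∀ i, m ≤ (C i).card)
    (hC' : ∀ j, m ≤ (C' j).card)
    (h : ((Fintype.card I : ℝ) + Fintype.card J) * Real.exp (-(m / 20000)) < 1) :
    ∃ X : Finset V, (∀ i, 0.89 * ((C i).card : ℝ) ≤ (C i ∩ X).card) ∧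
      ∀ j, 0.09 * ((C' j).card : ℝ) ≤ (C' j ∩ Xᶜ).card := by
  by_contra! hcon
  have hle : ∀ m' : ℝ, m ≤ m' → ∀ c : ℝ, 1 / 20000 ≤ c → 0 ≤ m' →
      Real.exp (-c * m') ≤ Real.exp (-(m / 20000)) := by
    intro m' hm c hc h0
    refine Real.exp_le_exp.2 ?_
    nlinarith
  have h1 : ∀ i, ∑ X : Finset V with ((C i ∩ X).card : ℝ) < 0.89 * (C i).card,
      bernoulliWeight 0.9 X ≤ Real.exp (-(m / 20000)) := by
    intro i
    have := chernoff (q := 0.9) (ε := 1 / 90) (by norm_num) (by norm_num) (by norm_num) (C i)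
    rw [show (1 - 1 / 90 : ℝ) * 0.9 = 0.89 by norm_num] at this
    exact this.trans (hle _ (hC i) _ (by norm_num) (by positivity))
  have h2 : ∀ j, ∑ X : Finset V with ((C' j ∩ Xᶜ).card : ℝ) < 0.09 * (C' j).card,
      bernoulliWeight 0.9 X ≤ Real.exp (-(m / 20000)) := by
    intro j
    have := chernoff (q := 0.1) (ε := 1 / 10) (by norm_num) (by norm_num) (by norm_num) (C' j)
    rw [show (1 - 1 / 10 : ℝ) * 0.1 = 0.09 by norm_num] at this
    refine le_trans (le_of_eq ?_) (this.trans (hle _ (hC' j) _ (by norm_num) (by positivity)))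
    rw [Finset.sum_filter, Finset.sum_filter]
    refine Fintype.sum_equiv ⟨compl, compl, compl_compl, compl_compl⟩ _ _ fun X => ?_
    simp only [Equiv.coe_fn_mk]
    rw [bernoulliWeight_compl]
    norm_num
  have h3 : (1 : ℝ) ≤ ∑ i, ∑ X : Finset V with ((C i ∩ X).card : ℝ) < 0.89 * (C i).card,
      bernoulliWeight 0.9 X + ∑ j, ∑ X : Finset V with
        ((C' j ∩ Xᶜ).card : ℝ) < 0.09 * (C' j).card, bernoulliWeight 0.9 X := by
    rw [← sum_bernoulliWeight (V := V) 0.9]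
    simp_rw [Finset.sum_filter]
    rw [Finset.sum_comm, Finset.sum_comm (s := (Finset.univ : Finset J)), ← Finset.sum_add_distrib]
    refine Finset.sum_le_sum fun X _ => ?_
    have hw := bernoulliWeight_nonneg (q := 0.9) (by norm_num) (by norm_num) X
    have hnn : ∀ p : Prop, [Decidable p] → 0 ≤ if p then bernoulliWeight 0.9 X else 0 := by
      intro p _; split_ifs <;> simp [hw]
    by_cases hX : ∀ i, 0.89 * ((C i).card : ℝ) ≤ (C i ∩ X).card
    · obtain ⟨j, hj⟩ := hcon X hX
      have := Finset.single_le_sum (f := fun j => if ((C' j ∩ Xᶜ).card : ℝ) < 0.09 * (C' j).card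
        then bernoulliWeight 0.9 X else 0) (fun j _ => hnn _) (Finset.mem_univ j)
      simp only [hj, if_true] at this
      exact this.trans (le_add_of_nonneg_left (Finset.sum_nonneg fun i _ => hnn _))
    · push Not at hX
      obtain ⟨i, hi⟩ := hX
      have := Finset.single_le_sum (f := fun i => if ((C i ∩ X).card : ℝ) < 0.89 * (C i).card
        then bernoulliWeight 0.9 X else 0) (fun j _ => hnn _) (Finset.mem_univ i)
      simp only [hi, if_true] at this
      exact this.trans (le_add_of_nonneg_right (Finset.sum_nonneg fun i _ => hnn _))
  have h4 := Finset.sum_le_sum fun i (_ : i ∈ Finset.univ) => h1 i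
  have h5 := Finset.sum_le_sum fun j (_ : j ∈ Finset.univ) => h2 j
  simp only [Finset.sum_const, Finset.card_univ, nsmul_eq_mul] at h4 h5
  linarith

/-! ### Random permutations -/

/-- Exposing `σ` on `S` first, the images of a set `T` disjoint from `S` all fall into a set `U σ`
of size at most `u` determined by the exposed values with probability at most `(u / M) ^ |T|`.
Here `Q` is an event determined by the exposed values. Being determined by the exposed values is
expressed as invariance under composition with transpositions outside `S`. -/
theorem card_perm_hit {X : Type*} [Fintype X] [DecidableEq X] (Q : Finset (Equiv.Perm X))
    (S : Finset X) (U : Equiv.Perm X → Finset X) (u : ℝ) (hu0 : 0 ≤ u)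
    (hQ : ∀ σ ∈ Q, ∀ x ∉ S, ∀ y ∉ S, σ * Equiv.swap x y ∈ Q)
    (hU : ∀ σ, ∀ x ∉ S, ∀ y ∉ S, U (σ * Equiv.swap x y) = U σ)
    (hu : ∀ σ ∈ Q, ((U σ).card : ℝ) ≤ u) (T : Finset X) (hST : Disjoint S T) (M : ℕ)
    (hM : M + S.card + T.card ≤ Fintype.card X) :
    ((Q.filter fun σ => ∀ x ∈ T, σ x ∈ U σ).card : ℝ) * M ^ T.card ≤ u ^ T.card * Q.card := by
  induction T using Finset.induction_on with
  | empty => simp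
  | insert x T hxT ih =>
    rw [Finset.card_insert_of_notMem hxT] at hM ⊢
    rw [Finset.disjoint_insert_right] at hST
    have ih := ih hST.2 (by omega)
    set Q' := Q.filter fun σ => ∀ x ∈ T, σ x ∈ U σ with hQ'
    set R := (S ∪ T)ᶜ with hR
    have hRcard : M ≤ R.card := by
      rw [hR, Finset.card_compl]
      have := Finset.card_union_le S T
      omega
    have hxR : x ∈ R := by simp [hR, hST.1, hxT]
    -- every point outside `S ∪ T` is equally likely to be mapped into `U σ`
    have hcount : ∀ y ∈ R, (Q'.filter fun σ => σ x ∈ U σ).card ≤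
        (Q'.filter fun σ => σ y ∈ U σ).card := by
      intro y hy
      have hyS : y ∉ S := fun h => by simp [hR, h] at hy
      have hyT : y ∉ T := fun h => by simp [hR, h] at hy
      refine Finset.card_le_card_of_injOn (fun σ => σ * Equiv.swap x y) ?_
        (fun a _ b _ h => mul_right_cancel h)
      intro σ hσ
      simp only [hQ', Finset.coe_filter, Finset.mem_filter, Set.mem_ofPred_eq] at hσ ⊢
      rw [hU σ x hST.1 y hyS]
      refine ⟨⟨hQ σ hσ.1.1 x hST.1 y hyS, fun z hz => ?_⟩, by simpa using hσ.2⟩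
      have h1 : z ≠ x := fun h => hxT (h ▸ hz)
      have h2 : z ≠ y := fun h => hyT (h ▸ hz)
      rw [Equiv.Perm.mul_apply, Equiv.swap_apply_of_ne_of_ne h1 h2]
      exact hσ.1.2 z hz
    have hdouble : (R.card : ℝ) * (Q'.filter fun σ => σ x ∈ U σ).card ≤ u * Q'.card := by
      calc (R.card : ℝ) * (Q'.filter fun σ => σ x ∈ U σ).card
          = ∑ y ∈ R, ((Q'.filter fun σ => σ x ∈ U σ).card : ℝ) := by simp
        _ ≤ ∑ y ∈ R, ((Q'.filter fun σ => σ y ∈ U σ).card : ℝ) :=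
            Finset.sum_le_sum fun y hy => by exact_mod_cast hcount y hy
        _ = ∑ σ ∈ Q', ((R.filter fun y => σ y ∈ U σ).card : ℝ) := by
            simp_rw [Finset.card_filter]
            push_cast
            rw [Finset.sum_comm]
        _ ≤ ∑ σ ∈ Q', u := by
            refine Finset.sum_le_sum fun σ hσ => le_trans ?_ (hu σ (Finset.mem_filter.1 hσ).1)
            exact_mod_cast Finset.card_le_card_of_injOn σ (fun y hy => (Finset.mem_filter.1 hy).2)
              (σ.injective.injOn)
        _ = u * Q'.card := by simp [mul_comm]
    have hfil : (Q.filter fun σ => ∀ y ∈ insert x T, σ y ∈ U σ) =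
        Q'.filter fun σ => σ x ∈ U σ := by
      rw [hQ', Finset.filter_filter]
      refine Finset.filter_congr fun σ _ => ?_
      rw [Finset.forall_mem_insert, and_comm]
    rw [hfil]
    set c : ℝ := ((Q'.filter fun σ => σ x ∈ U σ).card : ℝ)
    have hc : 0 ≤ c := by positivity
    have hMR : (M : ℝ) ≤ R.card := by exact_mod_cast hRcard
    calc c * (M : ℝ) ^ (T.card + 1) = (M * c) * M ^ T.card := by ring
      _ ≤ (R.card * c) * M ^ T.card := by gcongr
      _ ≤ (u * Q'.card) * M ^ T.card := by gcongr
      _ = u * (Q'.card * M ^ T.card) := by ring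
      _ ≤ u * (u ^ T.card * Q.card) := by gcongr
      _ = _ := by ring

/-! ### Random blocks -/

/-- A random placement of `K`-many blocks of size `s` in a graph `F` in which every vertex has at
most `r` non-neighbours. A block is called good if few vertices of `F` have no neighbour in it. With
positive probability all but one percent of the blocks are good, only few vertices have no
neighbour among the first `ℓ` vertices of their block, and only few pairs of blocks, the first one
good, have no edge between them. -/
theorem exists_blocks {X K : Type*} [Fintype X] [Fintype K] [Nonempty K] (F : SimpleGraph X)
    (s ℓ r M : ℕ) (φ : K × Fin s ↪ X) (hs : 0 < s) (hℓ : ℓ < s) (hM0 : 0 < M)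
    (hM : M + 2 * s ≤ Fintype.card X) (hr : ∀ v, {x | ¬ F.Adj v x}.ncard ≤ r)
    (a μ κ : ℝ) (ha : 0 < a) (hμ0 : 0 < μ) (hκ0 : 0 < κ) (hra : ((r : ℝ) / M) ^ s ≤ a)
    (hμ : (1000 * Fintype.card X * a / M) ^ s ≤ μ) (hκ : ((r : ℝ) / M) ^ ℓ ≤ κ) :
    ∃ (ψ : K × Fin s ↪ X) (good : Set K),
      (goodᶜ.ncard : ℝ) ≤ 0.01 * Fintype.card K ∧
      ({p : K × Fin s | ∀ j : Fin s, j.1 < ℓ → ¬ F.Adj (ψ p) (ψ (p.1, j)) ∧ j ≠ p.2}.ncard : ℝ) ≤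
        10 * κ * (Fintype.card K * s) ∧
      ({p : K × K | p.1 ≠ p.2 ∧ p.1 ∈ good ∧
        ∀ x y, ¬ F.Adj (ψ (p.1, x)) (ψ (p.2, y))}.ncard : ℝ) ≤
        10 * μ * (Fintype.card K) ^ 2 := by
  classical
  set N := Fintype.card X with hN
  have hN0 : 0 < N := by omega
  have hk0 : 0 < Fintype.card K := Fintype.card_pos
  have hMr : (0 : ℝ) < M := by exact_mod_cast hM0
  set u₀ : ℝ := 1000 * N * a with hu₀
  have hu₀0 : 0 < u₀ := by positivity
  let nonN : X → Finset X := fun v => Finset.univ.filter fun x => ¬ F.Adj v x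
  have hnonN : ∀ v, ((nonN v).card : ℝ) ≤ r := by
    intro v
    have := hr v
    rw [Set.ncard_eq_toFinset_card'] at this
    have h2 : nonN v = {x | ¬ F.Adj v x}.toFinset := by ext; simp [nonN]
    rw [h2]
    exact_mod_cast this
  let A : K → Finset X := fun i => Finset.univ.image fun j => φ (i, j)
  have hAcard : ∀ i, (A i).card = s := by
    intro i
    rw [Finset.card_image_of_injective]
    · simp
    · intro x y h; simpa using φ.injective h
  let U : K → Equiv.Perm X → Finset X := fun i σ =>
    Finset.univ.filter fun v => ∀ x ∈ A i, ¬ F.Adj v (σ x)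
  let bad : K → Finset (Equiv.Perm X) := fun i => Finset.univ.filter fun σ => u₀ < (U i σ).card
  let Ω : ℝ := (Fintype.card (Equiv.Perm X) : ℝ)
  have hΩ : 0 < Ω := by
    have : 0 < Fintype.card (Equiv.Perm X) := Fintype.card_pos
    exact Nat.cast_pos.2 this
  -- few blocks are bad, by Markov's inequality
  have h1 : ∀ i, ((bad i).card : ℝ) ≤ Ω / 1000 := by
    intro i
    have hv : ∀ v, (((Finset.univ : Finset (Equiv.Perm X)).filter
        fun σ => ∀ x ∈ A i, σ x ∈ nonN v).card : ℝ) ≤ a * Ω := by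
      intro v
      have := card_perm_hit (Finset.univ : Finset (Equiv.Perm X)) ∅ (fun _ => nonN v) r
        (by positivity) (by simp) (by simp) (fun _ _ => hnonN v) (A i) (by simp) M
        (by rw [hAcard]; simp; omega)
      rw [hAcard, ← le_div_iff₀ (by positivity), mul_div_right_comm, ← div_pow,
        Finset.card_univ] at this
      exact this.trans (by gcongr)
    have hsum : ∑ σ, ((U i σ).card : ℝ) ≤ N * (a * Ω) := by
      calc ∑ σ, ((U i σ).card : ℝ) = ∑ v, (((Finset.univ : Finset (Equiv.Perm X)).filter
            fun σ => ∀ x ∈ A i, σ x ∈ nonN v).card : ℝ) := by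
            simp only [U, nonN, Finset.card_filter]
            push_cast
            rw [Finset.sum_comm]
            simp
        _ ≤ ∑ v : X, a * Ω := Finset.sum_le_sum fun v _ => hv v
        _ = _ := by simp [hN]
    have h2 : ((bad i).card : ℝ) * u₀ ≤ ∑ σ, ((U i σ).card : ℝ) := by
      calc ((bad i).card : ℝ) * u₀ = ∑ σ ∈ bad i, u₀ := by simp
        _ ≤ ∑ σ ∈ bad i, ((U i σ).card : ℝ) :=
          Finset.sum_le_sum fun σ hσ => (Finset.mem_filter.1 hσ).2.le
        _ ≤ _ := Finset.sum_le_sum_of_subset_of_nonneg (Finset.subset_univ _)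
          fun _ _ _ => by positivity
    have h3 : ((bad i).card : ℝ) * u₀ ≤ Ω / 1000 * u₀ := by
      refine (h2.trans hsum).trans (le_of_eq ?_)
      rw [hu₀]; ring
    exact le_of_mul_le_mul_right h3 hu₀0
  -- few vertices miss the first `ℓ` vertices of their block
  let first : K × Fin s → Finset X := fun p =>
    (Finset.univ.filter fun j : Fin s => j.1 < ℓ).image fun j => φ (p.1, j)
  let loose : K × Fin s → Finset (Equiv.Perm X) := fun p =>
    Finset.univ.filter fun σ => φ p ∉ first p ∧ ∀ x ∈ first p, σ x ∈ nonN (σ (φ p))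
  have h2 : ∀ p, ((loose p).card : ℝ) ≤ κ * Ω := by
    intro p
    by_cases hp : φ p ∈ first p
    · simp only [loose, hp, not_true, false_and, Finset.filter_false, Finset.card_empty,
        Nat.cast_zero]
      positivity
    have hcard : (first p).card = ℓ := by
      rw [Finset.card_image_of_injective, Fin.card_filter_val_lt, min_eq_right hℓ.le]
      intro x y h; simpa using φ.injective h
    have := card_perm_hit (Finset.univ : Finset (Equiv.Perm X)) {φ p}
        (fun σ => nonN (σ (φ p))) r (by positivity) (by simp)
        (by
          intro σ x hx y hy
          rw [Finset.mem_singleton] at hx hy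
          simp [Equiv.swap_apply_of_ne_of_ne (Ne.symm hx) (Ne.symm hy)])
        (fun _ _ => hnonN _) (first p) (by simpa using hp) M
        (by rw [hcard]; simp; omega)
    rw [hcard, ← le_div_iff₀ (by positivity), mul_div_right_comm, ← div_pow,
        Finset.card_univ] at this
    refine le_trans ?_ (this.trans (mul_le_mul_of_nonneg_right hκ hΩ.le))
    refine Nat.cast_le.2 (Finset.card_le_card fun σ hσ => ?_)
    simp only [loose, Finset.mem_filter] at hσ ⊢
    exact ⟨hσ.1, hσ.2.2⟩
  -- few pairs of blocks have no edge between them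
  let miss : K × K → Finset (Equiv.Perm X) := fun p =>
    Finset.univ.filter fun σ => p.1 ≠ p.2 ∧ σ ∉ bad p.1 ∧ ∀ x ∈ A p.2, σ x ∈ U p.1 σ
  have h3 : ∀ p, ((miss p).card : ℝ) ≤ μ * Ω := by
    rintro ⟨i, j⟩
    by_cases hij : i = j
    · simp only [miss, hij, ne_eq, not_true, false_and, Finset.filter_false, Finset.card_empty,
        Nat.cast_zero]
      positivity
    have hUinv : ∀ σ : Equiv.Perm X, ∀ x ∉ A i, ∀ y ∉ A i,
        U i (σ * Equiv.swap x y) = U i σ := by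
      intro σ x hx y hy
      refine Finset.filter_congr fun v _ => forall₂_congr fun z hz => ?_
      rw [Equiv.Perm.mul_apply, Equiv.swap_apply_of_ne_of_ne (by rintro rfl; exact hx hz)
        (by rintro rfl; exact hy hz)]
    have := card_perm_hit (Finset.univ.filter fun σ => σ ∉ bad i) (A i) (U i) u₀ hu₀0.le
        (by
          intro σ hσ x hx y hy
          simp only [bad, Finset.mem_filter, Finset.mem_univ, true_and] at hσ ⊢
          rwa [hUinv σ x hx y hy]) hUinv
        (by
          intro σ hσ
          simpa [bad] using hσ) (A j)
        (by
          rw [Finset.disjoint_left]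
          intro z hz hz'
          obtain ⟨a, -, rfl⟩ := Finset.mem_image.1 hz
          obtain ⟨b, -, hb⟩ := Finset.mem_image.1 hz'
          exact hij (Prod.ext_iff.1 (φ.injective hb)).1.symm) M
        (by rw [hAcard, hAcard]; omega)
    rw [hAcard, ← le_div_iff₀ (by positivity), mul_div_right_comm, ← div_pow] at this
    refine le_trans ?_ (this.trans (mul_le_mul hμ ?_ (by positivity) hμ0.le))
    · refine Nat.cast_le.2 (Finset.card_le_card fun σ hσ => ?_)
      simp only [miss, Finset.mem_filter, Finset.mem_univ, true_and] at hσ ⊢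
      exact hσ.2
    · exact Nat.cast_le.2 (Finset.card_le_univ _)
  -- one permutation is below ten times the average in all three respects
  let f : Equiv.Perm X → ℝ := fun σ =>
    ((Finset.univ.filter fun i => σ ∈ bad i).card : ℝ) / (0.01 * Fintype.card K) +
    ((Finset.univ.filter fun p => σ ∈ loose p).card : ℝ) / (10 * κ * (Fintype.card K * s)) +
    ((Finset.univ.filter fun p => σ ∈ miss p).card : ℝ) / (10 * μ * (Fintype.card K) ^ 2)
  have hswap : ∀ {ι : Type _} [Fintype ι] (E : ι → Finset (Equiv.Perm X)),
      ∑ σ, ((Finset.univ.filter fun i => σ ∈ E i).card : ℝ) = ∑ i, ((E i).card : ℝ) := by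
    intro ι _ E
    simp_rw [Finset.card_filter]
    push_cast
    rw [Finset.sum_comm]
    simp
  have hs' : (0 : ℝ) < s := by exact_mod_cast hs
  have hk' : (0 : ℝ) < Fintype.card K := by exact_mod_cast hk0
  have hf : ∑ σ, f σ ≤ ∑ σ : Equiv.Perm X, (1 : ℝ) := by
    simp only [f, Finset.sum_add_distrib, ← Finset.sum_div]
    rw [hswap, hswap, hswap]
    have e1 : ∑ i, ((bad i).card : ℝ) ≤ Fintype.card K * (Ω / 1000) := by
      simpa using Finset.sum_le_sum fun i (_ : i ∈ Finset.univ) => h1 i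
    have e2 : ∑ i, ((loose i).card : ℝ) ≤ (Fintype.card K * s) * (κ * Ω) := by
      simpa using Finset.sum_le_sum fun i (_ : i ∈ Finset.univ) => h2 i
    have e3 : ∑ i, ((miss i).card : ℝ) ≤ (Fintype.card K * Fintype.card K) * (μ * Ω) := by
      simpa using Finset.sum_le_sum fun i (_ : i ∈ Finset.univ) => h3 i
    have e1' : (∑ i, ((bad i).card : ℝ)) / (0.01 * Fintype.card K) ≤ Ω / 10 := by
      rw [div_le_iff₀ (by positivity)]; linarith
    have e2' : (∑ i, ((loose i).card : ℝ)) / (10 * κ * (Fintype.card K * s)) ≤ Ω / 10 := by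
      rw [div_le_iff₀ (by positivity)]; linarith
    have e3' : (∑ i, ((miss i).card : ℝ)) / (10 * μ * (Fintype.card K) ^ 2) ≤ Ω / 10 := by
      rw [div_le_iff₀ (by positivity)]; linarith
    have : ∑ σ : Equiv.Perm X, (1 : ℝ) = Ω := by simp [Ω, Fintype.card_perm]
    rw [this]
    linarith
  obtain ⟨σ, -, hσ⟩ := Finset.exists_le_of_sum_le Finset.univ_nonempty hf
  have p1 : 0 ≤ ((Finset.univ.filter fun i => σ ∈ bad i).card : ℝ) / (0.01 * Fintype.card K) := by
    positivity
  have p2 : 0 ≤ ((Finset.univ.filter fun p => σ ∈ loose p).card : ℝ) /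
    (10 * κ * (Fintype.card K * s)) := by positivity
  have p3 : 0 ≤ ((Finset.univ.filter fun p => σ ∈ miss p).card : ℝ) /
    (10 * μ * (Fintype.card K) ^ 2) := by positivity
  simp only [f] at hσ
  have q1 := (div_le_iff₀ (by positivity)).1 (show
    ((Finset.univ.filter fun i => σ ∈ bad i).card : ℝ) / (0.01 * Fintype.card K) ≤ 1 by linarith)
  have q2 := (div_le_iff₀ (by positivity)).1 (show
    ((Finset.univ.filter fun p => σ ∈ loose p).card : ℝ) / (10 * κ * (Fintype.card K * s)) ≤ 1
      by linarith)
  have q3 := (div_le_iff₀ (by positivity)).1 (show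
    ((Finset.univ.filter fun p => σ ∈ miss p).card : ℝ) / (10 * μ * (Fintype.card K) ^ 2) ≤ 1
      by linarith)
  refine ⟨φ.trans σ.toEmbedding, {i | σ ∉ bad i}, ?_, ?_, ?_⟩
  · refine le_trans (le_of_eq ?_) (q1.trans_eq (one_mul _))
    rw [Set.ncard_eq_toFinset_card']
    congr 2
    ext i
    simp
  · refine le_trans ?_ (q2.trans_eq (one_mul _))
    rw [Set.ncard_eq_toFinset_card']
    refine Nat.cast_le.2 (Finset.card_le_card fun p hp => ?_)
    simp only [Set.mem_toFinset, Set.mem_ofPred_eq] at hp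
    simp only [loose, first, nonN, Finset.mem_filter, Finset.mem_univ, true_and, Finset.mem_image,
      not_exists, not_and]
    refine ⟨fun j hj he => (hp j hj).2 (Prod.ext_iff.1 (φ.injective he)).2, ?_⟩
    rintro x ⟨j, hj, rfl⟩
    exact (hp j hj).1
  · refine le_trans ?_ (q3.trans_eq (one_mul _))
    rw [Set.ncard_eq_toFinset_card']
    refine Nat.cast_le.2 (Finset.card_le_card fun p hp => ?_)
    simp only [Set.mem_toFinset, Set.mem_ofPred_eq] at hp
    simp only [miss, U, A, Finset.mem_filter, Finset.mem_univ, true_and, Finset.mem_image,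
      forall_exists_index, forall_apply_eq_imp_iff]
    exact ⟨hp.1, hp.2.1, fun y x h => hp.2.2 x y h.symm⟩

/-! ### A random assignment -/

/-- A random injection carries each pair of distinct points to each pair of distinct points equally
often, so some injection carries at most the average number of pairs of `P` into `Q`. -/
theorem exists_embedding_few {W J : Type*} [Fintype J] [DecidableEq J] [DecidableEq W]
    (e : W ↪ J) (P : Finset (W × W))
    (hP : ∀ p ∈ P, p.1 ≠ p.2) (Q : Finset (J × J)) :
    ∃ f : W ↪ J, (P.filter fun p => (f p.1, f p.2) ∈ Q).card *
      (Fintype.card J * (Fintype.card J - 1)) ≤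
      P.card * (Q.filter fun q => q.1 ≠ q.2).card := by
  classical
  let c : J × J → ℕ := fun q =>
    ((Finset.univ : Finset (Equiv.Perm J)).filter fun τ => (τ q.1, τ q.2) ∈ Q).card
  let O : Finset (J × J) := Finset.univ.filter fun q => q.1 ≠ q.2
  have hO : O.card = Fintype.card J * (Fintype.card J - 1) := by
    have : O = Finset.univ.offDiag := by ext; simp [O]
    rw [this, Finset.offDiag_card, Finset.card_univ, Nat.mul_sub_one]
  have hc : ∀ q ∈ O, ∀ q' ∈ O, c q = c q' := by
    intro q hq q' hq'
    obtain ⟨π, h1, h2⟩ := MulAction.is_two_pretransitive_iff.1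
      (Equiv.Perm.isMultiplyPretransitive J 2) (Finset.mem_filter.1 hq').2
      (Finset.mem_filter.1 hq).2
    refine Finset.card_bij' (fun τ _ => τ * π) (fun τ _ => τ * π⁻¹) ?_ ?_ (by simp) (by simp)
    · intro τ hτ
      simp only [Equiv.Perm.smul_def] at h1 h2
      simpa [h1, h2] using hτ
    · intro τ hτ
      simp only [Equiv.Perm.smul_def] at h1 h2
      simpa [← h1, ← h2] using hτ
  have hsum : ∑ q ∈ O, c q =
      Fintype.card (Equiv.Perm J) * (Q.filter fun q => q.1 ≠ q.2).card := by
    simp only [c, Finset.card_filter]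
    rw [Finset.sum_comm]
    rw [Fintype.card, ← smul_eq_mul, ← Finset.sum_const]
    refine Finset.sum_congr rfl fun τ _ => ?_
    rw [← Finset.card_filter, ← Finset.card_filter]
    refine Finset.card_bij' (fun q _ => (τ q.1, τ q.2)) (fun q _ => (τ.symm q.1, τ.symm q.2))
      ?_ ?_ (by simp) (by simp)
    · rintro ⟨x, y⟩ h; simp [O] at h ⊢; tauto
    · rintro ⟨x, y⟩ h; simp [O] at h ⊢; tauto
  have hcq : ∀ q ∈ O, c q * O.card =
      Fintype.card (Equiv.Perm J) * (Q.filter fun q => q.1 ≠ q.2).card := by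
    intro q hq
    rw [← hsum, Finset.sum_congr rfl fun q' hq' => hc q' hq' q hq, Finset.sum_const, smul_eq_mul,
      mul_comm]
  have htot : ∑ τ : Equiv.Perm J,
      (P.filter fun p => (τ (e p.1), τ (e p.2)) ∈ Q).card * O.card ≤
      ∑ τ : Equiv.Perm J, P.card * (Q.filter fun q => q.1 ≠ q.2).card := by
    rw [← Finset.sum_mul]
    have : ∑ τ : Equiv.Perm J, (P.filter fun p => (τ (e p.1), τ (e p.2)) ∈ Q).card =
        ∑ p ∈ P, c (e p.1, e p.2) := by
      simp only [c, Finset.card_filter]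
      rw [Finset.sum_comm]
    rw [this, Finset.sum_mul, Finset.sum_congr rfl fun p hp => hcq _ (by
      simpa [O] using hP p hp), Finset.sum_const, Finset.sum_const, smul_eq_mul, smul_eq_mul,
      Finset.card_univ]
    exact le_of_eq (by ring)
  obtain ⟨τ, -, hτ⟩ := Finset.exists_le_of_sum_le Finset.univ_nonempty htot
  exact ⟨e.trans τ.toEmbedding, by rw [← hO]; exact hτ⟩

/-! ### Completing the blocks by connectors -/

/-- Disjoint blocks `ρ (w, ·)` inside `X` become branch sets for `H` once each of them is augmented
by private vertices outside `X`, each adjacent to the root `ρ (w, 0)` of the block: one for each of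
the first `ℓ` vertices and each vertex in `loose`, to make the block connected, and one for each
pair in `missing`, to create the missing adjacency. Distinct such vertices exist as long as every
pair of vertices has enough common neighbours outside `X`. -/
theorem minor_of_blocks {V W : Type*} [Fintype V] [DecidableEq V] [Fintype W]
    (G : SimpleGraph V) (H : SimpleGraph W) (X : Finset V) (s ℓ : ℕ) (hs : 0 < s) (hℓ : ℓ < s)
    (ρ : W × Fin s → V) (hρ : Function.Injective ρ) (hX : ∀ p, ρ p ∈ X)
    (loose : Finset (W × Fin s)) (missing : Finset (W × W))
    (hloose : ∀ p ∉ loose, ∃ j : Fin s, j.1 < ℓ ∧ (G.Adj (ρ p) (ρ (p.1, j)) ∨ j = p.2))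
    (hmissing : ∀ w w', H.Adj w w' → (w, w') ∉ missing → ∃ x y, G.Adj (ρ (w, x)) (ρ (w', y)))
    (c : ℕ) (C : V → V → Finset V) (hC : ∀ u v, ∀ x ∈ C u v, G.Adj u x ∧ G.Adj v x ∧ x ∉ X)
    (hc : ∀ u v, c ≤ (C u v).card)
    (hcount : ℓ * Fintype.card W + loose.card + missing.card ≤ c) :
    H.IsMinorOf G := by
  classical
  let z : Fin s := ⟨0, hs⟩
  let ι : Type _ := (W × Fin ℓ) ⊕ {p // p ∈ loose} ⊕ {p // p ∈ missing}
  let owner : ι → W := Sum.elim (fun p => p.1) (Sum.elim (fun p => p.1.1) (fun p => p.1.1))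
  let dst : ι → V := Sum.elim (fun p => ρ (p.1, ⟨p.2.1, p.2.2.trans hℓ⟩))
    (Sum.elim (fun p => ρ p.1) (fun p => ρ (p.1.2, z)))
  have hι : Fintype.card ι ≤ c := by
    refine le_trans (le_of_eq ?_) hcount
    simp [ι]
    ring
  obtain ⟨y, hyinj, hy⟩ := (Finset.all_card_le_biUnion_card_iff_exists_injective
    (fun i : ι => C (ρ (owner i, z)) (dst i))).1 (by
      intro S
      rcases S.eq_empty_or_nonempty with rfl | ⟨i, hi⟩
      · simp
      · exact ((Finset.card_le_univ S).trans hι).trans ((hc _ _).trans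
          (Finset.card_le_card (Finset.subset_biUnion_of_mem
            (fun i : ι => C (ρ (owner i, z)) (dst i)) hi))))
  have hy1 : ∀ i, G.Adj (ρ (owner i, z)) (y i) := fun i => (hC _ _ _ (hy i)).1
  have hy2 : ∀ i, G.Adj (dst i) (y i) := fun i => (hC _ _ _ (hy i)).2.1
  have hy3 : ∀ i, y i ∉ X := fun i => (hC _ _ _ (hy i)).2.2
  let B : W → Set V := fun w => {v | (∃ j, v = ρ (w, j)) ∨ ∃ i, owner i = w ∧ v = y i}
  have hBρ : ∀ w j, ρ (w, j) ∈ B w := fun w j => Or.inl ⟨j, rfl⟩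
  have hBy : ∀ i, y i ∈ B (owner i) := fun i => Or.inr ⟨i, rfl, rfl⟩
  refine ⟨B, fun w => ?_, fun w w' hww => ?_, fun w w' hadj => ?_⟩
  · -- every vertex of the branch set reaches the root
    have step : ∀ u v (hu : u ∈ B w) (hv : v ∈ B w), G.Adj u v →
        (G.induce (B w)).Reachable ⟨u, hu⟩ ⟨v, hv⟩ := fun u v hu hv h =>
      Adj.reachable (G := G.induce (B w)) (u := ⟨u, hu⟩) (v := ⟨v, hv⟩) h
    have hconn : ∀ i (hi : owner i = w),
        (G.induce (B w)).Reachable ⟨y i, hi ▸ hBy i⟩ ⟨ρ (w, z), hBρ w z⟩ := by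
      rintro i rfl
      exact step _ _ _ _ (hy1 i).symm
    have hdst : ∀ i j (_ : owner i = w) (_ : dst i = ρ (w, j)),
        (G.induce (B w)).Reachable ⟨ρ (w, j), hBρ w j⟩ ⟨ρ (w, z), hBρ w z⟩ := by
      intro i j hi hj
      refine (step _ (y i) _ (hi ▸ hBy i) ?_).trans (hconn i hi)
      rw [← hj]
      exact hy2 i
    have hfirst : ∀ j : Fin s, j.1 < ℓ →
        (G.induce (B w)).Reachable ⟨ρ (w, j), hBρ w j⟩ ⟨ρ (w, z), hBρ w z⟩ := fun j hj =>
      hdst (Sum.inl (w, ⟨j.1, hj⟩)) j rfl rfl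
    have hall : ∀ v (hv : v ∈ B w),
        (G.induce (B w)).Reachable ⟨v, hv⟩ ⟨ρ (w, z), hBρ w z⟩ := by
      rintro v (⟨j, rfl⟩ | ⟨i, hi, rfl⟩)
      · by_cases hl : (w, j) ∈ loose
        · exact hdst (Sum.inr (Sum.inl ⟨_, hl⟩)) j rfl rfl
        · obtain ⟨j', hj', h | h⟩ := hloose _ hl
          · exact (step _ _ _ (hBρ w j') h).trans (hfirst j' hj')
          · subst h
            exact hfirst _ hj'
      · exact hconn i hi
    have : Nonempty (B w) := ⟨⟨_, hBρ w z⟩⟩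
    exact ⟨fun u v => (hall _ u.2).trans (hall _ v.2).symm⟩
  · refine Set.disjoint_left.2 ?_
    rintro v (⟨j, rfl⟩ | ⟨i, rfl, rfl⟩) (⟨j', h⟩ | ⟨i', rfl, h⟩)
    · exact hww (Prod.ext_iff.1 (hρ h)).1
    · exact hy3 i' (h ▸ hX _)
    · exact hy3 i (h ▸ hX _)
    · exact hww (congrArg owner (hyinj h))
  · by_cases hm : (w, w') ∈ missing
    · exact ⟨_, hBy (Sum.inr (Sum.inr ⟨_, hm⟩)), _, hBρ w' z,
        (hy2 (Sum.inr (Sum.inr ⟨_, hm⟩))).symm⟩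
    · obtain ⟨x, x', h⟩ := hmissing w w' hadj hm
      exact ⟨_, hBρ w x, _, hBρ w' x', h⟩

/-- The number of ordered pairs of adjacent vertices is twice the number of edges. -/
theorem card_adj_pairs {W : Type*} [Fintype W] (H : SimpleGraph W) [DecidableRel H.Adj] :
    ((Finset.univ : Finset (W × W)).filter fun p => H.Adj p.1 p.2).card =
      2 * H.edgeSet.ncard := by
  classical
  rw [two_mul_ncard_edgeSet, Finset.card_filter, Fintype.sum_prod_type]
  refine Finset.sum_congr rfl fun v _ => ?_
  rw [← Finset.card_filter, Set.ncard_eq_toFinset_card']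
  congr 1
  ext
  simp

/-- The random construction, with all estimates left as hypotheses: `k` blocks of size `s` are
placed in `X`, the vertices of `H` are assigned to good blocks, and the blocks are completed by
connectors outside `X`. -/
theorem minor_of_dense {V W : Type*} [Fintype V] [DecidableEq V] [Fintype W] [Nonempty W]
    (G : SimpleGraph V) (H : SimpleGraph W) (X : Finset V) (k s ℓ r M : ℕ)
    (hs : 0 < s) (hℓ : ℓ < s) (hM0 : 0 < M) (hM : M + 2 * s ≤ X.card) (hks : k * s ≤ X.card)
    (hr : ∀ v, {x | x ∈ X ∧ ¬ G.Adj v x}.ncard ≤ r)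
    (a μ κ : ℝ) (ha : 0 < a) (hμ0 : 0 < μ) (hκ0 : 0 < κ) (hra : ((r : ℝ) / M) ^ s ≤ a)
    (hμ : (1000 * X.card * a / M) ^ s ≤ μ) (hκ : ((r : ℝ) / M) ^ ℓ ≤ κ)
    (hk : 1.02 * (Fintype.card W : ℝ) ≤ k) (hk100 : 100 ≤ k)
    (c : ℕ) (C : V → V → Finset V) (hC : ∀ u v, ∀ x ∈ C u v, G.Adj u x ∧ G.Adj v x ∧ x ∉ X)
    (hc : ∀ u v, c ≤ (C u v).card)
    (hcount : ℓ * Fintype.card W + 10 * κ * (k * s) + 21 * μ * (2 * H.edgeSet.ncard) ≤ (c : ℝ)) :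
    H.IsMinorOf G := by
  classical
  have : NeZero k := ⟨by omega⟩
  obtain ⟨φ⟩ : Nonempty (Fin k × Fin s ↪ X) := Function.Embedding.nonempty_of_card_le (by simpa)
  obtain ⟨ψ, good, hgood, hloose, hmiss⟩ := exists_blocks (G.induce (X : Set V)) s ℓ r M φ hs hℓ hM0
    (by simpa using hM) (by
      intro v
      refine le_trans ?_ (hr v)
      rw [← Set.ncard_image_of_injective _ Subtype.val_injective]
      refine Set.ncard_le_ncard ?_ (Set.toFinite _)
      rintro _ ⟨x, hx, rfl⟩
      exact ⟨x.2, hx⟩) a μ κ ha hμ0 hκ0 hra (by simpa using hμ) hκ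
  simp only [Fintype.card_fin] at hgood hloose hmiss
  have hkr : (100 : ℝ) ≤ k := by exact_mod_cast hk100
  set g := Fintype.card good with hg
  have hgk : 0.99 * (k : ℝ) ≤ g := by
    have h1 : good.ncard + goodᶜ.ncard = k := by
      simpa using Set.ncard_add_ncard_compl good
    have h2 : good.ncard = g := by
      rw [hg, ← Nat.card_coe_set_eq, Nat.card_eq_fintype_card]
    have h3 : (g : ℝ) + goodᶜ.ncard = k := by rw [← h2]; exact_mod_cast h1
    linarith
  obtain ⟨e⟩ : Nonempty (W ↪ good) := Function.Embedding.nonempty_of_card_le (by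
    have : (Fintype.card W : ℝ) ≤ g := by
      have : (0 : ℝ) ≤ Fintype.card W := by positivity
      linarith
    exact_mod_cast this)
  let P : Finset (W × W) := Finset.univ.filter fun p => H.Adj p.1 p.2
  let Q : Finset (good × good) := Finset.univ.filter fun q =>
    ∀ x y, ¬ (G.induce (X : Set V)).Adj (ψ (q.1.1, x)) (ψ (q.2.1, y))
  obtain ⟨f, hf⟩ := exists_embedding_few e P
    (fun p hp => (Finset.mem_filter.1 hp).2.ne) Q
  have hQ : ((Q.filter fun q => q.1 ≠ q.2).card : ℝ) ≤ 10 * μ * k ^ 2 := by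
    refine le_trans ?_ hmiss
    rw [Set.ncard_eq_toFinset_card']
    refine Nat.cast_le.2 (Finset.card_le_card_of_injOn (fun q => (q.1.1, q.2.1)) ?_ ?_)
    · rintro ⟨i, j⟩ h
      simp only [Q, Finset.coe_filter, Finset.mem_filter, Finset.mem_univ, true_and,
        Set.mem_ofPred_eq, Set.coe_toFinset] at h ⊢
      exact ⟨fun h' => h.2 (Subtype.ext h'), i.2, h.1⟩
    · rintro ⟨i, j⟩ - ⟨i', j'⟩ - h
      simp only [Prod.mk.injEq] at h
      exact Prod.ext (Subtype.ext h.1) (Subtype.ext h.2)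
  let missing : Finset (W × W) := P.filter fun p => (f p.1, f p.2) ∈ Q
  have hmissing : (missing.card : ℝ) ≤ 21 * μ * (2 * H.edgeSet.ncard) := by
    have hg1 : 1 ≤ g := by
      have : (1 : ℝ) ≤ g := by linarith
      exact_mod_cast this
    have h1 : (missing.card : ℝ) * (g * (g - 1)) ≤ P.card * (10 * μ * k ^ 2) := by
      have : (missing.card : ℝ) * (g * (g - 1)) ≤
          P.card * ((Q.filter fun q => q.1 ≠ q.2).card : ℝ) := by
        have h := (Nat.cast_le (α := ℝ)).2 hf
        rw [← hg] at h
        push_cast [Nat.cast_sub hg1] at h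
        exact h
      exact this.trans (by gcongr)
    have h2 : (P.card : ℝ) = 2 * H.edgeSet.ncard := by
      exact_mod_cast card_adj_pairs H
    rw [h2] at h1
    have h3 : (k : ℝ) ^ 2 ≤ 2.1 * (g * (g - 1)) := by
      nlinarith [mul_le_mul hgk hgk (by positivity) (by positivity)]
    have hgpos : (0 : ℝ) < g * (g - 1) := by nlinarith
    refine le_of_mul_le_mul_right (h1.trans ?_) hgpos
    have h4 : 0 ≤ 10 * μ * (2 * (H.edgeSet.ncard : ℝ)) := by positivity
    nlinarith [mul_le_mul_of_nonneg_left h3 h4]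
  let loose : Finset (W × Fin s) := Finset.univ.filter fun p => ∀ j : Fin s, j.1 < ℓ →
    ¬ (G.induce (X : Set V)).Adj (ψ ((f p.1).1, p.2)) (ψ ((f p.1).1, j)) ∧ j ≠ p.2
  have hloose' : (loose.card : ℝ) ≤ 10 * κ * (k * s) := by
    refine le_trans ?_ hloose
    rw [Set.ncard_eq_toFinset_card']
    refine Nat.cast_le.2 (Finset.card_le_card_of_injOn (fun p => ((f p.1).1, p.2)) ?_ ?_)
    · rintro ⟨i, j⟩ h
      simpa [loose] using h
    · rintro ⟨i, j⟩ - ⟨i', j'⟩ - h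
      simp only [Prod.mk.injEq] at h
      exact Prod.ext (f.injective (Subtype.ext h.1)) h.2
  refine minor_of_blocks G H X s ℓ hs hℓ (fun p => (ψ ((f p.1).1, p.2) : V)) ?_ (fun p => (ψ _).2)
    loose missing ?_ ?_ c C hC hc ?_
  · rintro ⟨i, j⟩ ⟨i', j'⟩ h
    have h1 := ψ.injective (Subtype.val_injective h)
    simp only [Prod.mk.injEq] at h1
    exact Prod.ext (f.injective (Subtype.ext h1.1)) h1.2
  · intro p hp
    simp only [loose, Finset.mem_filter, Finset.mem_univ, true_and, not_forall] at hp
    obtain ⟨j, hj, h⟩ := hp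
    refine ⟨j, hj, ?_⟩
    by_cases h' : j = p.2
    · exact Or.inr h'
    · left
      by_contra h''
      exact h ⟨h'', h'⟩
  · intro w w' h hm
    simp only [missing, P, Q, Finset.mem_filter, Finset.mem_univ, true_and, not_and, not_forall,
      not_not] at hm
    exact hm h
  · have : ((ℓ * Fintype.card W + loose.card + missing.card : ℕ) : ℝ) ≤ c := by
      push_cast
      linarith
    exact_mod_cast this

/-! ### The numerical estimates -/

/-- The first two terms of the logarithmic series. -/
theorem one_sub_le_exp {p : ℝ} (h0 : 0 ≤ p) (h1 : p ≤ 1) :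
    1 - p ≤ Real.exp (-(p + p ^ 2 / 2)) := by
  rcases h1.eq_or_lt with rfl | h1
  · simpa using (Real.exp_pos _).le
  have h := Real.hasSum_pow_div_log_of_abs_lt_one (by rwa [abs_of_nonneg h0] : |p| < 1)
  have h2 := sum_le_hasSum (Finset.range 2) (fun i _ => by positivity) h
  norm_num [Finset.sum_range_succ] at h2
  rw [← Real.log_le_iff_le_exp (by linarith)]
  linarith

/-- The estimates behind the choice of the parameters. Here `p` is the density with which every
vertex sees `X`, and the block size `s` satisfies `s * p ≥ 0.939 * L - 1`; the crucial point is
that `s * s * (p + p ^ 2 / 2) ≥ (3 / 2) * (s * p) ^ 2` exceeds `1.3 * L ^ 2`. -/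
theorem estimates (L t k N M r : ℝ) (s : ℕ) (hL : 10 ^ 5 ≤ L) (ht : 10 ^ 5 * L ≤ t)
    (hk1 : 1.02 * t ≤ k) (hk2 : k ≤ 1.03 * t) (hN1 : 0.24831 * (3.895 * L * t) ≤ N)
    (hN2 : N ≤ 3.895 * L * t / 2) (hs1 : k * s ≤ N) (hs2 : N ≤ k * (s + 1)) (hM : M = N - 2 * s)
    (hr0 : 0 ≤ r) (hr : r ≤ N - 0.24831 * (3.895 * L * t)) :
    20 < (s : ℝ) ∧ (s : ℝ) ≤ 2 * L ∧ 0 < M ∧ (r / M) ^ 20 ≤ 1 / 10 ^ 4 ∧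
      ∃ a : ℝ, 0 < a ∧ (r / M) ^ s ≤ a ∧ (1000 * N * a / M) ^ s ≤ Real.exp (-(1.2 * L ^ 2)) := by
  have hL0 : 0 < L := by linarith
  have ht0 : 0 < t := by nlinarith
  have hk0 : 0 < k := by linarith
  set δ := 0.24831 * (3.895 * L * t) with hδ
  have hδ0 : 0 < δ := by positivity
  have hN0 : 0 < N := by linarith
  have hkL1 : 1.02 * t * L ≤ k * L := mul_le_mul_of_nonneg_right hk1 hL0.le
  have hkL2 : k * L ≤ 1.03 * t * L := mul_le_mul_of_nonneg_right hk2 hL0.le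
  have hLt : 10 ^ 5 * L * L ≤ t * L := mul_le_mul_of_nonneg_right ht hL0.le
  have hLL : 10 ^ 5 * L ≤ L * L := mul_le_mul_of_nonneg_right hL hL0.le
  have hsL : (s : ℝ) ≤ 2 * L := by
    have : k * s ≤ k * (2 * L) := by linarith
    exact le_of_mul_le_mul_left this hk0
  have hslow : 0.9389 * L - 1 ≤ s := by
    have : k * (0.9389 * L) ≤ k * (s + 1) := by
      refine le_trans ?_ (hN1.trans hs2)
      linarith
    have := le_of_mul_le_mul_left this hk0
    linarith
  have hs0 : (0 : ℝ) < s := by linarith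
  have h8 : 10000 * (s : ℝ) ≤ k := by linarith
  have hNs : 10000 * (s : ℝ) ≤ N := by linarith
  have hM0 : 0 < M := by rw [hM]; linarith
  set p := δ / N with hp
  have hpN : p * N = δ := div_mul_cancel₀ _ hN0.ne'
  have hp0 : 0 < p := by positivity
  have hp1 : p ≤ 1 := (div_le_one hN0).2 hN1
  have hphalf : 0.49 ≤ p := by
    rw [hp, le_div_iff₀ hN0]; linarith
  have hrN : r ≤ (1 - p) * N := by rw [sub_mul, hpN]; linarith
  -- replacing `N` by `M` in the denominator costs a constant factor after `s` multiplications
  have hNM : N / M ≤ Real.exp (1 / s) := by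
    have h1 : N ≤ M * (1 + 1 / s) := by
      have : (2 * (s : ℝ)) * (s + 1) ≤ (2 * (2 * L)) * (3 * L) := by gcongr; linarith
      have : 2 * (s : ℝ) * (s + 1) ≤ N := by linarith
      have e : M * (1 + 1 / s) - N = (N - 2 * s * (s + 1)) / s := by
        rw [hM]; field_simp; ring
      have : 0 ≤ (N - 2 * s * (s + 1)) / s := div_nonneg (by linarith) hs0.le
      linarith
    rw [div_le_iff₀ hM0]
    have := mul_le_mul_of_nonneg_left (Real.add_one_le_exp (1 / (s : ℝ))) hM0.le
    linarith
  have hNM' : N / M ≤ Real.exp 1 := hNM.trans (Real.exp_le_exp.2 (by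
    rw [div_le_one hs0]; linarith))
  have hrM : r / M ≤ Real.exp (-(p + p ^ 2 / 2) + 1 / s) := by
    calc r / M ≤ (1 - p) * N / M := by gcongr
      _ = (1 - p) * (N / M) := by ring
      _ ≤ Real.exp (-(p + p ^ 2 / 2)) * Real.exp (1 / s) :=
        mul_le_mul (one_sub_le_exp hp0.le hp1) hNM (by positivity) (Real.exp_pos _).le
      _ = _ := (Real.exp_add _ _).symm
  refine ⟨by linarith, hsL, hM0, ?_, Real.exp (1 - s * (p + p ^ 2 / 2)), Real.exp_pos _, ?_, ?_⟩
  · have h1 : r / M ≤ 0.6 := by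
      have := mul_le_mul_of_nonneg_right hphalf hN0.le
      rw [div_le_iff₀ hM0, hM]
      linarith
    calc (r / M) ^ 20 ≤ 0.6 ^ 20 := by gcongr
      _ ≤ _ := by norm_num
  · calc (r / M) ^ s ≤ Real.exp (-(p + p ^ 2 / 2) + 1 / s) ^ s := by gcongr
      _ = Real.exp (1 - s * (p + p ^ 2 / 2)) := by
        rw [← Real.exp_nat_mul]
        congr 1
        field_simp
        ring
  · have h1000 : (1000 : ℝ) ≤ Real.exp 7 := by
      have := Real.exp_one_gt_d9
      calc (1000 : ℝ) ≤ 2.7182818283 ^ 7 := by norm_num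
        _ ≤ Real.exp 1 ^ 7 := by gcongr
        _ = Real.exp 7 := by rw [← Real.exp_nat_mul]; norm_num
    have hb : 0.9389 * L - 1 ≤ s * p := by
      have h1 : k * (0.9389 * L) ≤ δ := by linarith
      have h2 : δ ≤ k * (s * p + 1) := by
        calc δ = p * N := hpN.symm
          _ ≤ p * (k * (s + 1)) := by gcongr
          _ = k * (s * p) + k * p := by ring
          _ ≤ k * (s * p) + k * 1 := by gcongr
          _ = _ := by ring
      have := le_of_mul_le_mul_left (h1.trans h2) hk0
      linarith
    have hmain : 1.3 * L ^ 2 ≤ s * (s * (p + p ^ 2 / 2)) := by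
      have h1 : (0.9389 * L - 1) ^ 2 ≤ (s * p) ^ 2 := by gcongr; linarith
      have h2 : 1.5 * (s * p) ^ 2 ≤ s * (s * (p + p ^ 2 / 2)) := by
        have h3 : p ^ 2 ≤ p := by rw [sq]; exact mul_le_of_le_one_left hp0.le hp1
        have := mul_le_mul_of_nonneg_left h3 (sq_nonneg (s : ℝ))
        linarith
      linarith
    calc (1000 * N * Real.exp (1 - s * (p + p ^ 2 / 2)) / M) ^ s
        = (1000 * (N / M) * Real.exp (1 - s * (p + p ^ 2 / 2))) ^ s := by ring
      _ ≤ (Real.exp 7 * Real.exp 1 * Real.exp (1 - s * (p + p ^ 2 / 2))) ^ s := by gcongr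
      _ = Real.exp (9 * s - s * (s * (p + p ^ 2 / 2))) := by
        rw [← Real.exp_add, ← Real.exp_add, ← Real.exp_nat_mul]
        congr 1
        ring
      _ ≤ _ := Real.exp_le_exp.2 (by linarith)

/-- The case of a very dense graph on few vertices: `H` has `t` vertices and average degree
`exp (L ^ 2)`, and all degrees of `G` are at least `0.279 / 0.5` times the number of vertices. -/
theorem minor_of_very_dense {V W : Type*} [Fintype V] [Fintype W] [Nonempty W]
    (G : SimpleGraph V) (H : SimpleGraph W) (L t D : ℝ) (hL : 10 ^ 20 ≤ L)
    (ht : t = Fintype.card W) (hLt : Real.exp (L ^ 2) ≤ t) (hD : D = 3.895 * L * t)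
    (hH : (2 * H.edgeSet.ncard : ℝ) = Real.exp (L ^ 2) * t)
    (hn1 : 0.28 * D ≤ Fintype.card V) (hn2 : (Fintype.card V : ℝ) ≤ D / 2)
    (hdeg : ∀ x, 0.279 * D ≤ (G.neighborSet x).ncard) :
    H.IsMinorOf G := by
  classical
  have hL0 : 0 < L := by linarith
  have htL : 10 ^ 20 * L ≤ t := by
    have := Real.add_one_le_exp (L ^ 2)
    nlinarith
  have ht0 : 0 < t := by linarith
  have hD0 : 10 ^ 20 ≤ D := by rw [hD]; nlinarith
  have hN : ∀ x, 0.279 * D ≤ (G.neighborFinset x).card := by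
    intro x
    have := hdeg x
    rwa [Set.ncard_eq_toFinset_card'] at this
  have hcom : ∀ x y, 0.058 * D ≤ (G.neighborFinset x ∩ G.neighborFinset y).card := by
    intro x y
    have h1 := Finset.card_union_add_card_inter (G.neighborFinset x) (G.neighborFinset y)
    have h2 : ((G.neighborFinset x ∪ G.neighborFinset y).card : ℝ) ≤ Fintype.card V :=
      Nat.cast_le.2 (Finset.card_le_univ _)
    have h3 : ((G.neighborFinset x ∪ G.neighborFinset y).card : ℝ) +
        (G.neighborFinset x ∩ G.neighborFinset y).card =
        (G.neighborFinset x).card + (G.neighborFinset y).card := by exact_mod_cast h1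
    have := hN x
    have := hN y
    linarith
  -- split the vertex set: nine tenths for the blocks, one tenth for the connectors
  obtain ⟨X, hX1, hX2⟩ := exists_split (fun x => G.neighborFinset x)
    (fun p : V × V => G.neighborFinset p.1 ∩ G.neighborFinset p.2) (0.058 * D)
    (fun x => by have := hN x; linarith) (fun p => hcom p.1 p.2) (by
      rw [Fintype.card_prod]
      push_cast
      set n : ℝ := (Fintype.card V : ℝ)
      set x := 0.058 * D / 20000 with hx
      have hn0 : 0 ≤ n := by linarith
      have h1 : x ^ 3 / 6 ≤ Real.exp x := by
        have := Real.pow_div_factorial_le_exp x (by linarith) 3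
        simpa [Nat.factorial] using this
      have h2 : n + n * n < x ^ 3 / 6 := by
        have h3 : n * n ≤ D / 2 * (D / 2) := by gcongr
        have h4 : 10 ^ 20 * D ≤ D * D := by gcongr
        have h5 : 10 ^ 20 * (D * D) ≤ D * (D * D) := by gcongr
        have h6 : x ^ 3 / 6 = (0.058 / 20000) ^ 3 / 6 * (D * (D * D)) := by rw [hx]; ring
        rw [h6]
        norm_num at *
        linarith
      rw [Real.exp_neg, ← div_eq_mul_inv, div_lt_one (Real.exp_pos _)]
      linarith)
  set N := X.card with hNdef
  have hN2 : (N : ℝ) ≤ D / 2 := le_trans (Nat.cast_le.2 (Finset.card_le_univ _)) hn2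
  have hdegX : ∀ x, 0.24831 * D ≤ (G.neighborFinset x ∩ X).card := by
    intro x
    have := hX1 x
    have := hN x
    linarith
  have : Nonempty V := by
    rw [← Fintype.card_pos_iff]
    have : (0 : ℝ) < Fintype.card V := by linarith
    exact_mod_cast this
  have hN1 : 0.24831 * D ≤ N := by
    obtain ⟨x⟩ := this
    exact (hdegX x).trans (Nat.cast_le.2 (Finset.card_le_card Finset.inter_subset_right))
  -- slightly more blocks than vertices of `H`, since one percent of the blocks may be bad
  let k := ⌈1.02 * t⌉₊
  have hk1 : 1.02 * t ≤ k := Nat.le_ceil _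
  have hk2 : (k : ℝ) ≤ 1.03 * t := by
    have : (k : ℝ) < 1.02 * t + 1 := Nat.ceil_lt_add_one (by positivity)
    linarith
  have hk0 : 0 < k := Nat.ceil_pos.2 (by positivity)
  let s := N / k
  have hs1 : k * s ≤ N := Nat.mul_div_le N k
  have hs2 : N ≤ k * (s + 1) := (Nat.lt_mul_div_succ N hk0).le
  let r := ⌊N - 0.24831 * D⌋₊
  have hr : (r : ℝ) ≤ N - 0.24831 * D := Nat.floor_le (by linarith)
  let M := N - 2 * s
  -- every vertex has at most `r` non-neighbours in `X`; at least `M` places of `X` stay free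
  -- while two blocks are being placed
  obtain ⟨e1, e2, e3, e4, a, e5, e6, e7⟩ := estimates L t k N (N - 2 * s) r s
    (by linarith) (by linarith) hk1 hk2 (by rw [← hD]; exact hN1) (by rw [← hD]; exact hN2)
    (by exact_mod_cast hs1) (by exact_mod_cast hs2) rfl (by positivity) (by rw [← hD]; exact hr)
  have hsN : 2 * s < N := by
    have : 2 * (s : ℝ) < N := by linarith
    exact_mod_cast this
  have hMcast : (M : ℝ) = N - 2 * s := by
    simp only [M]
    rw [Nat.cast_sub hsN.le]
    push_cast
    rfl
  rw [← hMcast] at e4 e6 e7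
  -- `20` vertices of a block are enough to see all but a small proportion of the vertices
  refine minor_of_dense G H X k s 20 r M ?_ ?_ (by omega) (by omega) hs1 ?_ a
    (Real.exp (-(1.2 * L ^ 2))) (1 / 10 ^ 4) e5 (Real.exp_pos _) (by norm_num) e6 e7 e4
    (by rw [← ht]; exact hk1) ?_ ⌈0.00522 * D⌉₊
    (fun u v => (G.neighborFinset u ∩ G.neighborFinset v) ∩ Xᶜ) ?_ ?_ ?_
  · have : (0 : ℝ) < s := by linarith
    exact_mod_cast this
  · exact_mod_cast e1
  · intro v
    refine Nat.le_floor ?_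
    have h1 : {x | x ∈ X ∧ ¬ G.Adj v x}.ncard = (X \ G.neighborFinset v).card := by
      rw [Set.ncard_eq_toFinset_card']
      congr 1
      ext
      simp
    have h2 := Finset.card_sdiff_add_card_inter X (G.neighborFinset v)
    rw [Finset.inter_comm] at h2
    have h3 : ((X \ G.neighborFinset v).card : ℝ) + (G.neighborFinset v ∩ X).card = N := by
      exact_mod_cast h2
    rw [h1]
    have := hdegX v
    linarith
  · have : (100 : ℝ) ≤ k := by linarith
    exact_mod_cast this
  · intro u v x hx
    simp only [Finset.mem_inter, mem_neighborFinset, Finset.mem_compl] at hx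
    exact ⟨hx.1.1, hx.1.2, hx.2⟩
  · intro u v
    refine Nat.ceil_le.2 ?_
    have hX3 := hX2 (u, v)
    have := hcom u v
    exact le_trans (by linarith) hX3
  · refine le_trans ?_ (Nat.le_ceil _)
    rw [hH, ← ht, hD]
    have h1 : Real.exp (-(1.2 * L ^ 2)) * (Real.exp (L ^ 2) * t) ≤ t := by
      rw [← mul_assoc, ← Real.exp_add]
      refine mul_le_of_le_one_left ht0.le (Real.exp_le_one_iff.2 ?_)
      nlinarith
    have h2 : (k : ℝ) * s ≤ 1.03 * t * (2 * L) := by gcongr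
    have h3 : 10 ^ 20 * t ≤ L * t := by gcongr
    push_cast
    linarith

end SparseMinor

/-- There is an absolute constant `d₀` such that for every graph `H` with `t` vertices and
average degree `d ≥ d₀`, every graph `G` with average degree at least `3.895·√(ln d)·t`
contains `H` as a minor. -/
theorem forcing_a_sparse_minor :
    ∃ d₀ : ℝ, ∀ (W : Type) [Fintype W] [Nonempty W] (H : SimpleGraph W)
      (V : Type) [Fintype V] [Nonempty V] (G : SimpleGraph V),
      d₀ ≤ H.averageDegree →
      3.895 * Real.sqrt (Real.log H.averageDegree) * (Nat.card W : ℝ) ≤ G.averageDegree →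
      H.IsMinorOf G := by
  refine ⟨Real.exp ((10 ^ 20) ^ 2), fun W _ _ H V _ _ G hd hG => ?_⟩
  set d := H.averageDegree with hdd
  have hd0 : 0 < d := (Real.exp_pos _).trans_le hd
  have hlog : (10 ^ 20) ^ 2 ≤ Real.log d := (Real.le_log_iff_exp_le hd0).2 hd
  set L := Real.sqrt (Real.log d) with hLdef
  have hL : 10 ^ 20 ≤ L := Real.le_sqrt_of_sq_le hlog
  have hexp : Real.exp (L ^ 2) = d := by
    rw [hLdef, Real.sq_sqrt ((by positivity : (0 : ℝ) ≤ (10 ^ 20) ^ 2).trans hlog),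
      Real.exp_log hd0]
  rw [Nat.card_eq_fintype_card] at hG
  set t : ℝ := (Fintype.card W : ℝ) with ht
  have ht0 : 0 < t := Nat.cast_pos.2 Fintype.card_pos
  have hH : (2 * H.edgeSet.ncard : ℝ) = d * t := by
    rw [hdd, SimpleGraph.averageDegree, Nat.card_eq_fintype_card, div_mul_cancel₀ _ ht0.ne']
  -- `H` has more vertices than its average degree
  have hdt : d ≤ t := by
    have h1 : 2 * H.edgeSet.ncard ≤ Fintype.card W * Fintype.card W :=
      (SparseMinor.ncard_edgeSet_le H).trans (Nat.mul_le_mul_left _ (Nat.sub_le _ _))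
    have h2 : (2 * H.edgeSet.ncard : ℝ) ≤ t * t := by rw [ht]; exact_mod_cast h1
    rw [hH] at h2
    exact le_of_mul_le_mul_right h2 ht0
  have ht1 : 1 ≤ t := by rw [ht]; exact_mod_cast Fintype.card_pos
  obtain ⟨U, _, K, hK, hn1, hn2, hdeg⟩ := SparseMinor.exists_very_dense_minor G (3.895 * L * t)
    (by nlinarith) (by
      rw [SimpleGraph.averageDegree, Nat.card_eq_fintype_card,
        le_div_iff₀ (Nat.cast_pos.2 Fintype.card_pos)] at hG
      exact hG)
  exact SparseMinor.minor_trans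
    (SparseMinor.minor_of_very_dense K H L t _ hL ht (hexp.trans_le hdt) rfl
      (by rw [hexp, hH]) hn1 hn2 hdeg) hK
end

section
/- For every simple graph H with t vertices and q edges, every simple graph G with average degree at least t + 6.291·q contains H as a minor. -/
open SimpleGraph

/-!
Write `t` and `q` for the numbers of vertices and edges of `H`. The proof gives more than is
asked: average degree `d ≥ t + 6 q` already suffices.

*Reduction to a dense neighbourhood* (`isMinorOf_of_average`). Pass to a minor of `G` in which no
edge deletion, edge contraction or deletion of an isolated vertex keeps the average degree at
least `d`. Contracting an edge `xy` loses one edge plus one for each common neighbour of `x` and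
`y` (`ncard_edgeSet_le_contract`), so every edge lies in more than `d / 2 - 1` triangles, and a
vertex `v` of minimum degree has fewer than `d + 1` neighbours. In the graph induced on `v` and its
neighbours all degrees are then at least `δ = ⌊d / 2⌋ + 1`, while there are at most `2 δ + 1`
vertices (`isMinorOf_of_dense_neighborhood`). Isolated vertices of `H` are placed at the end on
unused vertices of `G`.

*Embedding in a dense graph* (`starMinor_of_no_isolated`). Let all degrees of `G` be at least
`δ`, let `G` have at most `2 δ + 1` vertices, and let `H` have no isolated vertices. Models whose
branch sets are stars, with at most `t + 2 q` vertices in total, are built component by component,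
each one avoiding what has been used before.

Components with two or three vertices are edges, paths and triangles, and are found by hand: a
triangle costs a cycle of length at most four (`exists_short_cycle`).

When all components have at least four vertices (`starMinor_of_large_components`), a spanning
forest of `H` has at least `3 t / 4` edges. Embed it greedily, which leaves at most `q - 3 t / 4`
edges of `H`, and realise these one at a time by paths with at most two inner vertices. If this
gets stuck at the images `u`, `w` of two adjacent vertices of `H`, the sets `P` and `Q` of unused
neighbours of `u` and of `w` are disjoint with no edge between them. Two nonadjacent vertices of
`P` then have both neighbourhoods outside `Q`, and `2 δ + 1 ≥ |V|` forces them to have more than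
`|Q|` common neighbours. So all of `H` can be embedded in `P` afresh, with a single connecting
vertex for each edge.
-/

/-! ### Star models -/

/-- `StarMinor H G U s`: there is a minor model of `H` in `G` whose branch sets `B w` are spanned by
stars with centres `f w`, avoid the vertices in `U`, and have at most `s` vertices in total. -/
def StarMinor {W V : Type*} [Fintype W] [DecidableEq V]
    (H : SimpleGraph W) (G : SimpleGraph V) (U : Finset V) (s : ℕ) : Prop :=
  ∃ (f : W → V) (B : W → Finset V),
    (∀ w, f w ∈ B w) ∧
    (∀ w, ∀ b ∈ B w, b = f w ∨ G.Adj (f w) b) ∧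
    (∀ w₁ w₂, w₁ ≠ w₂ → Disjoint (B w₁) (B w₂)) ∧
    (∀ w, Disjoint (B w) U) ∧
    (Finset.univ.biUnion B).card ≤ s ∧
    ∀ w₁ w₂, H.Adj w₁ w₂ → ∃ a ∈ B w₁, ∃ b ∈ B w₂, G.Adj a b

lemma star_connected {V : Type*} (G : SimpleGraph V) (c : V) (B : Set V) (hc : c ∈ B)
    (hB : ∀ b ∈ B, b = c ∨ G.Adj c b) : (G.induce B).Connected := by
  rw [connected_iff_exists_forall_reachable]
  refine ⟨⟨c, hc⟩, ?_⟩
  rintro ⟨b, hb⟩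
  rcases hB b hb with rfl | h
  · exact Reachable.refl _
  · exact Adj.reachable (by simpa using h)

lemma StarMinor.isMinorOf {W V : Type*} [Fintype W] [DecidableEq V]
    {H : SimpleGraph W} {G : SimpleGraph V} {U : Finset V} {s : ℕ}
    (h : StarMinor H G U s) : H.IsMinorOf G := by
  obtain ⟨f, B, hf, hs, hd, -, -, he⟩ := h
  refine ⟨fun w => (B w : Set V), fun w => star_connected G (f w) _ (hf w) (hs w), ?_, ?_⟩
  · intro w₁ w₂ hne
    exact Finset.disjoint_coe.2 (hd w₁ w₂ hne)
  · intro w₁ w₂ hadj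
    simpa using he w₁ w₂ hadj

lemma StarMinor.of_isEmpty {W V : Type*} [Fintype W] [DecidableEq V] [IsEmpty W]
    (H : SimpleGraph W) (G : SimpleGraph V) (U : Finset V) (s : ℕ) : StarMinor H G U s :=
  ⟨isEmptyElim, isEmptyElim, isEmptyElim, isEmptyElim, isEmptyElim, isEmptyElim, by simp,
    isEmptyElim⟩

/-- A star model in an induced subgraph is a star model in the whole graph. -/
lemma StarMinor.of_induce {W V : Type*} [Fintype W] [DecidableEq V]
    {H : SimpleGraph W} {G : SimpleGraph V} {S : Set V} {s : ℕ}
    (h : StarMinor H (G.induce S) ∅ s) : StarMinor H G ∅ s := by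
  obtain ⟨f, B, hf, hs, hd, -, hc, he⟩ := h
  refine ⟨fun w => f w, fun w => (B w).map (Function.Embedding.subtype _), ?_, ?_, ?_, ?_, ?_, ?_⟩
  · intro w; simpa using hf w
  · intro w b hb
    simp only [Finset.mem_map, Function.Embedding.subtype_apply] at hb
    obtain ⟨b, hb, rfl⟩ := hb
    rcases hs w b hb with rfl | h
    · simp
    · right; simpa using h
  · intro a b hab
    rw [Finset.disjoint_map]
    exact hd a b hab
  · simp
  · have : (Finset.univ.biUnion fun w => (B w).map (Function.Embedding.subtype _))
        = (Finset.univ.biUnion B).map (Function.Embedding.subtype _) := by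
      ext; simp; grind
    rw [this, Finset.card_map]; exact hc
  · intro a b hab
    obtain ⟨x, hx, y, hy, hxy⟩ := he a b hab
    exact ⟨x, by simpa using hx, y, by simpa using hy, by simpa using hxy⟩

lemma StarMinor.mono {W V : Type*} [Fintype W] [DecidableEq V]
    {H : SimpleGraph W} {G : SimpleGraph V} {U : Finset V} {s s' : ℕ}
    (h : StarMinor H G U s) (hs : s ≤ s') : StarMinor H G U s' := by
  obtain ⟨f, B, h1, h2, h3, h4, h5, h6⟩ := h
  exact ⟨f, B, h1, h2, h3, h4, h5.trans hs, h6⟩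

/-- If no edge of `H` joins `C` to its complement, models of the two parts combine, provided that
the second part has a model avoiding any enlargement of `U` by at most `s₁` vertices: the
enlargement used is by the branch sets of the first model. -/
lemma StarMinor.combine {W V : Type*} [Fintype W] [DecidableEq W] [DecidableEq V]
    {H : SimpleGraph W} {G : SimpleGraph V} {U : Finset V} {s₁ s₂ : ℕ}
    (C : Finset W) (hC : ∀ x ∈ C, ∀ y ∉ C, ¬ H.Adj x y)
    (h1 : StarMinor (H.induce {x | x ∈ C}) G U s₁)
    (h2 : ∀ U' : Finset V, U ⊆ U' → U'.card ≤ U.card + s₁ →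
      StarMinor (H.induce {x | x ∉ C}) G U' s₂) :
    StarMinor H G U (s₁ + s₂) := by
  classical
  obtain ⟨f, B, hf, hs, hd, hU, hc, he⟩ := h1
  obtain ⟨g, D, hg, ht, hd', hU', hc', he'⟩ := h2 (U ∪ Finset.univ.biUnion B)
    Finset.subset_union_left ((Finset.card_union_le _ _).trans (by omega))
  have hBD : ∀ w w', Disjoint (B w) (D w') := by
    intro w w'
    refine Disjoint.symm (Disjoint.mono_right ?_ (hU' w'))
    exact (Finset.subset_biUnion_of_mem B (Finset.mem_univ w)).trans Finset.subset_union_right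
  refine ⟨fun w => if h : w ∈ C then f ⟨w, h⟩ else g ⟨w, h⟩,
    fun w => if h : w ∈ C then B ⟨w, h⟩ else D ⟨w, h⟩, ?_, ?_, ?_, ?_, ?_, ?_⟩
  · intro w
    by_cases h : w ∈ C
    · simpa [h] using hf _
    · simpa [h] using hg _
  · intro w
    by_cases h : w ∈ C
    · simpa [h] using hs ⟨w, h⟩
    · simpa [h] using ht ⟨w, h⟩
  · intro w w' hne
    by_cases h : w ∈ C <;> by_cases h' : w' ∈ C <;> simp only [h, h', dif_pos, dif_neg, not_false_iff]
    · exact hd _ _ (by simpa using hne)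
    · exact hBD _ _
    · exact (hBD _ _).symm
    · exact hd' _ _ (by simpa using hne)
  · intro w
    by_cases h : w ∈ C
    · simpa [h] using hU _
    · simp only [h, dif_neg, not_false_iff]
      exact (hU' _).mono_right Finset.subset_union_left
  · refine (Finset.card_le_card ?_).trans ((Finset.card_union_le
      (Finset.univ.biUnion B) (Finset.univ.biUnion D)).trans (add_le_add hc hc'))
    intro v hv
    simp only [Finset.mem_biUnion, Finset.mem_univ, true_and, Finset.mem_union] at hv ⊢
    obtain ⟨w, hw⟩ := hv
    by_cases h : w ∈ C
    · left; exact ⟨⟨w, h⟩, by simpa [h] using hw⟩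
    · right; exact ⟨⟨w, h⟩, by simpa [h] using hw⟩
  · intro w w' hadj
    by_cases h : w ∈ C <;> by_cases h' : w' ∈ C <;> simp only [h, h', dif_pos, dif_neg, not_false_iff]
    · exact he ⟨w, h⟩ ⟨w', h'⟩ (by simpa using hadj)
    · exact absurd hadj (hC w h w' h')
    · exact absurd hadj.symm (hC w' h' w h)
    · exact he' ⟨w, h⟩ ⟨w', h'⟩ (by simpa using hadj)

/-- Stars centred at `u` and `w` can be made adjacent at the cost of at most `k` new vertices
outside `U`: `P` is added to the star of `u` and `Q` to the star of `w`. For `k = 1, 2` this follows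
from a path from `u` to `w` with at most `k` inner vertices, all outside `U`. -/
def Link {V : Type*} [DecidableEq V] (G : SimpleGraph V) (U : Finset V) (k : ℕ) (u w : V) : Prop :=
  ∃ P Q : Finset V, (P ∪ Q).card ≤ k ∧ Disjoint P Q ∧ Disjoint P U ∧ Disjoint Q U ∧
    (∀ p ∈ P, G.Adj u p) ∧ (∀ q ∈ Q, G.Adj w q) ∧
    ∃ a ∈ insert u P, ∃ b ∈ insert w Q, G.Adj a b

/-- Start from an injection `f` of the vertices of `H` into `G`, all of whose edges outside `E` are
already realised, and make the edges in `E` one at a time by links of at most `k` vertices. Each link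
has to avoid the set `U` of vertices that are forbidden or in use; the bound on `U` leaves room for
one more link. -/
lemma starMinor_of_links {W V : Type*} [Fintype W] [DecidableEq W] [DecidableEq V]
    (H : SimpleGraph W) (G : SimpleGraph V) (U₀ : Finset V) (k : ℕ) (f : W → V)
    (hf : Function.Injective f) (hU : ∀ w, f w ∉ U₀) (E : Finset (Sym2 W))
    (hE : ∀ x y, H.Adj x y → s(x, y) ∈ E ∨ G.Adj (f x) (f y))
    (hlink : ∀ U : Finset V, U₀ ⊆ U → (∀ w, f w ∈ U) →
      U.card + k ≤ U₀.card + Fintype.card W + k * E.card →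
      ∀ x y, H.Adj x y → ¬ G.Adj (f x) (f y) → Link G U k (f x) (f y)) :
    StarMinor H G U₀ (Fintype.card W + k * E.card) := by
  suffices key : ∀ S : Finset (Sym2 W), S ⊆ E → ∃ B : W → Finset V,
      (∀ w, f w ∈ B w) ∧
      (∀ w, ∀ b ∈ B w, b = f w ∨ G.Adj (f w) b) ∧
      (∀ w₁ w₂, w₁ ≠ w₂ → Disjoint (B w₁) (B w₂)) ∧
      (∀ w, Disjoint (B w) U₀) ∧
      (Finset.univ.biUnion B).card ≤ Fintype.card W + k * S.card ∧
      ∀ w₁ w₂, H.Adj w₁ w₂ → s(w₁, w₂) ∈ S → ∃ a ∈ B w₁, ∃ b ∈ B w₂, G.Adj a b by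
    obtain ⟨B, h1, h2, h3, h4, h5, h6⟩ := key E subset_rfl
    refine ⟨f, B, h1, h2, h3, h4, h5, fun x y hxy => ?_⟩
    rcases hE x y hxy with h | h
    · exact h6 x y hxy h
    · exact ⟨_, h1 x, _, h1 y, h⟩
  intro S
  induction S using Finset.induction_on with
  | empty =>
    intro _
    refine ⟨fun w => {f w}, by simp, by simp, ?_, by simpa using hU, ?_, by simp⟩
    · intro a b hab; simpa using hf.ne hab
    · exact Finset.card_biUnion_le.trans (by simp)
  | insert e S he ih =>
    intro hS
    obtain ⟨B, h1, h2, h3, h4, h5, h6⟩ := ih ((Finset.subset_insert _ _).trans hS)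
    induction e using Sym2.ind with
    | _ x y =>
    have hcard : (insert s(x, y) S).card = S.card + 1 := Finset.card_insert_of_notMem he
    have hle := Finset.card_le_card hS
    by_cases hxy : H.Adj x y ∧ ¬ G.Adj (f x) (f y)
    swap
    · refine ⟨B, h1, h2, h3, h4, h5.trans (by rw [hcard]; gcongr; omega), ?_⟩
      intro a b hab hmem
      rcases Finset.mem_insert.1 hmem with h | h
      · have hG : G.Adj (f a) (f b) := by
          rw [Sym2.eq_iff] at h
          rcases h with ⟨rfl, rfl⟩ | ⟨rfl, rfl⟩
          · by_contra hn; exact hxy ⟨hab, hn⟩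
          · by_contra hn; exact hxy ⟨hab.symm, fun h => hn h.symm⟩
        exact ⟨_, h1 a, _, h1 b, hG⟩
      · exact h6 a b hab h
    · obtain ⟨hxy, hnG⟩ := hxy
      have hne := hxy.ne
      obtain ⟨P, Q, hPQ, hdPQ, hPU, hQU, hP, hQ, a, ha, b, hb, hab⟩ :=
        hlink (U₀ ∪ Finset.univ.biUnion B) Finset.subset_union_left
          (fun w => Finset.mem_union_right _ (Finset.mem_biUnion.2 ⟨w, Finset.mem_univ _, h1 w⟩))
          (by
            have := Finset.card_union_le U₀ (Finset.univ.biUnion B)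
            have h' : k * (S.card + 1) ≤ k * E.card := by gcongr; omega
            rw [mul_add] at h'
            omega) x y hxy hnG
      have hBsub : ∀ w, B w ⊆ U₀ ∪ Finset.univ.biUnion B := fun w =>
        (Finset.subset_biUnion_of_mem B (Finset.mem_univ w)).trans Finset.subset_union_right
      have hPB : ∀ w, Disjoint P (B w) := fun w => hPU.mono_right (hBsub w)
      have hQB : ∀ w, Disjoint Q (B w) := fun w => hQU.mono_right (hBsub w)
      refine ⟨fun w => B w ∪ ((if w = x then P else ∅) ∪ (if w = y then Q else ∅)),
        ?_, ?_, ?_, ?_, ?_, ?_⟩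
      · intro w; exact Finset.mem_union_left _ (h1 w)
      · intro w b hb
        grind
      · intro w w' hw
        have := h3 w w' hw
        have e1 := hPB w
        have e2 := hPB w'
        have e3 := hQB w
        have e4 := hQB w'
        dsimp only
        split_ifs <;> simp_all [Finset.disjoint_union_right, disjoint_comm]
      · intro w
        have e1 : Disjoint P U₀ := hPU.mono_right Finset.subset_union_left
        have e2 : Disjoint Q U₀ := hQU.mono_right Finset.subset_union_left
        have := h4 w
        dsimp only
        split_ifs <;> simp_all [Finset.disjoint_union_left]
      · rw [hcard]
        refine (Finset.card_le_card (t := Finset.univ.biUnion B ∪ (P ∪ Q)) ?_).trans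
          ((Finset.card_union_le _ _).trans (by rw [mul_add]; omega))
        intro v hv
        simp only [Finset.mem_biUnion, Finset.mem_univ, true_and, Finset.mem_union] at hv ⊢
        grind
      · intro u v huv hmem
        rcases Finset.mem_insert.1 hmem with h | h
        · have ha' : a ∈ B x ∪ P := by have := h1 x; grind
          have hb' : b ∈ B y ∪ Q := by have := h1 y; grind
          rw [Sym2.eq_iff] at h
          rcases h with ⟨rfl, rfl⟩ | ⟨rfl, rfl⟩
          · exact ⟨a, by simp; grind, b, by simp; grind, hab⟩
          · exact ⟨b, by simp; grind, a, by simp; grind, hab.symm⟩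
        · obtain ⟨a, ha, b, hb, hab⟩ := h6 u v huv h
          exact ⟨a, Finset.mem_union_left _ ha, b, Finset.mem_union_left _ hb, hab⟩

/-! ### Graphs whose components have at least four vertices -/

/-- A spanning forest of a graph all of whose components have at least four vertices: `R` is the set
of roots, one in each component, `par` gives the parent of a vertex, and the rank `h` is the
distance from the root. -/
lemma exists_ranking {W : Type*} [Fintype W] [DecidableEq W] (H : SimpleGraph W)
    [DecidableRel H.Reachable]
    (hH : ∀ v, 4 ≤ (Finset.univ.filter fun w => H.Reachable v w).card) :
    ∃ (R : Finset W) (h : W → ℕ) (par : W → W), 4 * R.card ≤ Fintype.card W ∧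
      ∀ x, x ∉ R → H.Adj x (par x) ∧ h (par x) < h x := by
  classical
  let r : W → W := fun x => (H.connectedComponentMk x).out
  have hr : ∀ x, H.Reachable x (r x) := fun x =>
    (ConnectedComponent.exact (Quot.out_eq (H.connectedComponentMk x))).symm
  have hr' : ∀ x y, H.Reachable x y → r x = r y := fun x y hxy => by
    simp only [r]; rw [ConnectedComponent.eq.2 hxy]
  have key : ∀ x, x ∉ Finset.univ.image r →
      ∃ y, H.Adj x y ∧ H.dist y (r y) < H.dist x (r x) := by
    intro x hx
    have hne : x ≠ r x := fun h => hx (Finset.mem_image.2 ⟨x, Finset.mem_univ _, h.symm⟩)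
    obtain ⟨p, hp⟩ := (hr x).exists_walk_length_eq_dist
    have hr'' := hr' x
    generalize r x = z at p hp hne hr''
    cases p with
    | nil => exact absurd rfl hne
    | @cons _ y _ hxy p =>
      refine ⟨y, hxy, ?_⟩
      rw [← hr'' y hxy.reachable, ← hp, Walk.length_cons]
      exact Nat.lt_succ_of_le (dist_le p)
  choose! par hpar using key
  refine ⟨Finset.univ.image r, fun x => H.dist x (r x), par, ?_, hpar⟩
  refine Finset.mul_card_image_le_card Finset.univ 4 fun b hb => ?_
  obtain ⟨a, -, rfl⟩ := Finset.mem_image.1 hb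
  refine (hH a).trans (Finset.card_le_card fun w hw => ?_)
  simp only [Finset.mem_filter, Finset.mem_univ, true_and] at hw ⊢
  exact (hr' a w hw).symm

/-- Greedy embedding of a rooted forest outside `U`, in order of increasing rank. -/
lemma embed_ranked {W V : Type*} [Fintype W] [DecidableEq W] [Fintype V] [DecidableEq V]
    [Nonempty V] (G : SimpleGraph V) [DecidableRel G.Adj] (U : Finset V)
    (hdeg : ∀ v, U.card + Fintype.card W ≤ G.degree v)
    (R : Finset W) (h : W → ℕ) (par : W → W) (hpar : ∀ x, x ∉ R → h (par x) < h x) :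
    ∃ f : W → V, Function.Injective f ∧ (∀ w, f w ∉ U) ∧
      ∀ x, x ∉ R → G.Adj (f x) (f (par x)) := by
  suffices key : ∀ s : Finset W, ∃ f : W → V, Set.InjOn f s ∧ (∀ w ∈ s, f w ∉ U) ∧
      ∀ x ∈ s, x ∉ R → par x ∈ s → G.Adj (f x) (f (par x)) by
    obtain ⟨f, h1, h2, h3⟩ := key Finset.univ
    exact ⟨f, by simpa using h1, by simpa using h2, by simpa using h3⟩
  intro s
  induction s using Finset.induction_on_max_value h with
  | empty => exact ⟨fun _ => Classical.arbitrary V, by simp⟩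
  | insert a s has hmax ih =>
    obtain ⟨f, h1, h2, h3⟩ := ih
    have hlt : (U ∪ s.image f).card < (G.neighborFinset (f (par a))).card := by
      have e1 := Finset.card_union_le U (s.image f)
      have e2 : (s.image f).card ≤ s.card := Finset.card_image_le
      have e3 : s.card < Fintype.card W := Finset.card_lt_univ_of_notMem has
      have := hdeg (f (par a))
      rw [card_neighborFinset_eq_degree]
      omega
    obtain ⟨v, hv, hv'⟩ := Finset.exists_mem_notMem_of_card_lt_card hlt
    rw [mem_neighborFinset] at hv
    simp only [Finset.mem_union, Finset.mem_image, not_or, not_exists, not_and] at hv'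
    refine ⟨Function.update f a v, ?_, ?_, ?_⟩
    · intro x hx y hy hxy
      simp only [Finset.coe_insert, Set.mem_insert_iff, Finset.mem_coe] at hx hy
      simp only [Function.update_apply] at hxy
      have := @h1 x
      grind
    · intro w hw
      simp only [Function.update_apply]
      grind
    · intro x hx hxR hpx
      have hne : par x ≠ a := by
        rintro rfl
        have e := hpar x hxR
        rcases Finset.mem_insert.1 hx with hx | hx
        · rw [← hx] at e; exact lt_irrefl _ e
        · exact absurd (hmax x hx) (by omega)
      rw [Function.update_of_ne hne]
      by_cases hxa : x = a
      · subst hxa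
        simpa using hv.symm
      · rw [Function.update_of_ne hxa]
        exact h3 x (by grind) hxR (by grind)

/-- The embedding lemma when all components of `H` have at least four vertices. The forest edges
`T` are realised by adjacent centres; if the other edges `E` cannot all be linked by at most two
vertices, the graph is so structured that `H` can be embedded with one linking vertex per edge. -/
lemma starMinor_of_large_components {W V : Type*} [Fintype W] [DecidableEq W] [Fintype V]
    [DecidableEq V] [Nonempty V]
    (H : SimpleGraph W) [DecidableRel H.Adj] [DecidableRel H.Reachable]
    (hH : ∀ v, 4 ≤ (Finset.univ.filter fun w => H.Reachable v w).card)
    (G : SimpleGraph V) [DecidableRel G.Adj] (δ : ℕ) (hdeg : ∀ v, δ ≤ G.degree v)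
    (hn : Fintype.card V ≤ 2 * δ + 1) (U₀ : Finset V)
    (hsize : 4 * U₀.card + Fintype.card W + 6 * H.edgeFinset.card ≤ 2 * δ) :
    StarMinor H G U₀ (Fintype.card W + 2 * H.edgeFinset.card) := by
  obtain ⟨R, h, par, hR, hpar⟩ := exists_ranking H hH
  set t := Fintype.card W
  set q := H.edgeFinset.card
  -- `T` is the edge set of the spanning forest; it has `t - |R| ≥ 3 t / 4` elements
  let T : Finset (Sym2 W) := (Finset.univ \ R).image fun x => s(x, par x)
  have hTsub : T ⊆ H.edgeFinset := by
    intro e he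
    simp only [T, Finset.mem_image, Finset.mem_sdiff, Finset.mem_univ, true_and] at he
    obtain ⟨x, hx, rfl⟩ := he
    simpa using (hpar x hx).1
  have hTcard : T.card = t - R.card := by
    rw [Finset.card_image_of_injOn, ← Finset.compl_eq_univ_sdiff, Finset.card_compl]
    intro x hx y hy hxy
    simp only [Finset.coe_sdiff, Finset.coe_univ, Set.mem_sdiff, Finset.mem_coe] at hx hy
    have e1 := (hpar x hx.2).2
    have e2 := (hpar y hy.2).2
    rcases Sym2.eq_iff.1 hxy with h | ⟨h, h'⟩
    · exact h.1
    · rw [← h] at e2; rw [h'] at e1; omega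
  set E := H.edgeFinset \ T
  have hEcard : E.card = q - (t - R.card) := by
    rw [Finset.card_sdiff_of_subset hTsub, hTcard]
  have hTle : t - R.card ≤ q := hTcard ▸ Finset.card_le_card hTsub
  have hEt : 4 * E.card + 3 * t ≤ 4 * q := by omega
  obtain ⟨f, hf, hfU, hfadj⟩ := embed_ranked G U₀
    (fun v => le_trans (by change U₀.card + t ≤ δ; omega) (hdeg v)) R h par (fun x hx => (hpar x hx).2)
  have hEf : ∀ x y, H.Adj x y → s(x, y) ∈ E ∨ G.Adj (f x) (f y) := by
    intro x y hxy
    by_cases hT : s(x, y) ∈ T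
    · right
      simp only [T, Finset.mem_image, Finset.mem_sdiff, Finset.mem_univ, true_and] at hT
      obtain ⟨z, hz, hzxy⟩ := hT
      rcases Sym2.eq_iff.1 hzxy with ⟨rfl, rfl⟩ | ⟨rfl, rfl⟩
      · exact hfadj _ hz
      · exact (hfadj _ hz).symm
    · left; simp [E, hT, hxy]
  by_cases hlink : ∀ U : Finset V, U₀ ⊆ U → (∀ w, f w ∈ U) →
      U.card + 2 ≤ U₀.card + Fintype.card W + 2 * E.card →
      ∀ x y, H.Adj x y → ¬ G.Adj (f x) (f y) → Link G U 2 (f x) (f y)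
  · exact (starMinor_of_links H G U₀ 2 f hf hfU E hEf hlink).mono (by omega)
  -- the linking is stuck at `f x`, `f y`, with `P` and `Q` their neighbours outside `U`
  push Not at hlink
  obtain ⟨U, hU₀U, hfU', hUcard, x, y, hxy, hnG, hL⟩ := hlink
  have hne : f x ≠ f y := hf.ne hxy.ne
  set P := G.neighborFinset (f x) \ U with hP
  set Q := G.neighborFinset (f y) \ U with hQ
  have memP : ∀ a ∈ P, G.Adj (f x) a ∧ a ∉ U := fun a ha => by simpa [hP] using ha
  have memQ : ∀ a ∈ Q, G.Adj (f y) a ∧ a ∉ U := fun a ha => by simpa [hQ] using ha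
  have hPQ : Disjoint P Q := by
    rw [Finset.disjoint_left]
    intro a ha hb
    exact hL ⟨{a}, ∅, by simp, by simp, by simpa using (memP a ha).2, by simp,
      by simpa using (memP a ha).1, by simp, a, by simp, f y, by simp, (memQ a hb).1.symm⟩
  have hPQadj : ∀ a ∈ P, ∀ b ∈ Q, ¬ G.Adj a b := by
    intro a ha b hb hab
    exact hL ⟨{a}, {b}, Finset.card_le_two, by simpa using hab.ne,
      by simpa using (memP a ha).2, by simpa using (memQ b hb).2, by simpa using (memP a ha).1,
      by simpa using (memQ b hb).1, a, by simp, b, by simp, hab⟩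
  have hcardN : ∀ z z', z ≠ z' → ¬ G.Adj z z' → z ∈ U → z' ∈ U →
      δ + 2 ≤ (G.neighborFinset z \ U).card + U.card := by
    intro z z' hzz' hadj hz hz'
    have hsub : insert z (insert z' (G.neighborFinset z)) ⊆ (G.neighborFinset z \ U) ∪ U := by
      intro w; simp only [Finset.mem_insert, Finset.mem_union, Finset.mem_sdiff]; grind
    have := (Finset.card_le_card hsub).trans (Finset.card_union_le _ _)
    rw [Finset.card_insert_of_notMem (by simp [hzz']), Finset.card_insert_of_notMem (by simp [hadj]),
      card_neighborFinset_eq_degree] at this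
    have := hdeg z
    omega
  have hPcard : δ + 2 ≤ P.card + U.card := hcardN _ _ hne hnG (hfU' x) (hfU' y)
  have hQcard : δ + 2 ≤ Q.card + U.card :=
    hcardN _ _ hne.symm (fun h => hnG h.symm) (hfU' y) (hfU' x)
  -- both closed neighbourhoods lie in the complement of `Q`, which has at most `2 δ + 1 - |Q|`
  -- vertices
  have hcodeg : ∀ a ∈ P, ∀ b ∈ P, a ≠ b → ¬ G.Adj a b →
      Q.card + 1 ≤ (G.neighborFinset a ∩ G.neighborFinset b).card := by
    intro a ha b hb hab hnab
    have hd : Disjoint (insert a (insert b (G.neighborFinset a ∪ G.neighborFinset b))) Q := by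
      rw [Finset.disjoint_left]
      intro c hc hcQ
      simp only [Finset.mem_insert, Finset.mem_union, mem_neighborFinset] at hc
      rcases hc with rfl | rfl | hc | hc
      · exact Finset.disjoint_left.1 hPQ ha hcQ
      · exact Finset.disjoint_left.1 hPQ hb hcQ
      · exact hPQadj a ha c hcQ hc
      · exact hPQadj b hb c hcQ hc
    have e1 := Finset.card_le_univ (insert a (insert b (G.neighborFinset a ∪ G.neighborFinset b)) ∪ Q)
    rw [Finset.card_union_of_disjoint hd, Finset.card_insert_of_notMem, Finset.card_insert_of_notMem] at e1
    · have e2 := Finset.card_union_add_card_inter (G.neighborFinset a) (G.neighborFinset b)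
      simp only [card_neighborFinset_eq_degree] at e2
      have := hdeg a
      have := hdeg b
      omega
    · have : ¬ G.Adj b a := fun h => hnab h.symm
      simp [hnab]
    · have : ¬ G.Adj b a := fun h => hnab h.symm
      simp [hab, this]
  -- a new start: `H` is placed inside `P`, where any two vertices are adjacent or have many
  -- common neighbours
  obtain ⟨g⟩ : Nonempty (W ↪ P) := Function.Embedding.nonempty_of_card_le (by
    rw [Fintype.card_coe]; omega)
  have hPU : ∀ a ∈ P, a ∉ U := fun a ha => (memP a ha).2
  refine (starMinor_of_links H G U₀ 1 (fun w => (g w : V)) (fun a b hab => g.injective (Subtype.ext hab))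
    (fun w hw => hPU _ (g w).2 (hU₀U hw)) H.edgeFinset (fun a b hab => Or.inl (by simpa using hab))
    ?_).mono (by omega)
  intro U' hU' hgU' hU'card a b hab hnab
  have hc := hcodeg _ (g a).2 _ (g b).2 (fun h => hab.ne (g.injective (Subtype.ext h))) hnab
  obtain ⟨c, hc, hcU'⟩ := Finset.exists_mem_notMem_of_card_lt_card (s := U')
    (t := G.neighborFinset (g a : V) ∩ G.neighborFinset (g b : V)) (by omega)
  simp only [Finset.mem_inter, mem_neighborFinset] at hc
  exact ⟨{c}, ∅, by simp, by simp, by simpa using hcU', by simp, by simpa using hc.1, by simp, c, by simp, _,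
    Finset.mem_insert_self _ _, hc.2.symm⟩

/-! ### Small components -/

/-- A star model of the part of `H` induced on `C`, from centres and branch sets defined on all
vertices of `H` whose values outside `C` do not matter. -/
lemma StarMinor.of_finset {W V : Type*} [Fintype W] [DecidableEq W] [DecidableEq V]
    (H : SimpleGraph W) (G : SimpleGraph V) (U : Finset V) (s : ℕ) (C : Finset W)
    (f : W → V) (B : W → Finset V) (h1 : ∀ w ∈ C, f w ∈ B w)
    (h2 : ∀ w ∈ C, ∀ b ∈ B w, b = f w ∨ G.Adj (f w) b)
    (h3 : ∀ w₁ ∈ C, ∀ w₂ ∈ C, w₁ ≠ w₂ → Disjoint (B w₁) (B w₂))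
    (h4 : ∀ w ∈ C, Disjoint (B w) U) (h5 : (C.biUnion B).card ≤ s)
    (h6 : ∀ w₁ ∈ C, ∀ w₂ ∈ C, H.Adj w₁ w₂ → ∃ a ∈ B w₁, ∃ b ∈ B w₂, G.Adj a b) :
    StarMinor (H.induce {x | x ∈ C}) G U s := by
  refine ⟨fun w => f w, fun w => B w, fun w => h1 w w.2, fun w => h2 w w.2, ?_, fun w => h4 w w.2,
    ?_, fun a b hab => h6 a a.2 b b.2 (by simpa using hab)⟩
  · exact fun a b hab => h3 a a.2 b b.2 (fun h => hab (Subtype.ext h))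
  · refine (Finset.card_le_card fun v hv => ?_).trans h5
    simp only [Finset.mem_biUnion, Finset.mem_univ, true_and] at hv ⊢
    obtain ⟨w, hw⟩ := hv
    exact ⟨w, w.2, hw⟩

/-- Removing the vertices in `C` destroys at least the edges in `E`, each of which meets `C`. -/
lemma edges_induce_compl {W : Type*} [Fintype W] [DecidableEq W] (H : SimpleGraph W) (C : Finset W)
    (E : Finset (Sym2 W)) (hE : ∀ e ∈ E, e ∈ H.edgeSet ∧ ∃ x ∈ C, x ∈ e) :
    (H.induce {x | x ∉ C}).edgeSet.ncard + E.card ≤ H.edgeSet.ncard := by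
  classical
  have hinj : Function.Injective (Sym2.map (Subtype.val : {x | x ∉ C} → W)) :=
    Sym2.map.injective Subtype.val_injective
  rw [← Set.ncard_image_of_injective _ hinj, ← Set.ncard_coe_finset, ← Set.ncard_union_eq]
  · refine Set.ncard_le_ncard ?_
    rintro e (⟨e', he', rfl⟩ | he)
    · induction e' using Sym2.ind with
      | _ a b => simpa using he'
    · exact (hE e he).1
  · rw [Set.disjoint_left]
    rintro _ ⟨e', he', rfl⟩ he
    obtain ⟨x, hx, hxe⟩ := (hE _ he).2
    obtain ⟨y, -, rfl⟩ := Sym2.mem_map.1 hxe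
    exact y.2 hx

/-- A path with three vertices outside `U`. -/
lemma exists_cherry {V : Type*} [Fintype V] [DecidableEq V]
    (G : SimpleGraph V) [DecidableRel G.Adj] (δ : ℕ) (hdeg : ∀ v, δ ≤ G.degree v)
    (U : Finset V) (hU : U.card < Fintype.card V) (hsize : U.card + 2 ≤ δ) :
    ∃ a u b, a ≠ b ∧ G.Adj u a ∧ G.Adj u b ∧ a ∉ U ∧ u ∉ U ∧ b ∉ U := by
  obtain ⟨u, -, hu⟩ := Finset.exists_mem_notMem_of_card_lt_card (s := U) (t := Finset.univ)
    (by rwa [Finset.card_univ])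
  have h1 : 1 < (G.neighborFinset u \ U).card := by
    have := Finset.le_card_sdiff U (G.neighborFinset u)
    rw [card_neighborFinset_eq_degree] at this
    have := hdeg u
    omega
  obtain ⟨a, ha, b, hb, hab⟩ := Finset.one_lt_card.1 h1
  simp only [Finset.mem_sdiff, mem_neighborFinset] at ha hb
  exact ⟨a, u, b, hab, ha.1, hb.1, ha.2, hu, hb.2⟩

/-- A star model outside `U` of the triangle, with branch sets `A`, `{u}`, `{b}` where `A` has at
most two vertices, that is, a cycle of length at most four. Without one, the neighbourhoods of the
three vertices of a path `a`, `u`, `b` would be almost disjoint, which is impossible as they have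
about `3 δ` elements in total, more than the graph. -/
lemma exists_short_cycle {V : Type*} [Fintype V] [DecidableEq V]
    (G : SimpleGraph V) [DecidableRel G.Adj] (δ : ℕ) (hdeg : ∀ v, δ ≤ G.degree v)
    (hn : Fintype.card V ≤ 2 * δ + 1) (U : Finset V) (hU : U.card < Fintype.card V)
    (hsize : 2 * U.card + 3 ≤ δ) :
    ∃ (a u b : V) (A : Finset V), a ∈ A ∧ A.card ≤ 2 ∧ (∀ x ∈ A, x = a ∨ G.Adj a x) ∧
      Disjoint A U ∧ u ∉ U ∧ b ∉ U ∧ u ∉ A ∧ b ∉ A ∧ G.Adj u a ∧ G.Adj u b ∧ ∃ x ∈ A, G.Adj x b := by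
  obtain ⟨a, u, b, hab, hua, hub, ha, hu, hb⟩ := exists_cherry G δ hdeg U hU (by omega)
  have tri : ∀ a u b, G.Adj u a → G.Adj u b → G.Adj a b → a ∉ U → u ∉ U → b ∉ U →
    ∃ (a u b : V) (A : Finset V), a ∈ A ∧ A.card ≤ 2 ∧ (∀ x ∈ A, x = a ∨ G.Adj a x) ∧
      Disjoint A U ∧ u ∉ U ∧ b ∉ U ∧ u ∉ A ∧ b ∉ A ∧ G.Adj u a ∧ G.Adj u b ∧
      ∃ x ∈ A, G.Adj x b := by
    intro a u b hua hub hab ha hu hb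
    exact ⟨a, u, b, {a}, by simp, by simp, by simp, by simpa using ha, hu, hb, by simpa using hua.ne,
      by simpa using hab.ne', hua, hub, a, by simp, hab⟩
  by_contra hcon
  have d1 : Disjoint (G.neighborFinset a \ U) (G.neighborFinset u \ U) := by
    rw [Finset.disjoint_left]
    intro z hz hz'
    simp only [Finset.mem_sdiff, mem_neighborFinset] at hz hz'
    exact hcon (tri a u z hua hz'.1 hz.1 ha hu hz.2)
  have d2 : Disjoint (G.neighborFinset b \ U) (G.neighborFinset u \ U) := by
    rw [Finset.disjoint_left]
    intro z hz hz'
    simp only [Finset.mem_sdiff, mem_neighborFinset] at hz hz'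
    exact hcon (tri b u z hub hz'.1 hz.1 hb hu hz.2)
  have d3 : Disjoint ((G.neighborFinset a \ U).erase u) (G.neighborFinset b \ U) := by
    rw [Finset.disjoint_left]
    intro z hz hz'
    simp only [Finset.mem_erase, Finset.mem_sdiff, mem_neighborFinset] at hz hz'
    refine hcon ⟨a, u, b, {a, z}, by simp, Finset.card_le_two, by simpa using Or.inr hz.2.1, ?_, hu, hb, ?_, ?_,
      hua, hub, z, by simp, hz'.1.symm⟩
    · simpa using ⟨ha, hz.2.2⟩
    · simpa using ⟨hua.ne, hz.1.symm⟩
    · simpa using ⟨hab.symm, hz'.1.ne⟩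
  have hsub : (G.neighborFinset a \ U).erase u ∪ (G.neighborFinset b \ U) ∪ (G.neighborFinset u \ U)
      ⊆ Finset.univ \ U := by
    intro z hz
    simp only [Finset.mem_union, Finset.mem_erase, Finset.mem_sdiff] at hz ⊢
    exact ⟨Finset.mem_univ _, by tauto⟩
  have hc := Finset.card_le_card hsub
  rw [Finset.card_union_of_disjoint, Finset.card_union_of_disjoint d3,
    Finset.card_sdiff_of_subset (Finset.subset_univ _), Finset.card_univ] at hc
  · have key : ∀ v, δ ≤ (G.neighborFinset v \ U).card + U.card := by
      intro v
      have := Finset.le_card_sdiff U (G.neighborFinset v)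
      rw [card_neighborFinset_eq_degree] at this
      have := hdeg v
      omega
    have := Finset.pred_card_le_card_erase (s := G.neighborFinset a \ U) (a := u)
    have := key a
    have := key b
    have := key u
    omega
  · exact Finset.disjoint_union_left.2 ⟨d1.mono_left (Finset.erase_subset _ _), d2⟩

set_option linter.unusedSimpArgs false in
/-- The embedding lemma for dense graphs. Components of `H` with two or three vertices are split off
one at a time, and `starMinor_of_large_components` treats the rest. The hypothesis on sizes is
inherited: a component with `c` vertices and `e` edges uses `s` vertices of `G` with
`4 s ≤ c + 6 e`. -/
lemma starMinor_of_no_isolated {V : Type*} [Fintype V] [DecidableEq V] [Nonempty V]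
    (G : SimpleGraph V) [DecidableRel G.Adj] (δ : ℕ) (hdeg : ∀ v, δ ≤ G.degree v)
    (hn : Fintype.card V ≤ 2 * δ + 1) (k : ℕ) :
    ∀ (W : Type*) [Fintype W] (H : SimpleGraph W) (U₀ : Finset V),
    Fintype.card W = k → (∀ x, ∃ y, H.Adj x y) →
    4 * U₀.card + Fintype.card W + 6 * H.edgeSet.ncard ≤ 2 * δ →
    StarMinor H G U₀ (Fintype.card W + 2 * H.edgeSet.ncard) := by
  classical
  induction k using Nat.strong_induction_on with
  | _ k ih =>
  intro W _ H U₀ hk hiso hsize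
  have hδ : δ < Fintype.card V :=
    (hdeg (Classical.arbitrary V)).trans_lt (G.degree_lt_card_verts _)
  by_cases hH : ∀ v, 4 ≤ (Finset.univ.filter fun w => H.Reachable v w).card
  · have hq : H.edgeFinset.card = H.edgeSet.ncard := by
      rw [← coe_edgeFinset, Set.ncard_coe_finset]
    rw [← hq] at hsize ⊢
    exact starMinor_of_large_components H hH G δ hdeg hn U₀ hsize
  -- splitting off a union `C` of components that contains the edges `E` and has a model with `s`
  -- vertices
  have peel : ∀ (C : Finset W) (E : Finset (Sym2 W)) (s : ℕ), C.Nonempty →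
      (∀ x ∈ C, ∀ y, H.Adj x y → y ∈ C) → (∀ e ∈ E, e ∈ H.edgeSet ∧ ∃ x ∈ C, x ∈ e) →
      4 * s ≤ C.card + 6 * E.card → s ≤ C.card + 2 * E.card →
      (E.card ≤ H.edgeSet.ncard → StarMinor (H.induce {x | x ∈ C}) G U₀ s) →
      StarMinor H G U₀ (Fintype.card W + 2 * H.edgeSet.ncard) := by
    intro C E s hCne hC hE h1 h2 hmod
    have hedge := edges_induce_compl H C E hE
    have hcard : Fintype.card {x | x ∉ C} + C.card = Fintype.card W := by
      have := C.card_le_univ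
      have e : Fintype.card {x | x ∉ C} = Fintype.card W - C.card := by
        rw [← Finset.card_compl, ← Fintype.card_coe]
        exact Fintype.card_congr (Equiv.subtypeEquivRight (by simp))
      omega
    have hCpos := hCne.card_pos
    refine (StarMinor.combine C (fun x hx y hy h => hy (hC x hx y h)) (hmod (by omega))
      (fun U' hUU' hU' => ih _ (by omega) {x | x ∉ C} (H.induce {x | x ∉ C}) U' rfl ?_ ?_)).mono (by omega)
    · rintro ⟨x, hx⟩
      obtain ⟨y, hy⟩ := hiso x
      exact ⟨⟨y, fun h => hx (hC y h x hy.symm)⟩, by simpa using hy⟩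
    · omega
  -- splitting off a component with three vertices, which is a triangle or a path centred at `y`
  have peel3 : ∀ x y z, x ≠ z → H.Adj y x → H.Adj y z →
      (∀ a ∈ ({x, y, z} : Finset W), ∀ b, H.Adj a b → b ∈ ({x, y, z} : Finset W)) →
      StarMinor H G U₀ (Fintype.card W + 2 * H.edgeSet.ncard) := by
    intro x y z hxz hyx hyz hC
    have hyx' := hyx.ne
    have hyz' := hyz.ne
    have hcard : ({x, y, z} : Finset W).card = 3 := by
      rw [Finset.card_eq_three]; exact ⟨x, y, z, hyx'.symm, hxz, hyz', rfl⟩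
    by_cases hadj : H.Adj x z
    · refine peel {x, y, z} {s(y, x), s(y, z), s(x, z)} 4 (by simp) hC (by simp; grind) ?_ ?_ ?_
      all_goals
        have hE : ({s(y, x), s(y, z), s(x, z)} : Finset (Sym2 W)).card = 3 := by
          rw [Finset.card_eq_three]
          exact ⟨_, _, _, by simp; grind, by simp; grind, by simp; grind, rfl⟩
        rw [hE, hcard] at *
      · omega
      · omega
      intro hq
      obtain ⟨a, u, b, A, haA, hA2, hA, hAU, hu, hb, huA, hbA, hua, hub, c, hc, hcb⟩ :=
        exists_short_cycle G δ hdeg hn U₀ (by omega) (by omega)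
      refine StarMinor.of_finset H G U₀ 4 {x, y, z}
        (fun w => if w = x then a else if w = y then u else b)
        (fun w => if w = x then A else if w = y then {u} else {b}) ?_ ?_ ?_ ?_ ?_ ?_
      · simp [hxz, hxz.symm, hyx', hyx'.symm, hyz', hyz'.symm, haA]
      · simp [hxz, hxz.symm, hyx', hyx'.symm, hyz', hyz'.symm]; exact hA
      · simp [hxz, hxz.symm, hyx', hyx'.symm, hyz', hyz'.symm, huA, hbA, hub.ne, hub.ne.symm]
      · simp [hxz, hxz.symm, hyx', hyx'.symm, hyz', hyz'.symm, hAU, hu, hb]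
      · have : ({x, y, z} : Finset W).biUnion
            (fun w => if w = x then A else if w = y then {u} else {b}) ⊆ A ∪ {u, b} := by
          intro v; simp [hxz, hxz.symm, hyx', hyx'.symm, hyz', hyz'.symm]
        have h2 : ({u, b} : Finset V).card ≤ 2 := Finset.card_le_two
        exact (Finset.card_le_card this).trans ((Finset.card_union_le _ _).trans (by omega))
      · have e1 : ∃ c ∈ A, G.Adj c u := ⟨a, haA, hua.symm⟩
        have e2 : ∃ c ∈ A, G.Adj u c := ⟨a, haA, hua⟩
        have e3 : ∃ c ∈ A, G.Adj c b := ⟨c, hc, hcb⟩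
        have e4 : ∃ c ∈ A, G.Adj b c := ⟨c, hc, hcb.symm⟩
        simp [hxz, hxz.symm, hyx', hyx'.symm, hyz', hyz'.symm, e1, e2, e3, e4, hub, hub.symm]
    · refine peel {x, y, z} {s(y, x), s(y, z)} 3 (by simp) hC (by simp; grind) ?_ ?_ ?_
      all_goals
        have hE : ({s(y, x), s(y, z)} : Finset (Sym2 W)).card = 2 := by
          rw [Finset.card_eq_two]
          exact ⟨_, _, by simp; grind, rfl⟩
        rw [hE, hcard] at *
      · omega
      · omega
      intro hq
      obtain ⟨a, u, b, hab, hua, hub, ha, hu, hb⟩ := exists_cherry G δ hdeg U₀ (by omega) (by omega)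
      refine StarMinor.of_finset H G U₀ 3 {x, y, z}
        (fun w => if w = x then a else if w = y then u else b)
        (fun w => if w = x then {a} else if w = y then {u} else {b}) ?_ ?_ ?_ ?_ ?_ ?_
      · simp [hxz, hxz.symm, hyx', hyx'.symm, hyz', hyz'.symm]
      · simp [hxz, hxz.symm, hyx', hyx'.symm, hyz', hyz'.symm]
      · simp [hxz, hxz.symm, hyx', hyx'.symm, hyz', hyz'.symm, hab, hab.symm, hua.ne, hua.ne.symm, hub.ne, hub.ne.symm]
      · simp [hxz, hxz.symm, hyx', hyx'.symm, hyz', hyz'.symm, ha, hu, hb]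
      · exact Finset.card_biUnion_le.trans ((Finset.sum_le_card_nsmul _ _ 1
          (by simp [hxz, hxz.symm, hyx', hyx'.symm, hyz', hyz'.symm])).trans
            (by simpa using Finset.card_le_three))
      · have hadj' : ¬ H.Adj z x := fun h => hadj h.symm
        simp [hxz, hxz.symm, hyx', hyx'.symm, hyz', hyz'.symm, hadj, hadj', hua, hua.symm, hub, hub.symm]
  -- there is a component `C` with at most three vertices, and it contains an edge `vw`
  push Not at hH
  obtain ⟨v, hv⟩ := hH
  set C := Finset.univ.filter fun w => H.Reachable v w with hCdef
  have memC : ∀ w, w ∈ C ↔ H.Reachable v w := by simp [C]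
  have hC : ∀ x ∈ C, ∀ y, H.Adj x y → y ∈ C := by
    intro x hx y hxy
    rw [memC] at hx ⊢
    exact hx.trans hxy.reachable
  have hvC : v ∈ C := by rw [memC]
  obtain ⟨w, hvw⟩ := hiso v
  have hwC := hC v hvC w hvw
  have hne := hvw.ne
  by_cases h2 : C = {v, w}
  · rw [h2] at hC
    have hcard : ({v, w} : Finset W).card = 2 := Finset.card_pair hne
    refine peel {v, w} {s(v, w)} 2 (by simp) hC (by simp; grind) (by simp [hcard]) (by simp [hcard]) ?_
    intro hq
    simp only [Finset.card_singleton] at hq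
    obtain ⟨a, u, b, hab, hua, hub, ha, hu, hb⟩ := exists_cherry G δ hdeg U₀ (by omega) (by omega)
    refine StarMinor.of_finset H G U₀ 2 {v, w}
      (fun x => if x = v then a else u) (fun x => if x = v then {a} else {u}) ?_ ?_ ?_ ?_ ?_ ?_
    · simp [hne, hne.symm]
    · simp [hne, hne.symm]
    · simp [hne, hne.symm, hua.ne, hua.ne.symm]
    · simp [hne, hne.symm, ha, hu]
    · exact Finset.card_biUnion_le.trans ((Finset.sum_le_card_nsmul _ _ 1
        (by simp [hne, hne.symm])).trans (by simp [hcard]))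
    · simp [hne, hne.symm, hua, hua.symm]
  · obtain ⟨z, hzC, hz⟩ : ∃ z ∈ C, z ∉ ({v, w} : Finset W) := by
      by_contra! hcon
      exact h2 (Finset.Subset.antisymm hcon (by simp [Finset.insert_subset_iff, hvC, hwC]))
    simp only [Finset.mem_insert, Finset.mem_singleton, not_or] at hz
    have h3 : ({v, w, z} : Finset W) = C := by
      refine Finset.eq_of_subset_of_card_le (by simp [Finset.insert_subset_iff, hvC, hwC, hzC]) ?_
      rw [Finset.card_eq_three.2 ⟨v, w, z, hne, Ne.symm hz.1, Ne.symm hz.2, rfl⟩]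
      omega
    obtain ⟨y, hy⟩ := hiso z
    have hyC := hC z hzC y hy
    rw [← h3] at hyC hC
    simp only [Finset.mem_insert, Finset.mem_singleton] at hyC
    rcases hyC with rfl | rfl | rfl
    · refine peel3 w y z (Ne.symm hz.2) hvw hy.symm ?_
      rwa [Finset.insert_comm]
    · exact peel3 v y z (Ne.symm hz.1) hvw.symm hy.symm hC
    · exact absurd rfl hy.ne

/-! ### Minors of `G` obtained by deletion and contraction -/

/-- Undoing the contraction of the connected fibres of `f`: minors of `G.map f` are minors
of `G`, with preimages as branch sets. -/
lemma isMinorOf_of_map {W V V' : Type*} {H : SimpleGraph W} {G : SimpleGraph V} (f : V → V')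
    (hf : ∀ a, (G.induce (f ⁻¹' {a})).Connected) (h : H.IsMinorOf (G.map f)) :
    H.IsMinorOf G := by
  obtain ⟨B, h1, h2, h3⟩ := h
  have key : ∀ w, ∀ a b : B w, ((G.map f).induce (B w)).Reachable a b →
      ∀ u v : f ⁻¹' (B w), f u = a → f v = b → (G.induce (f ⁻¹' (B w))).Reachable u v := by
    intro w a b hab
    have fibre : ∀ u v : f ⁻¹' (B w), f u = f v → (G.induce (f ⁻¹' (B w))).Reachable u v := by
      rintro ⟨u, hu⟩ ⟨v, hv⟩ huv
      have := (hf (f v)).preconnected ⟨u, huv⟩ ⟨v, rfl⟩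
      exact this.map (induceHomOfLE G (fun x hx => by
        have hx' : f x = f v := hx
        simpa [hx'] using hv)).toHom
    obtain ⟨p⟩ := hab
    induction p with
    | nil => intro u v hu hv; exact fibre u v (hu.trans hv.symm)
    | @cons a c b hac p ih =>
      intro u v hu hv
      have hac' : (G.map f).Adj a c := by simpa using hac
      obtain ⟨-, x, y, hxy, hx, hy⟩ := hac'
      have hxB : x ∈ f ⁻¹' (B w) := by simp [hx]
      have hyB : y ∈ f ⁻¹' (B w) := by simp [hy]
      refine (fibre u ⟨x, hxB⟩ (hu.trans hx.symm)).trans ?_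
      refine Reachable.trans (Adj.reachable ?_) (ih ⟨y, hyB⟩ v hy hv)
      simpa using hxy
  refine ⟨fun w => f ⁻¹' (B w), fun w => ?_, fun w w' hne => (h2 hne).preimage f, ?_⟩
  · obtain ⟨⟨a, ha⟩⟩ := (h1 w).nonempty
    obtain ⟨⟨u, hu⟩⟩ := (hf a).nonempty
    have hu' : f u = a := hu
    have hu'' : u ∈ f ⁻¹' (B w) := by simpa [hu'] using ha
    rw [connected_iff]
    exact ⟨fun x y => key w ⟨f x, x.2⟩ ⟨f y, y.2⟩ ((h1 w).preconnected _ _) x y rfl rfl,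
      ⟨⟨u, hu''⟩⟩⟩
  · intro w w' hadj
    obtain ⟨a, ha, b, hb, hab⟩ := h3 hadj
    obtain ⟨-, x, y, hxy, rfl, rfl⟩ := hab
    exact ⟨x, ha, y, hb, hxy⟩

lemma SimpleGraph.IsMinorOf.of_le {W V : Type*} {H : SimpleGraph W} {G G' : SimpleGraph V}
    (h : H.IsMinorOf G') (hle : G' ≤ G) : H.IsMinorOf G := by
  obtain ⟨B, h1, h2, h3⟩ := h
  refine ⟨B, fun w => (h1 w).mono (comap_monotone _ hle), h2, fun w w' hadj => ?_⟩
  obtain ⟨a, ha, b, hb, hab⟩ := h3 hadj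
  exact ⟨a, ha, b, hb, hle hab⟩

lemma SimpleGraph.IsMinorOf.of_induce {W V : Type*} {H : SimpleGraph W} {G : SimpleGraph V}
    {S : Set V} (h : H.IsMinorOf (G.induce S)) : H.IsMinorOf G := by
  obtain ⟨B, h1, h2, h3⟩ := h
  refine ⟨fun w => Subtype.val '' B w, fun w => ?_, fun w w' hne => ?_, fun w w' hadj => ?_⟩
  · let φ : (G.induce S).induce (B w) →g G.induce (Subtype.val '' B w) :=
      { toFun := fun x => ⟨x.1.1, x.1, x.2, rfl⟩, map_rel' := fun h => by simpa using h }
    have hφ : Function.Surjective φ := by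
      rintro ⟨_, x, hx, rfl⟩
      exact ⟨⟨x, hx⟩, rfl⟩
    exact (h1 w).map φ hφ
  · exact (Set.disjoint_image_iff Subtype.val_injective).2 (h2 hne)
  · obtain ⟨a, ha, b, hb, hab⟩ := h3 hadj
    exact ⟨a, ⟨a, ha, rfl⟩, b, ⟨b, hb, rfl⟩, by simpa using hab⟩

/-- The map that merges `y` into `x` and fixes all other vertices; when `xy` is an edge of `G`, the
graph `G.map (mergeInto x y _)` is the contraction of `G` along that edge. -/
noncomputable def mergeInto {V : Type*} (x y : V) (hxy : x ≠ y) (v : V) : {v // v ≠ y} :=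
  open Classical in if h : v = y then ⟨x, hxy⟩ else ⟨v, h⟩

lemma mergeInto_connected {V : Type*} (G : SimpleGraph V) (x y : V) (hxy : G.Adj x y)
    (a : {v // v ≠ y}) : (G.induce (mergeInto x y hxy.ne ⁻¹' {a})).Connected := by
  classical
  refine star_connected G a _ ?_ ?_
  · simp [mergeInto, a.2]
  · intro b hb
    by_cases h : b = y
    · right
      simp only [Set.mem_preimage, mergeInto, h, dif_pos, Set.mem_singleton_iff] at hb
      rw [← hb, h]; exact hxy
    · left
      simp only [Set.mem_preimage, mergeInto, h, Set.mem_singleton_iff] at hb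
      rw [← hb]; simp

/-- Contracting the edge `xy` loses at most that edge and one edge for each common neighbour of its
ends: the edges outside the set `L` below have different images. -/
lemma ncard_edgeSet_le_contract {V : Type*} [Finite V] (G : SimpleGraph V) (x y : V)
    (hxy : G.Adj x y) :
    G.edgeSet.ncard ≤ (G.map (mergeInto x y hxy.ne)).edgeSet.ncard + 1 +
      (G.commonNeighbors x y).ncard := by
  classical
  set f := mergeInto x y hxy.ne with hf
  have hfy : f y = ⟨x, hxy.ne⟩ := by simp [hf, mergeInto]
  have hfn : ∀ v (h : v ≠ y), f v = ⟨v, h⟩ := fun v h => by simp [hf, mergeInto, h]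
  -- `f` identifies `x` with `y` and nothing else
  have hff : ∀ u v, f u = f v → u = v ∨ (u = y ∧ v = x) ∨ (u = x ∧ v = y) := by
    intro u v huv
    by_cases hu : u = y <;> by_cases hv : v = y
    · exact Or.inl (hu.trans hv.symm)
    · rw [hu, hfy, hfn v hv, Subtype.mk.injEq] at huv
      exact Or.inr (Or.inl ⟨hu, huv.symm⟩)
    · rw [hv, hfy, hfn u hu, Subtype.mk.injEq] at huv
      exact Or.inr (Or.inr ⟨huv, hv⟩)
    · rw [hfn u hu, hfn v hv, Subtype.mk.injEq] at huv
      exact Or.inl huv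
  set L : Set (Sym2 V) := insert s(x, y) ((fun z => s(y, z)) '' G.commonNeighbors x y) with hL
  have hLc : L.ncard ≤ (G.commonNeighbors x y).ncard + 1 :=
    (Set.ncard_insert_le _ _).trans (by gcongr; exact Set.ncard_image_le)
  have h1 : G.edgeSet.ncard ≤ (G.edgeSet \ L).ncard + L.ncard := by
    exact Set.ncard_le_ncard_sdiff_add_ncard _ _
  have h2 : (G.edgeSet \ L).ncard ≤ (G.map f).edgeSet.ncard := by
    refine Set.ncard_le_ncard_of_injOn (Sym2.map f) ?_ ?_
    · intro e he
      induction e using Sym2.ind with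
      | _ a b =>
        simp only [hL, Set.mem_sdiff, mem_edgeSet, Set.mem_insert_iff, not_or] at he
        obtain ⟨hab, hne, -⟩ := he
        rw [Sym2.map_mk, mem_edgeSet]
        refine ⟨fun h => ?_, a, b, hab, rfl, rfl⟩
        rcases hff a b h with rfl | ⟨rfl, rfl⟩ | ⟨rfl, rfl⟩
        · exact hab.ne rfl
        · exact hne Sym2.eq_swap
        · exact hne rfl
    · have hL' : ∀ a b, s(a, b) ∈ G.edgeSet \ L → a = y → b ≠ x ∧ b ≠ y ∧ ¬ G.Adj x b := by
        rintro a b he rfl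
        simp only [hL, Set.mem_sdiff, mem_edgeSet, Set.mem_insert_iff, not_or, Set.mem_image,
          mem_commonNeighbors] at he
        refine ⟨?_, he.1.ne', fun h => he.2.2 ⟨b, ⟨h, he.1⟩, rfl⟩⟩
        rintro rfl
        exact he.2.1 Sym2.eq_swap
      have hout : ∀ a b c d, s(a, b) ∈ G.edgeSet \ L → s(c, d) ∈ G.edgeSet \ L →
          f a = f c → f b = f d → a = c ∧ b = d := by
        intro a b c d hab hcd h1 h2
        have e1 := hL' a b hab
        have e2 := hL' b a (Sym2.eq_swap ▸ hab)
        have e3 := hL' c d hcd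
        have e4 := hL' d c (Sym2.eq_swap ▸ hcd)
        have a1 : G.Adj a b := hab.1
        have a2 : G.Adj c d := hcd.1
        rcases hff a c h1 with rfl | ⟨rfl, rfl⟩ | ⟨rfl, rfl⟩ <;>
          rcases hff b d h2 with rfl | ⟨hb, hd⟩ | ⟨hb, hd⟩
        · exact ⟨rfl, rfl⟩
        all_goals grind [G.adj_comm]
      intro e he e' he' hee
      induction e using Sym2.ind with
      | _ a b =>
      induction e' using Sym2.ind with
      | _ c d =>
        rw [Sym2.map_mk, Sym2.map_mk, Sym2.eq_iff] at hee
        rcases hee with ⟨h1, h2⟩ | ⟨h1, h2⟩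
        · obtain ⟨rfl, rfl⟩ := hout a b c d he he' h1 h2
          rfl
        · obtain ⟨rfl, rfl⟩ := hout a b d c he (Sym2.eq_swap ▸ he') h1 h2
          exact Sym2.eq_swap
  omega

lemma ncard_edgeSet_induce_le {W : Type*} [Finite W] (H : SimpleGraph W) (s : Set W) :
    (H.induce s).edgeSet.ncard ≤ H.edgeSet.ncard := by
  refine Set.ncard_le_ncard_of_injOn (Sym2.map Subtype.val) ?_
    (Sym2.map.injective Subtype.val_injective).injOn
  intro e he
  induction e using Sym2.ind with
  | _ a b => simpa using he

/-- Deleting an isolated vertex loses no edge. -/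
lemma ncard_edgeSet_le_induce_compl {V : Type*} [Finite V] (G : SimpleGraph V) (v : V)
    (hv : ∀ u, ¬ G.Adj v u) : G.edgeSet.ncard ≤ (G.induce {u | u ≠ v}).edgeSet.ncard := by
  rw [← Set.ncard_image_of_injective _ (Sym2.map.injective
    (Subtype.val_injective (p := fun u => u ∈ {u | u ≠ v})))]
  refine Set.ncard_le_ncard ?_
  intro e he
  induction e using Sym2.ind with
  | _ a b =>
    have ha : a ≠ v := by rintro rfl; exact hv _ he
    have hb : b ≠ v := by rintro rfl; exact hv _ he.symm
    exact ⟨s(⟨a, ha⟩, ⟨b, hb⟩), he, rfl⟩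

/-- Edgeless graphs embed anywhere there is room. -/
lemma StarMinor.of_edgeless {W V : Type*} [Fintype W] [Fintype V] [DecidableEq V]
    (H : SimpleGraph W) (G : SimpleGraph V) (U : Finset V) (hH : ∀ x y, ¬ H.Adj x y)
    (hc : U.card + Fintype.card W ≤ Fintype.card V) :
    StarMinor H G U (Fintype.card W) := by
  have h : Fintype.card W ≤ Fintype.card {v // v ∈ Uᶜ} := by
    rw [Fintype.card_coe, Finset.card_compl]; omega
  obtain ⟨φ⟩ := Function.Embedding.nonempty_of_card_le h
  refine ⟨fun w => φ w, fun w => {(φ w).1}, by simp, by simp, ?_, ?_, ?_, ?_⟩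
  · intro a b hab
    simpa [Subtype.ext_iff] using fun h => hab (φ.injective (Subtype.ext h))
  · intro w
    exact Finset.disjoint_singleton_left.2 (Finset.mem_compl.1 (φ w).2)
  · exact Finset.card_biUnion_le.trans (by simp)
  · intro a b hab; exact absurd hab (hH a b)

/-! ### Dense neighbourhoods in minimal graphs -/

/-- If `v` has degree less than `d + 1` while each edge at `v` lies in more than `d / 2 - 1`
triangles, then `H` is a minor of `G`: the closed neighbourhood `S` of `v` is dense enough to contain
a model of the part of `H` without isolated vertices, and the other vertices fit in the remainder. -/
lemma isMinorOf_of_dense_neighborhood {W V : Type*} [Fintype W] [Fintype V] (H : SimpleGraph W)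
    (G : SimpleGraph V) (d : ℝ) (hd : (Fintype.card W : ℝ) + 6 * H.edgeSet.ncard ≤ d)
    (hcard : d ≤ Fintype.card V) (v : V) (hv : ∃ u, G.Adj v u)
    (hdeg : ((G.neighborSet v).ncard : ℝ) < d + 1)
    (htri : ∀ u, G.Adj v u → d / 2 - 1 < (G.commonNeighbors v u).ncard) : H.IsMinorOf G := by
  classical
  have hd0 : 0 ≤ d := le_trans (by positivity) hd
  set δ := ⌊d / 2⌋₊ + 1 with hδ
  have hδ1 : d / 2 < δ := by rw [hδ]; push_cast; exact Nat.lt_floor_add_one _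
  have hδ2 : ∀ k : ℕ, d / 2 < k → δ ≤ k := fun k hk => by
    rw [hδ]; exact Nat.succ_le_of_lt ((Nat.floor_lt (by positivity)).2 hk)
  set S : Set V := {u | u = v ∨ G.Adj v u} with hS
  have hvS : v ∈ S := Or.inl rfl
  have : Nonempty S := ⟨⟨v, hvS⟩⟩
  have hcommon : ∀ u, G.Adj v u → δ ≤ (G.commonNeighbors v u).ncard + 1 := fun u hu =>
    hδ2 _ (by push_cast; linarith [htri u hu])
  have hK : ∀ (u : S) (T : Set V), (∀ x ∈ T, x ∈ S ∧ G.Adj u x) →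
      T.ncard ≤ (G.induce S).degree u := by
    intro u T hT
    rw [← card_neighborFinset_eq_degree, ← Set.ncard_coe_finset,
      ← Set.ncard_image_of_injective _ Subtype.val_injective]
    refine Set.ncard_le_ncard fun x hx => ⟨⟨x, (hT x hx).1⟩, ?_, rfl⟩
    simpa using (hT x hx).2
  have hKdeg : ∀ u : S, δ ≤ (G.induce S).degree u := by
    rintro ⟨u, rfl | hu⟩
    · obtain ⟨w, hw⟩ := hv
      refine (hcommon w hw).trans ?_
      rw [← Set.ncard_insert_of_notMem (a := w) (by simp [mem_commonNeighbors])]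
      refine hK _ _ ?_
      rintro x (rfl | hx)
      · exact ⟨Or.inr hw, hw⟩
      · exact ⟨Or.inr hx.1, hx.1⟩
    · refine (hcommon u hu).trans ?_
      rw [← Set.ncard_insert_of_notMem (a := v) (by simp [mem_commonNeighbors])]
      refine hK _ _ ?_
      rintro x (rfl | hx)
      · exact ⟨hvS, hu.symm⟩
      · exact ⟨Or.inr hx.1, hx.2⟩
  have hKcard : Fintype.card S ≤ 2 * δ + 1 := by
    have h1 : Fintype.card S ≤ (G.neighborSet v).ncard + 1 := by
      rw [← Nat.card_eq_fintype_card, Nat.card_coe_set_eq]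
      refine le_trans (Set.ncard_le_ncard (t := insert v (G.neighborSet v)) ?_)
        (Set.ncard_insert_le _ _)
      exact fun x hx => hx
    have h2 : ((G.neighborSet v).ncard : ℝ) < (2 * δ + 1 : ℕ) := by push_cast; linarith
    have h3 : (G.neighborSet v).ncard < 2 * δ + 1 := by exact_mod_cast h2
    omega
  -- `C` consists of the vertices of `H` that are not isolated
  set C : Finset W := Finset.univ.filter fun x => ∃ y, H.Adj x y with hC
  have memC : ∀ x, x ∈ C ↔ ∃ y, H.Adj x y := by simp [C]
  have hq := ncard_edgeSet_induce_le H {x | x ∈ C}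
  have hCW : Fintype.card {x | x ∈ C} + Fintype.card {x | x ∉ C} = Fintype.card W := by
    rw [← Fintype.card_sum]
    exact Fintype.card_congr (Equiv.sumCompl fun x => x ∈ C)
  have hsize : Fintype.card W + 6 * H.edgeSet.ncard ≤ 2 * δ := by
    have : ((Fintype.card W + 6 * H.edgeSet.ncard : ℕ) : ℝ) ≤ (2 * δ : ℕ) := by
      push_cast; linarith
    exact_mod_cast this
  have hsize' : Fintype.card W + 6 * H.edgeSet.ncard ≤ Fintype.card V := by
    have : ((Fintype.card W + 6 * H.edgeSet.ncard : ℕ) : ℝ) ≤ (Fintype.card V : ℕ) := by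
      push_cast; linarith
    exact_mod_cast this
  refine (StarMinor.combine (U := ∅) C (fun x hx y hy h => hy ((memC y).2 ⟨x, h.symm⟩))
    (StarMinor.of_induce (S := S) (starMinor_of_no_isolated (G.induce S) δ hKdeg hKcard _ _
      (H.induce {x | x ∈ C}) ∅ rfl ?_ ?_))
    (fun U' _ hU' => StarMinor.of_edgeless _ G U' ?_ ?_)).isMinorOf
  · rintro ⟨x, hx⟩
    obtain ⟨y, hy⟩ := (memC x).1 hx
    exact ⟨⟨y, (memC y).2 ⟨x, hy.symm⟩⟩, hy⟩
  · rw [Finset.card_empty]; omega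
  · rintro ⟨x, hx⟩ ⟨y, hy⟩ h
    exact hx ((memC x).2 ⟨y, h⟩)
  · rw [Finset.card_empty] at hU'; omega

/-- The theorem with the constant `6`, by induction on the number of vertices and edges of `G`: if a
deletion or contraction keeps the average degree at least `d`, the induction hypothesis applies, and
otherwise a vertex of minimum degree satisfies the hypotheses of
`isMinorOf_of_dense_neighborhood`. -/
lemma isMinorOf_of_average {W : Type*} [Fintype W] (H : SimpleGraph W) (d : ℝ)
    (hd : (Fintype.card W : ℝ) + 6 * H.edgeSet.ncard ≤ d) (k : ℕ) :
    ∀ (V : Type*) [Fintype V] [Nonempty V] (G : SimpleGraph V),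
      Fintype.card V + G.edgeSet.ncard = k → d * Fintype.card V ≤ 2 * G.edgeSet.ncard →
      H.IsMinorOf G := by
  classical
  have hd0 : 0 ≤ d := le_trans (by positivity) hd
  induction k using Nat.strong_induction_on with
  | _ k ih =>
  intro V _ _ G hk hG
  set n := Fintype.card V with hn
  set m := G.edgeSet.ncard with hm
  have hn1 : 1 ≤ n := Fintype.card_pos
  have hn1' : (1 : ℝ) ≤ n := by exact_mod_cast hn1
  rcases isEmpty_or_nonempty W with hW | hW
  · exact (StarMinor.of_isEmpty H G ∅ 0).isMinorOf
  have hd1 : 1 ≤ d := by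
    have : (1 : ℝ) ≤ Fintype.card W := by exact_mod_cast Fintype.card_pos (α := W)
    have : (0 : ℝ) ≤ 6 * H.edgeSet.ncard := by positivity
    linarith
  have hmpos : 0 < m := by
    have : (0 : ℝ) < m := by nlinarith
    exact_mod_cast this
  obtain ⟨e, he⟩ := (Set.ncard_pos (Set.toFinite _)).1 hmpos
  have hcompl : ∀ y : V, Fintype.card {v // v ≠ y} = n - 1 := fun y => by
    rw [Fintype.card_subtype_compl, Fintype.card_subtype_eq]
  have hcomplR : ∀ y : V, (Fintype.card {v // v ≠ y} : ℝ) = n - 1 := fun y => by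
    rw [hcompl, Nat.cast_sub hn1, Nat.cast_one]
  -- if `e` can be deleted, the induction hypothesis applies; otherwise `2 m < d n + 2`
  by_cases hdel : d * n ≤ 2 * ((m : ℝ) - 1)
  · have hc : (G.deleteEdges {e}).edgeSet.ncard + 1 = m := by
      rw [edgeSet_deleteEdges]; exact Set.ncard_sdiff_singleton_add_one he
    refine SimpleGraph.IsMinorOf.of_le
      (ih _ ?_ V (G.deleteEdges {e}) rfl ?_) (deleteEdges_le _)
    · omega
    · rw [← hc] at hdel; push_cast at hdel; linarith
  push Not at hdel
  -- if some edge `xy` lies in at most `d / 2 - 1` triangles, it can be contracted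
  by_cases hcon : ∀ x y, G.Adj x y → d / 2 - 1 < (G.commonNeighbors x y).ncard
  swap
  · push Not at hcon
    obtain ⟨x, y, hxy, htri⟩ := hcon
    have : Nonempty {v // v ≠ y} := ⟨⟨x, hxy.ne⟩⟩
    have hle := ncard_edgeSet_le_contract G x y hxy
    have hle' : (G.map (mergeInto x y hxy.ne)).edgeSet.ncard ≤ m := by
      refine le_trans (Set.ncard_le_ncard (t := Sym2.map (mergeInto x y hxy.ne) '' G.edgeSet) ?_)
        (Set.ncard_image_le)
      intro e he
      induction e using Sym2.ind with
      | _ a b =>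
        obtain ⟨-, u, w, huw, rfl, rfl⟩ := he
        exact ⟨s(u, w), huw, rfl⟩
    refine isMinorOf_of_map _ (mergeInto_connected G x y hxy) (ih _ ?_ _ _ rfl ?_)
    · have := hcompl y; omega
    · rw [hcomplR]
      have : (m : ℝ) ≤ (G.map (mergeInto x y hxy.ne)).edgeSet.ncard + 1 +
        (G.commonNeighbors x y).ncard := by exact_mod_cast hle
      linarith
  -- an isolated vertex can be deleted
  by_cases hiso : ∃ v, ∀ u, ¬ G.Adj v u
  · obtain ⟨v, hv⟩ := hiso
    have hle := ncard_edgeSet_le_induce_compl G v hv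
    have hle' := ncard_edgeSet_induce_le G {u | u ≠ v}
    have hSn : Fintype.card ({u | u ≠ v} : Set V) = n - 1 := by
      rw [← hcompl v]; exact Fintype.card_congr (Equiv.refl _)
    have : Nonempty ({u | u ≠ v} : Set V) := by
      induction e using Sym2.ind with
      | _ a b => exact ⟨⟨a, by rintro rfl; exact hv _ he⟩⟩
    refine SimpleGraph.IsMinorOf.of_induce
      (S := {u | u ≠ v}) (ih _ ?_ ({u | u ≠ v} : Set V) (G.induce {u | u ≠ v}) rfl ?_)
    · omega
    · rw [hSn, Nat.cast_sub hn1, Nat.cast_one]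
      have : (m : ℝ) ≤ (G.induce {u | u ≠ v}).edgeSet.ncard := by exact_mod_cast hle
      linarith
  push Not at hiso
  obtain ⟨v, hv⟩ := G.exists_minimal_degree_vertex
  have hm' : G.edgeFinset.card = m := by
    rw [← Set.ncard_coe_finset, coe_edgeFinset]
  have hsum : ∑ u, G.degree u = 2 * m := by rw [G.sum_degrees_eq_twice_card_edges, hm']
  have hlow : n * G.degree v ≤ 2 * m := by
    rw [← hsum, ← hv, hn, ← smul_eq_mul]
    exact Finset.card_nsmul_le_sum _ _ _ fun u _ => G.minDegree_le_degree u
  have hup : 2 * m ≤ n * (n - 1) := by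
    rw [← hsum, hn, ← smul_eq_mul]
    exact Finset.sum_le_card_nsmul _ _ _ fun u _ => Nat.le_sub_one_of_lt (G.degree_lt_card_verts u)
  have hdn : d ≤ n - 1 := by
    have h1 : (2 * m : ℝ) ≤ n * (n - 1) := by
      have : ((2 * m : ℕ) : ℝ) ≤ (n * (n - 1) : ℕ) := by exact_mod_cast hup
      push_cast [Nat.cast_sub hn1] at this
      exact this
    have h2 : (n : ℝ) * d ≤ n * (n - 1) := by linarith
    exact le_of_mul_le_mul_left h2 (by linarith)
  refine isMinorOf_of_dense_neighborhood H G d hd (by linarith) v (hiso v) ?_ (hcon v)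
  have hdv : (G.neighborSet v).ncard = G.degree v := by
    rw [← card_neighborFinset_eq_degree, ← Set.ncard_coe_finset, coe_neighborFinset]
  rw [hdv]
  have hlow' : (n : ℝ) * G.degree v ≤ 2 * m := by exact_mod_cast hlow
  -- if `v` had degree at least `d + 1`, then `2 m ≥ (d + 1) n`, so `n < 2` since `2 m < d n + 2`;
  -- but `n ≥ d + 1 ≥ 2`
  by_contra! hcontra
  nlinarith [mul_le_mul_of_nonneg_left hcontra (show (0 : ℝ) ≤ n by linarith)]

/-- For every graph `H` with `t` vertices and `q` edges, every graph `G` with average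
degree at least `t + 6.291·q` contains `H` as a minor. -/
theorem forcing_minor_linear {W V : Type*} [Fintype W] [Fintype V] [Nonempty V]
    (H : SimpleGraph W) (G : SimpleGraph V)
    (h : (Nat.card W : ℝ) + 6.291 * (H.edgeSet.ncard : ℝ) ≤ G.averageDegree) :
    H.IsMinorOf G := by
  have hpos : (0 : ℝ) < Fintype.card V := by exact_mod_cast Fintype.card_pos
  rw [averageDegree, Nat.card_eq_fintype_card, Nat.card_eq_fintype_card, le_div_iff₀ hpos] at h
  have hq : (0 : ℝ) ≤ H.edgeSet.ncard := by positivity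
  exact isMinorOf_of_average H _ (by linarith) _ V G rfl h
end

section
/- Every simple graph with average degree d ≥ 1 contains a minor with at most ⌈(d²+1)/(d+1)⌉ vertices and minimum degree at least ⌊d/2⌋, and also contains a minor with at most ⌈(d²+1)/(d+1)⌉ + 1 vertices and minimum degree at least ⌊d/2⌋ + 1. -/
/-!
Choose a minor `H` of `G` with `n ≥ 1` vertices and `m` edges satisfying `d * n ≤ 2 * m`, with `n`
minimal and then `m` minimal. Deleting an edge of `H` violates the inequality, so
`2 * m < d * n + 2`; deleting an isolated vertex preserves it, so by
minimality there is none. Contracting an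
edge `uv` with `t` common neighbours loses one vertex and `t + 1` edges, hence `t + 1 > d / 2`,
that is, `t ≥ ⌊d / 2⌋`.

Let `v` be a vertex of minimum degree of `H`. Every `w ∈ N(v)` has at least `⌊d / 2⌋` neighbours in
`N(v)`, so `H[N(v)]` has minimum degree at least `⌊d / 2⌋`, and `H[N(v) ∪ {v}]` has minimum degree at
least `⌊d / 2⌋ + 1`. Finally `deg v ≤ 2 * m / n < d + 2 / n ≤ d + 2 / (d + 1)`, using `n ≥ d + 1`
(which holds since `H` is simple), and integrality of `deg v` gives
`deg v ≤ ⌈(d² + 1) / (d + 1)⌉`.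
-/

open SimpleGraph

namespace SmallMinor

open Finset Classical

/-- `(S, H)` encodes a minor of `G` whose vertex set is `S ⊆ V`: all edges of `H` lie inside `S`,
and the vertices in `S` carry disjoint connected branch sets realising the edges of `H`. Keeping
`H` as a graph on all of `V` lets contractions be carried out without changing the vertex type;
the branch sets outside `S` are irrelevant. -/
def IsModel {V : Type} (G : SimpleGraph V) (S : Finset V) (H : SimpleGraph V) : Prop :=
  (∀ ⦃x y⦄, H.Adj x y → x ∈ S) ∧
  ∃ B : V → Set V, (∀ x ∈ S, (G.induce (B x)).Connected) ∧
    (∀ x ∈ S, ∀ y ∈ S, x ≠ y → Disjoint (B x) (B y)) ∧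
    ∀ ⦃x y⦄, H.Adj x y → ∃ a ∈ B x, ∃ b ∈ B y, G.Adj a b

variable {V : Type} {G H : SimpleGraph V} {S : Finset V}

lemma isModel_univ [Fintype V] (G : SimpleGraph V) : IsModel G univ G := by
  refine ⟨fun _ _ _ => mem_univ _, fun x => {x}, fun x _ => ?_, fun x _ y _ h => ?_, fun x y h => ?_⟩
  · simp
  · simpa using h
  · exact ⟨x, rfl, y, rfl, h⟩

lemma IsModel.mono (h : IsModel G S H) {H' : SimpleGraph V} (hle : H' ≤ H) : IsModel G S H' := by
  obtain ⟨h1, B, h2, h3, h4⟩ := h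
  exact ⟨fun x y hxy => h1 (hle hxy), B, h2, h3, fun x y hxy => h4 (hle hxy)⟩

lemma IsModel.erase_of_isolated (h : IsModel G S H) {v : V} (hv : ∀ w, ¬ H.Adj v w) :
    IsModel G (S.erase v) H := by
  obtain ⟨h1, B, h2, h3, h4⟩ := h
  refine ⟨fun x y hxy => ?_, B, fun x hx => h2 x (mem_of_mem_erase hx),
    fun x hx y hy => h3 x (mem_of_mem_erase hx) y (mem_of_mem_erase hy), h4⟩
  refine mem_erase.2 ⟨?_, h1 hxy⟩
  rintro rfl
  exact hv y hxy

lemma IsModel.induce_isMinorOf (h : IsModel G S H) (T : Finset V) (hT : T ⊆ S) :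
    (H.induce (T : Set V)).IsMinorOf G := by
  obtain ⟨-, B, h2, h3, h4⟩ := h
  refine ⟨fun w => B w, fun w => h2 _ (hT w.2), fun w₁ w₂ hne => ?_, fun w₁ w₂ hw => h4 hw⟩
  exact h3 _ (hT w₁.2) _ (hT w₂.2) (fun h => hne (Subtype.ext h))

/-- Contraction of an edge `uv` into `u`: the vertex `v` becomes isolated and `u` inherits its
neighbours. -/
def contract (H : SimpleGraph V) (u v : V) : SimpleGraph V where
  Adj x y := x ≠ y ∧ x ≠ v ∧ y ≠ v ∧
    (H.Adj x y ∨ (x = u ∧ H.Adj v y) ∨ (y = u ∧ H.Adj v x))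
  symm := ⟨by
    rintro x y ⟨h1, h2, h3, h4⟩
    refine ⟨h1.symm, h3, h2, ?_⟩
    rcases h4 with h | h | h
    · exact Or.inl h.symm
    · exact Or.inr (Or.inr h)
    · exact Or.inr (Or.inl h)⟩
  loopless := ⟨fun x h => h.1 rfl⟩

lemma IsModel.contract (h : IsModel G S H) {u v : V} (huv : H.Adj u v) :
    IsModel G (S.erase v) (contract H u v) := by
  obtain ⟨h1, B, h2, h3, h4⟩ := h
  have hu := h1 huv
  have hv := h1 huv.symm
  refine ⟨?_, fun x => if x = u then B u ∪ B v else B x, ?_, ?_, ?_⟩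
  · rintro x y ⟨-, hxv, -, h | ⟨rfl, -⟩ | ⟨-, h⟩⟩
    · exact mem_erase.2 ⟨hxv, h1 h⟩
    · exact mem_erase.2 ⟨hxv, hu⟩
    · exact mem_erase.2 ⟨hxv, h1 h.symm⟩
  · intro x hx
    rw [mem_erase] at hx
    beta_reduce
    by_cases hxu : x = u
    · rw [if_pos hxu]
      obtain ⟨a, ha, b, hb, hab⟩ := h4 huv
      exact connected_induce_union (h2 u hu).preconnected (h2 v hv).preconnected ha hb hab
    · rw [if_neg hxu]
      exact h2 x hx.2
  · intro x hx y hy hxy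
    rw [mem_erase] at hx hy
    dsimp only
    split_ifs with hxu hyu hyu
    · exact absurd (hxu.trans hyu.symm) hxy
    · exact Set.disjoint_union_left.2 ⟨h3 u hu y hy.2 (Ne.symm hyu), h3 v hv y hy.2 hy.1.symm⟩
    · exact Set.disjoint_union_right.2 ⟨h3 x hx.2 u hu hxu, h3 x hx.2 v hv hx.1⟩
    · exact h3 x hx.2 y hy.2 hxy
  · have key : ∀ z, B z ⊆ if z = u then B u ∪ B v else B z := by
      intro z
      split_ifs with hz
      · subst hz; exact Set.subset_union_left
      · exact subset_rfl
    rintro x y ⟨hne, hxv, hyv, h | ⟨rfl, h⟩ | ⟨rfl, h⟩⟩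
    · obtain ⟨a, ha, b, hb, hab⟩ := h4 h
      exact ⟨a, key x ha, b, key y hb, hab⟩
    · obtain ⟨a, ha, b, hb, hab⟩ := h4 h
      exact ⟨a, by simp [ha], b, key y hb, hab⟩
    · obtain ⟨a, ha, b, hb, hab⟩ := h4 h
      exact ⟨b, key x hb, a, by simp [ha], hab.symm⟩

/-- Contracting `uv` loses only the edge `uv` itself and one edge for every common neighbour. -/
lemma card_edgeFinset_le_contract [Fintype V] {u v : V} (huv : H.Adj u v) :
    #H.edgeFinset ≤ #(contract H u v).edgeFinset +
      #(H.neighborFinset u ∩ H.neighborFinset v) + 1 := by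
  set N := (H.neighborFinset v \ H.neighborFinset u).erase u with hN
  have hu : u ∈ H.neighborFinset v \ H.neighborFinset u := by simp [huv.symm]
  have hcardN : #N + 1 + #(H.neighborFinset u ∩ H.neighborFinset v) = H.degree v := by
    rw [hN, card_erase_add_one hu, inter_comm, card_sdiff_add_card_inter, card_neighborFinset_eq_degree]
  have hinj : #(N.image fun w => s(u, w)) = #N :=
    card_image_of_injective _ fun a b h => Sym2.congr_right.1 h
  have hdisj : Disjoint (H.edgeFinset \ H.incidenceFinset v) (N.image fun w => s(u, w)) := by
    rw [disjoint_right]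
    intro e he
    obtain ⟨w, hw, rfl⟩ := mem_image.1 he
    simp only [hN, mem_erase, mem_sdiff, mem_neighborFinset] at hw
    simp [hw.2.2]
  have hsub : (H.edgeFinset \ H.incidenceFinset v) ∪ (N.image fun w => s(u, w)) ⊆
      (contract H u v).edgeFinset := by
    intro e he
    rcases mem_union.1 he with he | he
    · induction e with
      | _ x y =>
        simp only [mem_sdiff, mem_edgeFinset, mem_edgeSet, mem_incidenceFinset,
          mk'_mem_incidenceSet_iff, not_and, not_or] at he
        obtain ⟨hxy, h⟩ := he
        rw [mem_edgeFinset, mem_edgeSet]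
        exact ⟨hxy.ne, Ne.symm (h hxy).1, Ne.symm (h hxy).2, Or.inl hxy⟩
    · obtain ⟨w, hw, rfl⟩ := mem_image.1 he
      simp only [hN, mem_erase, mem_sdiff, mem_neighborFinset] at hw
      rw [mem_edgeFinset, mem_edgeSet]
      exact ⟨hw.1.symm, huv.ne, hw.2.1.ne', Or.inr (Or.inl ⟨rfl, hw.2.1⟩)⟩
  have h1 := card_le_card hsub
  rw [card_union_of_disjoint hdisj, hinj] at h1
  have h2 : #H.edgeFinset ≤ #(H.edgeFinset \ H.incidenceFinset v) + H.degree v := by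
    rw [← card_incidenceFinset_eq_degree]
    have := le_card_sdiff (H.incidenceFinset v) H.edgeFinset
    omega
  omega

/-- The properties of a minor of density at least `d / 2` that is minimal first in its number of
vertices and then in its number of edges: it has few edges, no isolated vertices, and many
triangles on every edge. -/
lemma exists_minimal_model [Fintype V] [Nonempty V] (G : SimpleGraph V) (d : ℝ) (hd1 : 1 ≤ d)
    (hd : d * Fintype.card V ≤ 2 * #G.edgeFinset) :
    ∃ (S : Finset V) (H : SimpleGraph V), IsModel G S H ∧ S.Nonempty ∧
      d * #S ≤ 2 * #H.edgeFinset ∧ 2 * (#H.edgeFinset : ℝ) < d * #S + 2 ∧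
      (d + 1 ≤ #S) ∧
      (∑ x ∈ S, H.degree x = 2 * #H.edgeFinset) ∧
      (∀ v ∈ S, ∃ w, H.Adj v w) ∧
      ∀ u v, H.Adj u v → ⌊d / 2⌋₊ ≤ #(H.neighborFinset u ∩ H.neighborFinset v) := by
  let P : Finset V × SimpleGraph V → Prop := fun p =>
    IsModel G p.1 p.2 ∧ p.1.Nonempty ∧ d * #p.1 ≤ 2 * #p.2.edgeFinset
  -- The weight realises the lexicographic order on (vertices, edges).
  let C := Fintype.card (Sym2 V)
  let f : Finset V × SimpleGraph V → ℕ := fun p => #p.1 * (C + 1) + #p.2.edgeFinset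
  have hex : ∃ p, P p := ⟨(univ, G), isModel_univ G, univ_nonempty, by simpa using hd⟩
  obtain ⟨⟨S, H⟩, ⟨hM, hS, hdens⟩, hmin⟩ := WellFounded.has_min (measure f).wf {p | P p} hex
  dsimp only at hM hS hdens
  have hS0 : (0 : ℝ) < #S := by exact_mod_cast hS.card_pos
  -- Any admissible pair with fewer vertices contradicts minimality.
  have hless : ∀ v ∈ S, ∀ H', IsModel G (S.erase v) H' → (S.erase v).Nonempty →
      2 * (#H'.edgeFinset : ℝ) < d * (#S - 1) := by
    intro v hv H' hM' hne
    by_contra! hcon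
    have hcard := card_erase_add_one hv
    have hP : P (S.erase v, H') := by
      refine ⟨hM', hne, ?_⟩
      have : (#(S.erase v) : ℝ) = #S - 1 := by rw [← hcard]; push_cast; ring
      simpa only [this] using hcon
    refine hmin _ hP ?_
    change #(S.erase v) * (C + 1) + #H'.edgeFinset < #S * (C + 1) + #H.edgeFinset
    have : #H'.edgeFinset ≤ C := card_le_univ _
    rw [← hcard, add_mul]
    omega
  have hsum : ∑ x ∈ S, H.degree x = 2 * #H.edgeFinset := by
    rw [← sum_degrees_eq_twice_card_edges]
    refine sum_subset (subset_univ _) fun x _ hx => ?_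
    rw [← card_neighborFinset_eq_degree, card_eq_zero, eq_empty_iff_forall_notMem]
    intro y hy
    exact hx (hM.1 ((mem_neighborFinset _ _ _).1 hy))
  have hbig : d + 1 ≤ #S := by
    have h1 : ∀ x ∈ S, H.degree x ≤ #S - 1 := by
      intro x hx
      rw [← card_neighborFinset_eq_degree, ← card_erase_of_mem hx]
      refine card_le_card fun y hy => ?_
      rw [mem_neighborFinset] at hy
      exact mem_erase.2 ⟨hy.ne', hM.1 hy.symm⟩
    have h2 := sum_le_card_nsmul _ _ _ h1
    rw [hsum, smul_eq_mul] at h2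
    have h3 : (2 * #H.edgeFinset : ℝ) ≤ #S * (#S - 1) := by
      have : ((#S - 1 : ℕ) : ℝ) = #S - 1 := by
        rw [Nat.cast_sub hS.card_pos]; simp
      rw [← this]
      exact_mod_cast h2
    nlinarith
  have herase : ∀ v, (S.erase v).Nonempty := by
    intro v
    rw [← card_pos]
    have h2 : 2 ≤ #S := by
      have : (2 : ℝ) ≤ #S := by linarith
      exact_mod_cast this
    have := pred_card_le_card_erase (s := S) (a := v)
    omega
  refine ⟨S, H, hM, hS, hdens, ?_, hbig, hsum, ?_, ?_⟩
  · by_contra! hcon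
    have hpos : 0 < #H.edgeFinset := by
      have : (0 : ℝ) < #H.edgeFinset := by nlinarith
      exact_mod_cast this
    obtain ⟨e, he⟩ := card_pos.1 hpos
    obtain ⟨K, hK, hcard⟩ : ∃ K ≤ H, #K.edgeFinset + 1 = #H.edgeFinset := by
      refine ⟨H.deleteEdges {e}, deleteEdges_le _, ?_⟩
      rw [← card_erase_add_one he]
      congr 2
      ext x
      simp [and_comm]
    refine hmin (S, K) ⟨hM.mono hK, hS, ?_⟩ ?_
    · have : (#H.edgeFinset : ℝ) = #K.edgeFinset + 1 := by
        exact_mod_cast hcard.symm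
      dsimp only
      linarith
    · change #S * (C + 1) + #K.edgeFinset < #S * (C + 1) + #H.edgeFinset
      omega
  · intro v hv
    by_contra! hcon
    have := hless v hv H (hM.erase_of_isolated hcon) (herase v)
    linarith
  · intro u v huv
    have h1 := hless v (hM.1 huv.symm) _ (hM.contract huv) (herase v)
    have h2 : (#H.edgeFinset : ℝ) ≤ #(contract H u v).edgeFinset +
      #(H.neighborFinset u ∩ H.neighborFinset v) + 1 := by
      exact_mod_cast card_edgeFinset_le_contract huv
    have h3 : d / 2 < ((#(H.neighborFinset u ∩ H.neighborFinset v) + 1 : ℕ) : ℝ) := by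
      push_cast
      linarith
    exact Nat.lt_succ_iff.1 ((Nat.floor_lt (by linarith)).2 h3)

lemma card_le_ncard_induce_neighborSet (H : SimpleGraph V) (T A : Finset V) (w : (T : Set V))
    (hT : A ⊆ T) (hA : ∀ a ∈ A, H.Adj w a) :
    #A ≤ ((H.induce (T : Set V)).neighborSet w).ncard := by
  rw [← Set.ncard_image_of_injective _ Subtype.val_injective, ← Set.ncard_coe_finset]
  refine Set.ncard_le_ncard ?_ ?_
  · intro a ha
    exact ⟨⟨a, hT ha⟩, hA a ha, rfl⟩
  · exact (T.finite_toSet).subset (by rintro _ ⟨x, -, rfl⟩; exact x.2)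

/-- A vertex of at most average degree in a graph on `n ≥ d + 1` vertices with fewer than
`(d * n + 2) / 2` edges has degree at most `⌈(d² + 1) / (d + 1)⌉`. -/
lemma degree_le_ceil {d n D m : ℝ} {k : ℕ} (hk : D = k) (hd1 : 1 ≤ d) (hn : d + 1 ≤ n)
    (hD : n * D ≤ m) (hm : m < d * n + 2) : k ≤ ⌈(d ^ 2 + 1) / (d + 1)⌉₊ := by
  have h1 : (D - d) * (d + 1) < 2 := by
    rcases le_total D d with h | h
    · nlinarith
    · nlinarith
  have h2 : D - 1 < (d ^ 2 + 1) / (d + 1) := by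
    rw [lt_div_iff₀ (by linarith)]
    nlinarith
  have h3 : (k : ℝ) < ((⌈(d ^ 2 + 1) / (d + 1)⌉₊ + 1 : ℕ) : ℝ) := by
    have := Nat.le_ceil ((d ^ 2 + 1) / (d + 1))
    push_cast
    linarith
  exact Nat.lt_succ_iff.1 (by exact_mod_cast h3)

end SmallMinor

/-- Every graph with average degree `d ≥ 1` contains a minor with at most
`⌈(d²+1)/(d+1)⌉` vertices and minimum degree at least `⌊d/2⌋`, and also a minor with at
most `⌈(d²+1)/(d+1)⌉ + 1` vertices and minimum degree at least `⌊d/2⌋ + 1`. -/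
theorem small_minor_of_large_average_degree {V : Type} [Fintype V] [Nonempty V]
    (G : SimpleGraph V) (d : ℝ) (hd : d = G.averageDegree) (hd1 : 1 ≤ d) :
    (∃ (W : Type) (_ : Fintype W) (_ : Nonempty W) (H : SimpleGraph W),
      H.IsMinorOf G ∧ Nat.card W ≤ ⌈(d ^ 2 + 1) / (d + 1)⌉₊ ∧
      ∀ w : W, ⌊d / 2⌋₊ ≤ (H.neighborSet w).ncard) ∧
    (∃ (W : Type) (_ : Fintype W) (_ : Nonempty W) (H : SimpleGraph W),
      H.IsMinorOf G ∧ Nat.card W ≤ ⌈(d ^ 2 + 1) / (d + 1)⌉₊ + 1 ∧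
      ∀ w : W, ⌊d / 2⌋₊ + 1 ≤ (H.neighborSet w).ncard) := by
  classical
  have hdens : d * Fintype.card V ≤ 2 * G.edgeFinset.card := by
    have : (0 : ℝ) < Fintype.card V := by exact_mod_cast Fintype.card_pos
    rw [hd, SimpleGraph.averageDegree, Nat.card_eq_fintype_card, div_mul_cancel₀ _ this.ne',
      ← coe_edgeFinset, Set.ncard_coe_finset]
  obtain ⟨S, H, hM, hS, -, hm, hbig, hsum, hiso, htri⟩ :=
    SmallMinor.exists_minimal_model G d hd1 (by convert hdens)
  obtain ⟨v, hv, hvmin⟩ := S.exists_min_image (fun x => H.degree x) hS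
  have hdeg : H.degree v ≤ ⌈(d ^ 2 + 1) / (d + 1)⌉₊ := by
    refine SmallMinor.degree_le_ceil rfl hd1 hbig (m := 2 * H.edgeFinset.card) ?_ hm
    have := S.card_nsmul_le_sum _ _ hvmin
    rw [hsum, smul_eq_mul] at this
    exact_mod_cast this
  have hNS : H.neighborFinset v ⊆ S := fun y hy =>
    hM.1 ((mem_neighborFinset _ _ _).1 hy).symm
  obtain ⟨w₀, hw₀⟩ := hiso v hv
  refine ⟨⟨(H.neighborFinset v : Set V), inferInstance,
      ⟨⟨w₀, by simpa using hw₀⟩⟩, H.induce _, hM.induce_isMinorOf _ hNS, ?_, fun w => ?_⟩,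
    ⟨(insert v (H.neighborFinset v) : Finset V), inferInstance, ⟨⟨v, by simp⟩⟩,
      H.induce ((insert v (H.neighborFinset v) : Finset V) : Set V),
      hM.induce_isMinorOf _ (Finset.insert_subset hv hNS), ?_, ?_⟩⟩
  · rw [Nat.card_coe_set_eq, Set.ncard_coe_finset, card_neighborFinset_eq_degree]
    exact hdeg
  · have hw : H.Adj v w := by simpa using w.2
    exact (htri v w hw).trans (SmallMinor.card_le_ncard_induce_neighborSet H _ _ w
      Finset.inter_subset_left fun a ha => by simpa using (Finset.mem_inter.1 ha).2)
  · rw [Nat.card_eq_fintype_card, Fintype.card_coe]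
    refine (Finset.card_insert_le _ _).trans ?_
    rw [card_neighborFinset_eq_degree]
    exact Nat.succ_le_succ hdeg
  · rintro ⟨w, hwT⟩
    rcases Finset.mem_insert.1 hwT with rfl | hw
    · refine le_trans ?_ (SmallMinor.card_le_ncard_induce_neighborSet H _ (H.neighborFinset w) _
        (Finset.subset_insert _ _) fun a ha => by simpa using ha)
      -- The neighbour `w₀` is not a common neighbour of itself and `w`.
      have hlt : H.neighborFinset w ∩ H.neighborFinset w₀ ⊂ H.neighborFinset w := by
        refine (Finset.ssubset_iff_of_subset Finset.inter_subset_left).2 ⟨w₀, ?_, ?_⟩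
        · simpa using hw₀
        · simp
      exact (htri w w₀ hw₀).trans_lt (Finset.card_lt_card hlt)
    · have hvw : H.Adj v w := by simpa using hw
      have hnot : v ∉ H.neighborFinset v ∩ H.neighborFinset w := by simp
      have h := SmallMinor.card_le_ncard_induce_neighborSet H (insert v (H.neighborFinset v))
        (insert v (H.neighborFinset v ∩ H.neighborFinset w)) ⟨w, hwT⟩
        (Finset.insert_subset_insert _ Finset.inter_subset_left) (fun a ha => by
          rcases Finset.mem_insert.1 ha with rfl | ha
          · exact hvw.symm
          · simpa using (Finset.mem_inter.1 ha).2)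
      rw [Finset.card_insert_of_notMem hnot] at h
      exact (Nat.succ_le_succ (htri v w hvw)).trans h
end

section
/- Fix an integer k ≥ 1, and let X_k be the set of simple graphs G with |V(G)| ≥ k and |E(G)| ≥ k|V(G)| − (k+1 choose 2). Let G be a graph in X_k such that no proper minor of G lies in X_k. Then |E(G)| = k|V(G)| − (k+1 choose 2), and either G is isomorphic to the complete graph K_k, or for every vertex v of G the subgraph of G induced by the neighbourhood of v has minimum degree at least k. -/
/-!
Both conclusions come from comparing `G` with a minor having one edge or one vertex fewer.

Write `f n = k n - (k+1 choose 2)`. If `G` had more than `f |V|` edges, deleting any edge would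
give a proper minor in `X_k` (`isMinorOf_of_le`); such an edge exists because `f n ≥ 0` for `n ≥ k`.
So `|E| = f |V|`. If `|V| = k`, then `f k = (k choose 2)`, so `G` is complete. Otherwise
`|V| - 1 ≥ k`, and contracting an edge `vw` loses one vertex and exactly one edge plus one for each
common neighbour of `v` and `w` (`le_ncard_edgeSet_contract`). As the contraction is not in `X_k`
and `f n - f (n - 1) = k`, there are at least `k` common neighbours, and their number is the degree
of `w` in the graph induced by the neighbourhood of `v`.
-/

open SimpleGraph

/-- `G` belongs to Mader's class `X_k`:
`|V(G)| ≥ k` and `|E(G)| ≥ k|V(G)| − (k+1 choose 2)`. -/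
def MemX (k : ℕ) {V : Type} [Fintype V] (G : SimpleGraph V) : Prop :=
  k ≤ Nat.card V ∧
    (k : ℤ) * (Nat.card V : ℤ) - ((k + 1).choose 2 : ℤ) ≤ (G.edgeSet.ncard : ℤ)

/-- A spanning subgraph is a minor, with singletons as branch sets. -/
lemma isMinorOf_of_le {V : Type} {H G : SimpleGraph V} (h : H ≤ G) : H.IsMinorOf G := by
  refine ⟨fun v => {v}, fun v => ?_, fun a b hab => by simpa using hab, ?_⟩
  · simp
  · intro a b hab
    exact ⟨a, rfl, b, rfl, h hab⟩

open Classical in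
/-- The quotient map on vertices that identifies `w` with `v`. -/
noncomputable def contractMap {V : Type} {v w : V} (hvw : v ≠ w) (x : V) : {x : V // x ≠ w} :=
  if h : x = w then ⟨v, hvw⟩ else ⟨x, h⟩

lemma contractMap_val {V : Type} {v w : V} (hvw : v ≠ w) (x : V) :
    (x = w ∧ (contractMap hvw x : V) = v) ∨ (x ≠ w ∧ (contractMap hvw x : V) = x) := by
  unfold contractMap
  split_ifs with h <;> simp [h]

/-- The simple graph obtained from `G` by identifying `w` with `v`; loops and parallel edges are
discarded. When `v` and `w` are adjacent this is the contraction of the edge `vw`. -/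
def contract {V : Type} (G : SimpleGraph V) {v w : V} (hvw : v ≠ w) :
    SimpleGraph {x : V // x ≠ w} where
  Adj a b := a ≠ b ∧ ∃ x y, contractMap hvw x = a ∧ contractMap hvw y = b ∧ G.Adj x y
  symm := ⟨fun _ _ ⟨h, x, y, hx, hy, hxy⟩ => ⟨h.symm, y, x, hy, hx, hxy.symm⟩⟩
  loopless := ⟨fun _ h => h.1 rfl⟩

lemma contract_isMinorOf {V : Type} (G : SimpleGraph V) {v w : V} (h : G.Adj v w) :
    (contract G h.ne).IsMinorOf G := by
  refine ⟨fun a => {x | contractMap h.ne x = a}, ?_, ?_, ?_⟩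
  · rintro ⟨a, ha⟩
    by_cases hav : a = v
    · have : {x | contractMap h.ne x = ⟨a, ha⟩} = {v, w} := by
        ext x
        have := contractMap_val h.ne x
        simp only [Set.mem_ofPred_eq, Set.mem_insert_iff, Set.mem_singleton_iff, Subtype.ext_iff]
        grind
      beta_reduce
      rw [this]
      exact induce_pair_connected_of_adj h
    · have : {x | contractMap h.ne x = ⟨a, ha⟩} = {a} := by
        ext x
        have := contractMap_val h.ne x
        simp only [Set.mem_ofPred_eq, Set.mem_singleton_iff, Subtype.ext_iff]
        grind
      beta_reduce
      rw [this]
      simp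
  · intro a b hab
    rw [Set.disjoint_left]
    intro x hx hx'
    exact hab (hx.symm.trans hx')
  · rintro a b ⟨-, x, y, hx, hy, hxy⟩
    exact ⟨x, hx, y, hy, hxy⟩

/-- Contracting `vw` loses at most the edge `vw` and one edge per common neighbour of `v` and `w`:
the quotient map is injective on the edges other than `vw` and those joining `w` to a common
neighbour. -/
lemma le_ncard_edgeSet_contract {V : Type} [Finite V] (G : SimpleGraph V) {v w : V}
    (h : G.Adj v w) :
    G.edgeSet.ncard ≤ (contract G h.ne).edgeSet.ncard + ((G.commonNeighbors v w).ncard + 1) := by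
  classical
  set S : Set (Sym2 V) := insert s(v, w) ((fun x => s(w, x)) '' G.commonNeighbors v w) with hS
  have hScard : S.ncard ≤ (G.commonNeighbors v w).ncard + 1 :=
    (Set.ncard_insert_le _ _).trans (Nat.add_le_add_right (Set.ncard_image_le) 1)
  have hmem : ∀ x y, G.Adj x y → s(x, y) ∉ S →
      ¬ (x = w ∧ (y = v ∨ G.Adj v y)) ∧ ¬ (y = w ∧ (x = v ∨ G.Adj v x)) := by
    intro x y hxy hxS
    refine ⟨?_, ?_⟩
    · rintro ⟨rfl, rfl | hy⟩
      · exact hxS (Or.inl Sym2.eq_swap)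
      · exact hxS (Or.inr ⟨y, ⟨hy, hxy⟩, rfl⟩)
    · rintro ⟨rfl, rfl | hx⟩
      · exact hxS (Or.inl rfl)
      · exact hxS (Or.inr ⟨x, ⟨hx, hxy.symm⟩, Sym2.eq_swap⟩)
  have hle : (G.edgeSet \ S).ncard ≤ (contract G h.ne).edgeSet.ncard := by
    refine Set.ncard_le_ncard_of_injOn (Sym2.map (contractMap h.ne)) ?_ ?_ (Set.toFinite _)
    · intro e
      induction e using Sym2.ind with
      | _ x y =>
        rintro ⟨hxy, hxS⟩
        rw [mem_edgeSet] at hxy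
        refine ⟨fun heq => ?_, x, y, rfl, rfl, hxy⟩
        have := hmem x y hxy hxS
        have hx := contractMap_val h.ne x
        have hy := contractMap_val h.ne y
        have := hxy.ne
        have := congrArg Subtype.val heq
        grind
    · intro e he e' he'
      induction e using Sym2.ind with
      | _ x y =>
      induction e' using Sym2.ind with
      | _ x' y' =>
        obtain ⟨hxy, hxS⟩ := he
        obtain ⟨hxy', hxS'⟩ := he'
        rw [mem_edgeSet] at hxy hxy'
        have h1 := hmem x y hxy hxS
        have h2 := hmem x' y' hxy' hxS'
        have hx := contractMap_val h.ne x
        have hy := contractMap_val h.ne y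
        have hx' := contractMap_val h.ne x'
        have hy' := contractMap_val h.ne y'
        have s1 := hxy.symm
        have s2 := hxy'.symm
        have := h.ne
        simp only [Sym2.map_mk, Sym2.eq_iff, Subtype.ext_iff]
        grind
  have := Set.ncard_le_ncard_sdiff_add_ncard G.edgeSet S (Set.toFinite _)
  omega

lemma ncard_neighborSet_induce {V : Type} (G : SimpleGraph V) (v : V) (w : G.neighborSet v) :
    ((G.induce (G.neighborSet v)).neighborSet w).ncard = (G.commonNeighbors v w).ncard := by
  rw [← Set.ncard_image_of_injective _ Subtype.val_injective]
  congr 1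
  ext x
  simp [mem_commonNeighbors, and_comm]

lemma cast_choose_succ_two (k : ℕ) : 2 * ((k + 1).choose 2 : ℤ) = k * (k + 1) := by
  have h : (k + 1).choose 2 * 2 = (k + 1) * k := by
    rw [Nat.choose_two_right]
    exact Nat.div_mul_cancel (Nat.even_mul_pred_self (k + 1)).two_dvd
  have h' : ((k + 1).choose 2 : ℤ) * 2 = (k + 1) * k := by exact_mod_cast h
  linarith

/-- If `G ∈ X_k` but no proper minor of `G` lies in `X_k`, then
`|E(G)| = k|V(G)| − (k+1 choose 2)`, and either `G ≅ K_k` or the neighbourhood of each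
vertex of `G` induces a subgraph with minimum degree at least `k`. -/
theorem minor_minimal_in_X (k : ℕ) (hk : 1 ≤ k) {V : Type} [Fintype V]
    (G : SimpleGraph V) (hG : MemX k G)
    (hmin : ∀ (W : Type) [Fintype W] (H : SimpleGraph W),
      H.IsMinorOf G → ¬ Nonempty (H ≃g G) → ¬ MemX k H) :
    (G.edgeSet.ncard : ℤ) = (k : ℤ) * (Nat.card V : ℤ) - ((k + 1).choose 2 : ℤ) ∧
    (Nonempty (G ≃g (⊤ : SimpleGraph (Fin k))) ∨
      ∀ (v : V) (w : G.neighborSet v),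
        k ≤ ((G.induce (G.neighborSet v)).neighborSet w).ncard) := by
  classical
  obtain ⟨hn, hm⟩ := hG
  have hc := cast_choose_succ_two k
  have hn' : (k : ℤ) ≤ Nat.card V := by exact_mod_cast hn
  have heq : (G.edgeSet.ncard : ℤ) = (k : ℤ) * (Nat.card V : ℤ) - ((k + 1).choose 2 : ℤ) := by
    by_contra hne
    have hlt := lt_of_le_of_ne hm (Ne.symm hne)
    have hpos : 0 < G.edgeSet.ncard := by
      have : (0 : ℤ) < G.edgeSet.ncard := by
        have : (1 : ℤ) ≤ k := by exact_mod_cast hk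
        nlinarith
      exact_mod_cast this
    obtain ⟨e, he⟩ := (Set.ncard_pos (Set.toFinite _)).1 hpos
    have hcard : (G.deleteEdges {e}).edgeSet.ncard + 1 = G.edgeSet.ncard := by
      rw [edgeSet_deleteEdges]
      exact Set.ncard_sdiff_singleton_add_one he (Set.toFinite _)
    refine hmin V (G.deleteEdges {e}) (isMinorOf_of_le (deleteEdges_le _)) ?_ ⟨hn, by omega⟩
    rintro ⟨φ⟩
    have := Nat.card_congr φ.mapEdgeSet
    rw [Nat.card_coe_set_eq, Nat.card_coe_set_eq] at this
    omega
  refine ⟨heq, ?_⟩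
  rcases hn.eq_or_lt with hnk | hnk
  · left
    have htop : G = ⊤ := by
      have htop_card := card_edgeFinset_top_eq_card_choose_two (V := V)
      rw [← Nat.card_eq_fintype_card, ← hnk, ← Set.ncard_coe_finset, coe_edgeFinset] at htop_card
      have hpascal : (k + 1).choose 2 = k + k.choose 2 := by
        rw [Nat.choose_succ_succ, Nat.choose_one_right]
      have hpascal' : ((k + 1).choose 2 : ℤ) = k + k.choose 2 := by exact_mod_cast hpascal
      rw [← hnk] at heq
      refine edgeSet_injective (Set.eq_of_subset_of_ncard_le (edgeSet_mono le_top) ?_)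
      rw [htop_card]
      have : (k.choose 2 : ℤ) ≤ G.edgeSet.ncard := by linarith
      exact_mod_cast this
    subst htop
    exact ⟨Iso.completeGraph (Fintype.equivFinOfCardEq (by rw [← Nat.card_eq_fintype_card, hnk]))⟩
  · right
    intro v w
    have hvw : G.Adj v w := w.2
    rw [ncard_neighborSet_induce]
    have hW : Nat.card {x : V // x ≠ w} + 1 = Nat.card V := by
      have := Fintype.card_subtype_compl (fun x : V => x = w)
      simp only [Fintype.card_unique] at this
      rw [Nat.card_eq_fintype_card, Nat.card_eq_fintype_card] at *
      simp only [ne_eq]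
      omega
    have hle := le_ncard_edgeSet_contract G hvw
    by_contra hlt
    refine hmin _ (contract G hvw.ne) (contract_isMinorOf G hvw) ?_ ⟨by omega, ?_⟩
    · rintro ⟨φ⟩
      have := Nat.card_congr φ.toEquiv
      omega
    · rw [← hW] at heq
      push_cast at heq
      have : (k : ℤ) * (Nat.card {x : V // x ≠ w} + 1) = k * Nat.card {x : V // x ≠ w} + k := by
        ring
      omega
end
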